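/- Let P ⊂ ℝ^n be a smooth full-dimensional lattice polytope. Then Σ_F (-1)^{n - dim F} (dim F + 1)! Vol(F) = 0, the sum running over all nonempty faces F of P, if and only if P is unimodularly equivalent to a Cayley sum Cayley(R_0, …, R_t)_π of normally equivalent smooth lattice polytopes R_0, …, R_t with dim R_i < t. -/

import Mathlib

noncomputable section

open MeasureTheory Pointwise

/-- A point of `ℝ^n` is a lattice point if all its coordinates are integers. -/
def IsLatticePt {n : ℕ} (x : Fin n → ℝ) : Prop := ∀ i, ∃ z : ℤ, x i = (z : ℝ)

/-- A lattice polytope is the convex hull of a finite set of lattice points. -/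
def IsLatticePolytope {n : ℕ} (P : Set (Fin n → ℝ)) : Prop :=
  ∃ V : Finset (Fin n → ℝ), (∀ v ∈ V, IsLatticePt v) ∧
    P = convexHull ℝ (↑V : Set (Fin n → ℝ))

/-- A rational polytope is the convex hull of a finite set of rational points. -/
def IsRatPolytope {n : ℕ} (P : Set (Fin n → ℝ)) : Prop :=
  ∃ V : Finset (Fin n → ℝ), (∀ v ∈ V, ∀ i, ∃ q : ℚ, v i = (q : ℝ)) ∧
    P = convexHull ℝ (↑V : Set (Fin n → ℝ))

/-- The vertices `0, e_1, …, e_t` of the standard unimodular simplex `Δ_t ⊆ ℝ^t`. -/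
def stdSimplexVert (t : ℕ) (k : Fin (t + 1)) : Fin t → ℝ :=
  fun j => if (k : ℕ) = (j : ℕ) + 1 then 1 else 0

/-- The standard unimodular simplex `Δ_t = conv(0, e_1, …, e_t) ⊆ ℝ^t`. -/
def unimodSimplex (t : ℕ) : Set (Fin t → ℝ) := convexHull ℝ (Set.range (stdSimplexVert t))

/-- The interior of the dilate `s • P` contains a lattice point. -/
def HasInteriorLatticePt {n : ℕ} (P : Set (Fin n → ℝ)) (s : ℕ) : Prop :=
  ∃ x ∈ interior ((s : ℝ) • P), IsLatticePt x

/-- The codegree `cd(P)`: the least positive integer `t` such that the interior of `t • P`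
contains a lattice point. -/
def codeg {n : ℕ} (P : Set (Fin n → ℝ)) : ℕ :=
  sInf {t : ℕ | 0 < t ∧ HasInteriorLatticePt P t}

/-- Pairing of an integer vector with a real vector. -/
def iprod {n : ℕ} (a : Fin n → ℤ) (x : Fin n → ℝ) : ℝ := ∑ i, (a i : ℝ) * x i

/-- An integer vector is primitive if it is nonzero and its coordinates have no common
non-unit divisor. -/
def IsPrimitive {n : ℕ} (a : Fin n → ℤ) : Prop :=
  a ≠ 0 ∧ ∀ d : ℤ, (∀ i, d ∣ a i) → IsUnit d

/-- `(a, b)` is a facet inequality of `P ⊆ ℝ^n`: `a` is a primitive integer inner normal,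
`b = min_{x ∈ P} ⟨a, x⟩`, and the corresponding face has dimension `n - 1`. -/
def IsFacetIneq {n : ℕ} (P : Set (Fin n → ℝ)) (a : Fin n → ℤ) (b : ℝ) : Prop :=
  IsPrimitive a ∧ (∀ x ∈ P, b ≤ iprod a x) ∧
  {x ∈ P | iprod a x = b}.Nonempty ∧
  Module.finrank ℝ ↥(vectorSpan ℝ {x ∈ P | iprod a x = b}) = n - 1

/-- The adjoint polytope `P^(s) = {x : ⟨a_F, x⟩ ≥ b_F + s for all facets F}`. -/
def adjointPoly {n : ℕ} (P : Set (Fin n → ℝ)) (s : ℝ) : Set (Fin n → ℝ) :=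
  {x | ∀ a b, IsFacetIneq P a b → b + s ≤ iprod a x}

/-- The set `{s > 0 : P^(s) ≠ ∅}`; the ℚ-codegree is `μ(P) = (sSup (muSet P))⁻¹`. -/
def muSet {n : ℕ} (P : Set (Fin n → ℝ)) : Set ℝ :=
  {s : ℝ | 0 < s ∧ (adjointPoly P s).Nonempty}

/-- `F` is a (nonempty, exposed) face of the polytope `P`; with `u = 0` this includes
`P` itself. -/
def IsFace {n : ℕ} (P F : Set (Fin n → ℝ)) : Prop :=
  F.Nonempty ∧ ∃ (u : (Fin n → ℝ) →ₗ[ℝ] ℝ) (c : ℝ),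
    (∀ x ∈ P, c ≤ u x) ∧ F = {x ∈ P | u x = c}

/-- The dimension of a face (or polytope): the rank of its direction vector space. -/
def fdim {n : ℕ} (F : Set (Fin n → ℝ)) : ℕ := Module.finrank ℝ ↥(vectorSpan ℝ F)

/-- `vol` is the relative lattice volume of `F`: the Lebesgue volume of the image of `F`
under an affine isomorphism of `aff F` with `ℝ^{dim F}` carrying `(aff F) ∩ ℤ^n` onto
`ℤ^{dim F}`. -/
def HasRelVol {n : ℕ} (F : Set (Fin n → ℝ)) (vol : ℝ) : Prop :=
  ∃ T : (Fin n → ℝ) →ᵃ[ℝ] (Fin (fdim F) → ℝ),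
    Set.BijOn T (affineSpan ℝ F : Set (Fin n → ℝ)) Set.univ ∧
    T '' ((affineSpan ℝ F : Set (Fin n → ℝ)) ∩ {x | IsLatticePt x}) = {y | IsLatticePt y} ∧
    vol = (volume (T '' F)).toReal

/-- The alternating face sum `Σ_F (-1)^{n - dim F} (dim F + 1)! Vol(F)`. -/
def faceSum {n : ℕ} (𝓕 : Finset (Set (Fin n → ℝ))) (volf : Set (Fin n → ℝ) → ℝ) : ℝ :=
  ∑ F ∈ 𝓕, (-1 : ℝ) ^ (n - fdim F) * (Nat.factorial (fdim F + 1) : ℝ) * volf F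

/-- The alternating sum over all nonempty faces of `P` of
`(-1)^{n - dim F} (dim F + 1)! Vol(F)` vanishes. -/
def FaceSumZero {n : ℕ} (P : Set (Fin n → ℝ)) : Prop :=
  ∃ (𝓕 : Finset (Set (Fin n → ℝ))) (volf : Set (Fin n → ℝ) → ℝ),
    (∀ F, F ∈ 𝓕 ↔ IsFace P F) ∧ (∀ F ∈ 𝓕, HasRelVol F (volf F)) ∧
    faceSum 𝓕 volf = 0

/-- A polytope `R ⊆ ℝ^n` (of dimension `d = fdim R`) is smooth: at each vertex there are
exactly `d` edges, whose primitive integer direction vectors form a ℤ-basis of the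
lattice `(vectorSpan R) ∩ ℤ^n`. -/
def IsSmoothPoly {n : ℕ} (R : Set (Fin n → ℝ)) : Prop :=
  ∀ v ∈ Set.extremePoints ℝ R,
    ∃ (w : Fin (fdim R) → (Fin n → ℤ)) (c : Fin (fdim R) → ℝ),
      (∀ i, 0 < c i) ∧ (∀ i, IsPrimitive (w i)) ∧
      LinearIndependent ℝ (fun i => ((fun j => ((w i j : ℝ))) : Fin n → ℝ)) ∧
      (∀ i, ((fun j => ((w i j : ℝ))) : Fin n → ℝ) ∈ vectorSpan ℝ R) ∧
      (∀ z : Fin n → ℤ, ((fun j => (z j : ℝ)) : Fin n → ℝ) ∈ vectorSpan ℝ R →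
        ∃ m : Fin (fdim R) → ℤ,
          ((fun j => (z j : ℝ)) : Fin n → ℝ) =
            ∑ i, (m i : ℝ) • ((fun j => ((w i j : ℝ))) : Fin n → ℝ)) ∧
      (∀ F : Set (Fin n → ℝ), (IsFace R F ∧ v ∈ F ∧ fdim F = 1) ↔
        ∃ i, F = segment ℝ v (v + c i • ((fun j => ((w i j : ℝ))) : Fin n → ℝ)))

/-- The real-linear map `ℝ^n → ℝ^t` induced by an integer matrix. -/
def matMap {t n : ℕ} (A : Matrix (Fin t) (Fin n) ℤ) : (Fin n → ℝ) → (Fin t → ℝ) :=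
  fun x k => ∑ j, (A k j : ℝ) * x j

/-- The piece `R_k = P ∩ π_ℝ^{-1}(v_k)` of a Cayley sum over the `k`-th vertex of `Δ_t`. -/
def cayleyPiece {t n : ℕ} (A : Matrix (Fin t) (Fin n) ℤ) (P : Set (Fin n → ℝ))
    (k : Fin (t + 1)) : Set (Fin n → ℝ) :=
  {x ∈ P | matMap A x = stdSimplexVert t k}

/-- Two polytopes are normally equivalent (have the same normal fan): for all linear
functionals `u, v`, the minimizing face of `u` equals that of `v` on `R` precisely when the
same holds on `S`. -/
def NormEquiv {n : ℕ} (R S : Set (Fin n → ℝ)) : Prop :=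
  ∀ u v : (Fin n → ℝ) →ₗ[ℝ] ℝ,
    ({x ∈ R | ∀ y ∈ R, u x ≤ u y} = {x ∈ R | ∀ y ∈ R, v x ≤ v y}) ↔
    ({x ∈ S | ∀ y ∈ S, u x ≤ u y} = {x ∈ S | ∀ y ∈ S, v x ≤ v y})

/-- `Q` is the Cayley sum, via the surjective lattice projection `A : ℤ^n → ℤ^t`, of the
normally equivalent polytopes `R_k = Q ∩ π_ℝ^{-1}(v_k)`: `π_ℝ` maps `Q` onto `Δ_t`. -/
def IsCayleyWith {n t : ℕ} (Q : Set (Fin n → ℝ)) (A : Matrix (Fin t) (Fin n) ℤ) : Prop :=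
  (∀ y : Fin t → ℤ, ∃ x : Fin n → ℤ, A.mulVec x = y) ∧
  matMap A '' Q = unimodSimplex t ∧
  ∀ k l : Fin (t + 1), NormEquiv (cayleyPiece A Q k) (cayleyPiece A Q l)

/-- The unimodular affine map `x ↦ Ux + w`. -/
def unimodMap {n : ℕ} (U : Matrix (Fin n) (Fin n) ℤ) (w : Fin n → ℤ) :
    (Fin n → ℝ) → (Fin n → ℝ) :=
  fun x i => (∑ j, (U i j : ℝ) * x j) + (w i : ℝ)

/-- The set `{s > 0 : P^(s) has the same normal fan as P}`; the nef value is
`τ(P) = (sSup (tauSet P))⁻¹`. -/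
def tauSet {n : ℕ} (P : Set (Fin n → ℝ)) : Set ℝ :=
  {s : ℝ | 0 < s ∧ NormEquiv (adjointPoly P s) P}

/-!
Let `X` be the smooth toric variety of the normal fan of `P`. The normalized volumes of the faces
are intersection numbers on the strata of `X`, computed by Atiyah–Bott localization at the
vertices. Call the alternating sum of `(dim F + 1)! Vol(F)` over the faces `F` of a face `G` the
dual degree of `G`. Given a vertex `v` of `G`, let its vertex degree be the mixed degree of the
polytopes obtained from `G` by moving one facet through `v` inwards by one lattice unit. By
smoothness these polytopes are nef, so the vertex degree is nonnegative, and Möbius inversion gives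
`dualDegree G = vertexDegree v G + Σ_S (Σ_{k ∈ S} height k v - 1) * dualDegree (G ∩ S)`,
where `S` runs over the nonempty sets of facets not through `v`. As all coefficients are
nonnegative, so are the dual degrees, and that of `P` vanishes only if its vertex degrees do.

Say that two facets through `v` are in conflict if the sum of the edge vectors leaving them at `v`
leads out of `P`; this relation is symmetric and transitive. If no conflict class contains more than
half of the facets through `v`, Hall's theorem yields a permutation of these facets that pairs none
with one in conflict with it, and this makes the vertex degree positive. Otherwise the edges leaving
the facets of the big class have length one and end in a common further facet, and if the vertex
degree vanishes, the lattice distances to the class and to this facet sum to one. This gives a set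
`C` of facets with `2 * #C > n + 2` whose lattice distances are the barycentric coordinates of a map
onto a simplex; conversely, the recursion shows that such a `C` makes the dual degree of `P` vanish.
Finally, such a `C` amounts to a Cayley structure over `Δ_t` with `#C = t + 1`, whose fibres have
dimension `n - t < t`.
-/

section Presentation

open Finset

/-- The combinatorial and lattice data of a smooth `n`-dimensional polytope, with facets indexed
by `ι` and vertices by `ω`: `height k` is the lattice distance to the facet `k`, `facetsAt w` is the
set of facets through the vertex `w`, and `edge w k` is the primitive vector of the edge leaving `w`
that is contained in all facets of `facetsAt w` but `k`; this edge ends at `neighbor w k` and has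
lattice length `edgeLength w k`. The values of `edge`, `neighbor` and `edgeLength` at `(w, k)` are
meaningful only for `k ∈ facetsAt w`. -/
structure SmoothPresentation (n : ℕ) (ι ω E : Type*) [Fintype ι] [DecidableEq ι] [Fintype ω]
    [AddCommGroup E] [Module ℝ E] where
  facetsAt : ω → Finset ι
  height : ι → E →ᵃ[ℝ] ℝ
  vertex : ω → E
  edge : ω → ι → E
  neighbor : ω → ι → ω
  edgeLength : ω → ι → ℝ
  nonempty : Nonempty ω
  vertex_injective : Function.Injective vertex
  card_facetsAt : ∀ w, #(facetsAt w) = n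
  mem_facetsAt_iff : ∀ w k, k ∈ facetsAt w ↔ height k (vertex w) = 0
  linear_height_edge : ∀ w k l, k ∈ facetsAt w → l ∈ facetsAt w →
    (height l).linear (edge w k) = if l = k then 1 else 0
  sum_linear_height_smul_edge : ∀ w p, ∑ k ∈ facetsAt w, (height k).linear p • edge w k = p
  exists_int_height_vertex : ∀ w k, ∃ z : ℤ, height k (vertex w) = z
  exists_int_linear_height_edge : ∀ w k l, k ∈ facetsAt w →
    ∃ z : ℤ, (height l).linear (edge w k) = z
  height_vertex_nonneg : ∀ w k, 0 ≤ height k (vertex w)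
  one_le_edgeLength : ∀ w k, k ∈ facetsAt w → 1 ≤ edgeLength w k
  vertex_neighbor : ∀ w k, k ∈ facetsAt w →
    vertex (neighbor w k) = vertex w + edgeLength w k • edge w k
  eq_or_eq_neighbor : ∀ w k, k ∈ facetsAt w →
    ∀ x, (facetsAt w).erase k ⊆ facetsAt x → x = w ∨ x = neighbor w k
  edge_neighbor : ∀ w k, k ∈ facetsAt w →
    ∀ l ∈ facetsAt (neighbor w k), l ∉ facetsAt w → edge (neighbor w k) l = -edge w k

namespace SmoothPresentation

variable {n : ℕ} {ι ω E : Type*} [Fintype ι] [DecidableEq ι] [Fintype ω]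
  [AddCommGroup E] [Module ℝ E] (M : SmoothPresentation n ι ω E)

/-- The linear part of the lattice distance to the facet `k`, that is, its primitive inner
normal. -/
def slope (k : ι) : E →ₗ[ℝ] ℝ := (M.height k).linear

theorem height_add (k : ι) (p v : E) : M.height k (p + v) = M.height k p + M.slope k v := by
  rw [add_comm p v, ← vadd_eq_add, (M.height k).map_vadd, vadd_eq_add, add_comm, slope]

theorem slope_sub (k : ι) (p q : E) : M.slope k (p - q) = M.height k p - M.height k q := by
  rw [eq_sub_iff_add_eq', ← M.height_add, add_sub_cancel]

section Vertices

variable {M} {w : ω} {k l : ι}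

theorem slope_edge (hk : k ∈ M.facetsAt w) (hl : l ∈ M.facetsAt w) :
    M.slope l (M.edge w k) = if l = k then 1 else 0 :=
  M.linear_height_edge w k l hk hl

theorem slope_edge_self (hk : k ∈ M.facetsAt w) : M.slope k (M.edge w k) = 1 := by
  rw [slope_edge hk hk, if_pos rfl]

theorem slope_edge_of_ne (hk : k ∈ M.facetsAt w) (hl : l ∈ M.facetsAt w) (h : l ≠ k) :
    M.slope l (M.edge w k) = 0 := by
  rw [slope_edge hk hl, if_neg h]

variable (M) in
theorem sum_slope_smul_edge (w : ω) (p : E) :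
    ∑ k ∈ M.facetsAt w, M.slope k p • M.edge w k = p :=
  M.sum_linear_height_smul_edge w p

theorem slope_sum_smul_edge (hl : l ∈ M.facetsAt w) (a : ι → ℝ) :
    M.slope l (∑ k ∈ M.facetsAt w, a k • M.edge w k) = a l := by
  rw [map_sum, sum_eq_single_of_mem l hl, map_smul, slope_edge_self hl, smul_eq_mul, mul_one]
  intro k hk hkl
  rw [map_smul, slope_edge_of_ne hk hl hkl.symm, smul_zero]

theorem height_vertex (hk : k ∈ M.facetsAt w) : M.height k (M.vertex w) = 0 :=
  (M.mem_facetsAt_iff w k).1 hk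

theorem height_vertex_add (hk : k ∈ M.facetsAt w) (v : E) :
    M.height k (M.vertex w + v) = M.slope k v := by
  rw [M.height_add, height_vertex hk, zero_add]

variable (M) in
theorem vertex_add_sum_height_smul_edge (w : ω) (p : E) :
    M.vertex w + ∑ k ∈ M.facetsAt w, M.height k p • M.edge w k = p := by
  rw [← eq_sub_iff_add_eq', ← M.sum_slope_smul_edge w (p - M.vertex w)]
  refine sum_congr rfl fun k hk => ?_
  rw [M.slope_sub, height_vertex hk, sub_zero]

theorem one_le_height_vertex (hk : k ∉ M.facetsAt w) : 1 ≤ M.height k (M.vertex w) := by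
  obtain ⟨z, hz⟩ := M.exists_int_height_vertex w k
  have hpos := (M.height_vertex_nonneg w k).lt_of_ne' fun h => hk ((M.mem_facetsAt_iff w k).2 h)
  rw [hz] at hpos ⊢
  exact_mod_cast hpos

theorem edge_ne_zero (hk : k ∈ M.facetsAt w) : M.edge w k ≠ 0 := by
  intro h
  simpa [h] using slope_edge_self hk

theorem eq_of_facetsAt_subset {x : ω} (h : M.facetsAt w ⊆ M.facetsAt x) : w = x := by
  apply M.vertex_injective
  rw [← M.vertex_add_sum_height_smul_edge w (M.vertex x), left_eq_add]
  exact sum_eq_zero fun k hk => by rw [height_vertex (h hk), zero_smul]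

theorem card_facetsAt_sdiff {I : Finset ι} (hI : I ⊆ M.facetsAt w) :
    #(M.facetsAt w \ I) = n - #I := by
  rw [card_sdiff_of_subset hI, M.card_facetsAt]

theorem card_le_of_subset_facetsAt {I : Finset ι} (hI : I ⊆ M.facetsAt w) : #I ≤ n :=
  (card_le_card hI).trans_eq (M.card_facetsAt w)

end Vertices

section Neighbors

variable {M} {w : ω} {k l : ι}

theorem erase_subset_facetsAt_neighbor (hk : k ∈ M.facetsAt w) :
    (M.facetsAt w).erase k ⊆ M.facetsAt (M.neighbor w k) := by
  intro l hl
  obtain ⟨hlk, hl⟩ := mem_erase.1 hl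
  rw [M.mem_facetsAt_iff, M.vertex_neighbor w k hk, height_vertex_add hl, map_smul,
    slope_edge_of_ne hk hl hlk, smul_zero]

theorem height_vertex_neighbor (hk : k ∈ M.facetsAt w) :
    M.height k (M.vertex (M.neighbor w k)) = M.edgeLength w k := by
  rw [M.vertex_neighbor w k hk, height_vertex_add hk, map_smul, slope_edge_self hk, smul_eq_mul,
    mul_one]

theorem notMem_facetsAt_neighbor (hk : k ∈ M.facetsAt w) :
    k ∉ M.facetsAt (M.neighbor w k) := by
  rw [M.mem_facetsAt_iff, height_vertex_neighbor hk]
  exact (one_pos.trans_le (M.one_le_edgeLength w k hk)).ne'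

theorem exists_int_edgeLength (hk : k ∈ M.facetsAt w) : ∃ z : ℤ, M.edgeLength w k = z := by
  rw [← height_vertex_neighbor hk]
  exact M.exists_int_height_vertex _ _

theorem exists_facetsAt_neighbor_eq_insert (hk : k ∈ M.facetsAt w) :
    ∃ g ∉ M.facetsAt w,
      M.facetsAt (M.neighbor w k) = insert g ((M.facetsAt w).erase k) := by
  have hsub := erase_subset_facetsAt_neighbor hk
  have hcard : #(M.facetsAt (M.neighbor w k) \ (M.facetsAt w).erase k) = 1 := by
    have hpos := card_pos.2 ⟨k, hk⟩
    rw [card_facetsAt_sdiff hsub, card_erase_of_mem hk]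
    rw [M.card_facetsAt] at hpos ⊢
    lia
  obtain ⟨g, hg⟩ := card_eq_one.1 hcard
  obtain ⟨hgn, hgw⟩ := mem_sdiff.1 (hg ▸ mem_singleton_self g)
  refine ⟨g, fun h => hgw (mem_erase.2 ⟨?_, h⟩), ?_⟩
  · rintro rfl
    exact notMem_facetsAt_neighbor hk hgn
  · rw [insert_eq, ← hg, sdiff_union_of_subset hsub]

open Classical in
variable (M) in
/-- The facet containing the far end of the edge `k` at the vertex `w` but not `w`; its value is
meaningful only for `k ∈ facetsAt w`. -/
def entering (w : ω) (k : ι) : ι :=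
  if hk : k ∈ M.facetsAt w then (exists_facetsAt_neighbor_eq_insert hk).choose else k

theorem entering_spec (hk : k ∈ M.facetsAt w) : M.entering w k ∉ M.facetsAt w ∧
    M.facetsAt (M.neighbor w k) = insert (M.entering w k) ((M.facetsAt w).erase k) := by
  rw [entering, dif_pos hk]
  exact (exists_facetsAt_neighbor_eq_insert hk).choose_spec

theorem entering_notMem_facetsAt (hk : k ∈ M.facetsAt w) : M.entering w k ∉ M.facetsAt w :=
  (entering_spec hk).1

theorem facetsAt_neighbor (hk : k ∈ M.facetsAt w) :
    M.facetsAt (M.neighbor w k) = insert (M.entering w k) ((M.facetsAt w).erase k) :=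
  (entering_spec hk).2

theorem entering_mem_facetsAt_neighbor (hk : k ∈ M.facetsAt w) :
    M.entering w k ∈ M.facetsAt (M.neighbor w k) := by
  rw [facetsAt_neighbor hk]
  exact mem_insert_self _ _

theorem edge_neighbor_entering (hk : k ∈ M.facetsAt w) :
    M.edge (M.neighbor w k) (M.entering w k) = -M.edge w k :=
  M.edge_neighbor w k hk _ (entering_mem_facetsAt_neighbor hk) (entering_notMem_facetsAt hk)

theorem slope_entering_edge (hk : k ∈ M.facetsAt w) :
    M.slope (M.entering w k) (M.edge w k) = -1 := by
  have h := slope_edge_self (entering_mem_facetsAt_neighbor hk)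
  rw [edge_neighbor_entering hk, map_neg] at h
  linarith

theorem height_entering_vertex (hk : k ∈ M.facetsAt w) :
    M.height (M.entering w k) (M.vertex w) = M.edgeLength w k := by
  have h := height_vertex (entering_mem_facetsAt_neighbor hk)
  rw [M.vertex_neighbor w k hk, M.height_add, map_smul, slope_entering_edge hk] at h
  simpa [add_neg_eq_zero] using h

theorem edge_neighbor_of_ne (hk : k ∈ M.facetsAt w) (hl : l ∈ M.facetsAt w) (hlk : l ≠ k) :
    M.edge (M.neighbor w k) l =
      M.edge w l + M.slope (M.entering w k) (M.edge w l) • M.edge w k := by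
  have hsub := erase_subset_facetsAt_neighbor hk
  have hlw := hsub (mem_erase.2 ⟨hlk, hl⟩)
  have hexpand : M.slope k (M.edge (M.neighbor w k) l) • M.edge w k + M.edge w l =
      M.edge (M.neighbor w k) l := by
    conv_rhs => rw [← M.sum_slope_smul_edge w (M.edge (M.neighbor w k) l), ← add_sum_erase _ _ hk]
    rw [sum_eq_single_of_mem l (mem_erase.2 ⟨hlk, hl⟩), slope_edge_self hlw, one_smul]
    intro m hm hml
    rw [slope_edge_of_ne hlw (hsub hm) hml, zero_smul]
  have hentering : M.slope (M.entering w k) (M.edge (M.neighbor w k) l) = 0 :=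
    slope_edge_of_ne hlw (entering_mem_facetsAt_neighbor hk)
      fun h => entering_notMem_facetsAt hk (h ▸ hl)
  rw [← hexpand, map_add, map_smul, slope_entering_edge hk, smul_eq_mul] at hentering
  rw [← hexpand, add_comm, show M.slope k (M.edge (M.neighbor w k) l) =
    M.slope (M.entering w k) (M.edge w l) by linarith]

end Neighbors

section Shift

variable {M}

variable (M) in
/-- The vertex with normal cone `facetsAt w` of the displaced polytope
`{p | ∀ k, a k ≤ height k p}`, provided that the displacement `a` does not change the normal
fan. -/
def shift (a : ι → ℝ) (w : ω) : E := M.vertex w + ∑ k ∈ M.facetsAt w, a k • M.edge w k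

theorem height_shift {w : ω} {l : ι} (hl : l ∈ M.facetsAt w) (a : ι → ℝ) :
    M.height l (M.shift a w) = a l := by
  rw [shift, height_vertex_add hl, slope_sum_smul_edge hl]

@[simp]
theorem shift_zero (w : ω) : M.shift 0 w = M.vertex w := by
  simp [shift]

theorem shift_single {w : ω} {i : ι} (hi : i ∈ M.facetsAt w) :
    M.shift (Pi.single i 1) w = M.vertex w + M.edge w i := by
  rw [shift, sum_eq_single_of_mem i hi, Pi.single_eq_same, one_smul]
  intro k _ hki
  rw [Pi.single_eq_of_ne hki, zero_smul]

theorem shift_single_of_notMem {w : ω} {i : ι} (hi : i ∉ M.facetsAt w) :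
    M.shift (Pi.single i 1) w = M.vertex w := by
  rw [shift, add_eq_left]
  refine sum_eq_zero fun k hk => ?_
  rw [Pi.single_eq_of_ne (ne_of_mem_of_not_mem hk hi), zero_smul]

variable (M) in
/-- The displacement `a` is nef if the displaced vertices `shift a w` all lie in the displaced
polytope `{p | ∀ k, a k ≤ height k p}`. -/
def IsNef (a : ι → ℝ) : Prop := ∀ w k, a k ≤ M.height k (M.shift a w)

theorem isNef_zero : M.IsNef 0 := by
  intro w k
  rw [shift_zero]
  exact M.height_vertex_nonneg w k

theorem height_vertex_add_edge_nonneg {w : ω} {k : ι} (hk : k ∈ M.facetsAt w) (l : ι) :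
    0 ≤ M.height l (M.vertex w + M.edge w k) := by
  have hw := M.height_vertex_nonneg w l
  have hn := M.height_vertex_nonneg (M.neighbor w k) l
  have hlen := M.one_le_edgeLength w k hk
  rw [M.vertex_neighbor w k hk, M.height_add, map_smul, smul_eq_mul] at hn
  rw [M.height_add]
  by_cases h : 0 ≤ M.slope l (M.edge w k)
  · linarith
  · nlinarith

theorem isNef_single (i : ι) : M.IsNef (Pi.single i 1) := by
  intro w k
  by_cases hk : k ∈ M.facetsAt w
  · rw [height_shift hk]
  by_cases hi : i ∈ M.facetsAt w
  · rw [shift_single hi, Pi.single_eq_of_ne (ne_of_mem_of_not_mem hi hk).symm]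
    exact height_vertex_add_edge_nonneg hi k
  · rw [shift_single_of_notMem hi]
    have h : Pi.single (M := fun _ => ℝ) i 1 k ≤ 1 := by
      rw [Pi.single_apply]
      split_ifs <;> norm_num
    exact h.trans (one_le_height_vertex hk)

end Shift

end SmoothPresentation

end Presentation

section MixedDegree

open Finset

namespace SmoothPresentation

variable {n : ℕ} {ι ω E : Type*} [Fintype ι] [DecidableEq ι] [Fintype ω]
  [AddCommGroup E] [Module ℝ E] (M : SmoothPresentation n ι ω E)

/-- The facets in `I` have a common vertex; equivalently, their inner normals span a cone of the
normal fan. -/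
def IsCone (I : Finset ι) : Prop := ∃ w, I ⊆ M.facetsAt w

section Localization

theorem exists_dual_edge_ne_zero :
    ∃ ξ : Module.Dual ℝ E, ∀ w, ∀ k ∈ M.facetsAt w, ξ (M.edge w k) ≠ 0 := by
  obtain ⟨ξ, hξ⟩ := Module.exists_dual_forall_apply_ne_zero (K := ℝ)
    (fun i : {i : ω × ι // i.2 ∈ M.facetsAt i.1} => M.edge i.1.1 i.1.2) fun i => edge_ne_zero i.2
  exact ⟨ξ, fun w k hk => hξ ⟨⟨w, k⟩, hk⟩⟩

/-- A functional that is constant on no edge: a generic one-parameter subgroup of the torus acting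
on the toric variety of the normal fan. -/
def generic : Module.Dual ℝ E := M.exists_dual_edge_ne_zero.choose

/-- The equivariant weight at the torus-fixed point `w` of the divisor of the facet `k`. -/
def weight (w : ω) (k : ι) : ℝ := -M.generic (M.edge w k)

variable {M} in
theorem weight_ne_zero {w : ω} {k : ι} (hk : k ∈ M.facetsAt w) : M.weight w k ≠ 0 :=
  neg_ne_zero.2 (M.exists_dual_edge_ne_zero.choose_spec w k hk)

/-- The Atiyah–Bott localization sum over the torus-fixed points of the stratum of `I`, for a class
restricting to `G w` at the fixed point `w`. -/
def localSum (I : Finset ι) (G : ω → ℝ) : ℝ :=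
  ∑ w with I ⊆ M.facetsAt w, G w / ∏ k ∈ M.facetsAt w \ I, M.weight w k

theorem localSum_congr {I : Finset ι} {G H : ω → ℝ} (h : ∀ w, I ⊆ M.facetsAt w → G w = H w) :
    M.localSum I G = M.localSum I H :=
  sum_congr rfl fun w hw => by rw [h w (mem_filter.1 hw).2]

theorem localSum_add (I : Finset ι) (G H : ω → ℝ) :
    M.localSum I (fun w => G w + H w) = M.localSum I G + M.localSum I H := by
  simp only [localSum, add_div, sum_add_distrib]

theorem localSum_const_mul (I : Finset ι) (c : ℝ) (G : ω → ℝ) :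
    M.localSum I (fun w => c * G w) = c * M.localSum I G := by
  simp only [localSum, mul_sum, mul_div_assoc]

theorem localSum_eq_zero {I : Finset ι} (h : ¬M.IsCone I) (G : ω → ℝ) : M.localSum I G = 0 := by
  rw [localSum, filter_false_of_mem fun w _ hw => h ⟨w, hw⟩, sum_empty]

theorem localSum_sum_weight_mul (I : Finset ι) (a : ι → ℝ) (G : ω → ℝ) :
    M.localSum I (fun w => (∑ k ∈ M.facetsAt w \ I, a k * M.weight w k) * G w) =
      ∑ k ∈ Iᶜ, a k * M.localSum (insert k I) G := by
  simp only [localSum, mul_sum, sum_mul, sum_div]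
  rw [sum_comm' (t' := Iᶜ) (s' := fun k => {w | insert k I ⊆ M.facetsAt w})]
  · refine sum_congr rfl fun k hk => sum_congr rfl fun w hw => ?_
    rw [mem_compl] at hk
    have hkw : k ∈ M.facetsAt w := (mem_filter.1 hw).2 (mem_insert_self _ _)
    rw [← mul_prod_erase _ _ (mem_sdiff.2 ⟨hkw, hk⟩), ← sdiff_insert, mul_right_comm, mul_comm,
      mul_div_mul_left _ _ (weight_ne_zero hkw), mul_div_assoc]
  · intro w k
    simp only [mem_filter, mem_univ, true_and, mem_sdiff, mem_compl, insert_subset_iff]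
    tauto

theorem localSum_one_of_card_add_one {I : Finset ι} (hI : #I + 1 = n) :
    M.localSum I (fun _ => 1) = 0 := by
  classical
  by_cases h : M.IsCone I
  swap
  · exact M.localSum_eq_zero h _
  obtain ⟨w, hw⟩ := h
  obtain ⟨k, hk⟩ : ∃ k, M.facetsAt w \ I = {k} := by
    rw [← card_eq_one, card_facetsAt_sdiff hw]
    lia
  obtain ⟨hkw, hkI⟩ := mem_sdiff.1 (hk ▸ mem_singleton_self k)
  obtain rfl : (M.facetsAt w).erase k = I := by
    rw [← sdiff_singleton_eq_erase, ← hk, Finset.sdiff_sdiff_eq_self hw]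
  have hne : w ≠ M.neighbor w k := fun h => notMem_facetsAt_neighbor hkw (h ▸ hkw)
  have hends : ({x | (M.facetsAt w).erase k ⊆ M.facetsAt x} : Finset ω) = {w, M.neighbor w k} := by
    ext x
    simp only [mem_filter, mem_univ, true_and, mem_insert, mem_singleton]
    refine ⟨M.eq_or_eq_neighbor w k hkw x, ?_⟩
    rintro (rfl | rfl)
    exacts [hw, erase_subset_facetsAt_neighbor hkw]
  have hentering : M.facetsAt (M.neighbor w k) \ (M.facetsAt w).erase k = {M.entering w k} := by
    rw [facetsAt_neighbor hkw, insert_sdiff_cancel fun h =>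
      entering_notMem_facetsAt hkw (mem_of_mem_erase h)]
  rw [localSum, hends, sum_pair hne, hk, hentering, prod_singleton, prod_singleton, weight, weight,
    edge_neighbor_entering hkw, map_neg, div_neg, neg_neg, neg_add_cancel]

theorem sum_slope_mul_weight {I : Finset ι} {v : E} (hv : ∀ l ∈ I, M.slope l v = 0) (w : ω) :
    ∑ k ∈ M.facetsAt w \ I, M.slope k v * M.weight w k = -M.generic v := by
  conv_rhs => rw [← M.sum_slope_smul_edge w v]
  rw [map_sum, ← sum_neg_distrib]
  refine sum_subset_zero_on_sdiff sdiff_subset (fun k hk => ?_) fun k _ => ?_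
  · obtain ⟨hkw, hk⟩ := mem_sdiff.1 hk
    have hkI : k ∈ I := by simpa [hkw] using hk
    simp [hv k hkI]
  · simp [weight]

theorem localSum_one {I : Finset ι} (hI : #I < n) : M.localSum I (fun _ => 1) = 0 := by
  obtain ⟨d, hd⟩ := Nat.exists_eq_add_of_lt hI
  induction d generalizing I with
  | zero => exact M.localSum_one_of_card_add_one hd.symm
  | succ d ih =>
    by_cases h : M.IsCone I
    swap
    · exact M.localSum_eq_zero h _
    obtain ⟨w, hw⟩ := h
    obtain ⟨k, hkw, hkI⟩ : ∃ k ∈ M.facetsAt w, k ∉ I :=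
      exists_mem_notMem_of_card_lt_card (by rwa [M.card_facetsAt])
    have hv : ∀ l ∈ I, M.slope l (M.edge w k) = 0 := fun l hl =>
      slope_edge_of_ne hkw (hw hl) (ne_of_mem_of_not_mem hl hkI)
    have hmul : M.weight w k * M.localSum I (fun _ => 1) =
        ∑ l ∈ Iᶜ, M.slope l (M.edge w k) * M.localSum (insert l I) (fun _ => 1) := by
      rw [← localSum_sum_weight_mul, ← localSum_const_mul]
      exact M.localSum_congr fun x _ => by rw [M.sum_slope_mul_weight hv, weight]
    rw [sum_eq_zero] at hmul
    · exact (mul_eq_zero.1 hmul).resolve_left (weight_ne_zero hkw)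
    · intro l hl
      have hcard := card_insert_of_notMem (mem_compl.1 hl)
      rw [ih (by lia) (by lia), mul_zero]

end Localization

/-- The mixed degree of the face on which the facets in `I` meet, with respect to the displaced
polytopes `{p | ∀ k, a k ≤ height k p}` for `a ∈ J`: the intersection number of the corresponding
divisors on a stratum of the toric variety, computed by localization. -/
def mixedDegree (I : Finset ι) (J : Multiset (ι → ℝ)) : ℝ :=
  M.localSum I fun w => (J.map fun a => M.generic (M.shift a w)).prod

variable {M}

theorem mixedDegree_eq_zero {I : Finset ι} (h : ¬M.IsCone I) (J : Multiset (ι → ℝ)) :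
    M.mixedDegree I J = 0 :=
  M.localSum_eq_zero h _

theorem generic_shift {I : Finset ι} {a : ι → ℝ} {p : E} (hp : ∀ l ∈ I, M.height l p = a l)
    {w : ω} (hw : I ⊆ M.facetsAt w) :
    M.generic (M.shift a w) =
      M.generic p + ∑ k ∈ M.facetsAt w \ I, (M.height k p - a k) * M.weight w k := by
  have hslope : ∀ l ∈ M.facetsAt w,
      M.slope l (p - M.shift a w) = M.height l p - a l := fun l hl => by
    rw [M.slope_sub, height_shift hl]
  have hI : ∀ l ∈ I, M.slope l (p - M.shift a w) = 0 := fun l hl => by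
    rw [hslope l (hw hl), hp l hl, sub_self]
  rw [sum_congr rfl fun k hk => by rw [← hslope k (mem_sdiff.1 hk).1],
    M.sum_slope_mul_weight hI, map_sub]
  ring

theorem mixedDegree_cons_eq_add {I : Finset ι} {a : ι → ℝ} {p : E}
    (hp : ∀ l ∈ I, M.height l p = a l) (J : Multiset (ι → ℝ)) :
    M.mixedDegree I (a ::ₘ J) = M.generic p * M.mixedDegree I J +
      ∑ k ∈ Iᶜ, (M.height k p - a k) * M.mixedDegree (insert k I) J := by
  simp only [mixedDegree]
  rw [← localSum_sum_weight_mul, ← localSum_const_mul, ← localSum_add]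
  refine M.localSum_congr fun w hw => ?_
  rw [Multiset.map_cons, Multiset.prod_cons, generic_shift hp hw, add_mul]

theorem mixedDegree_eq_zero_of_card_lt {I : Finset ι} {J : Multiset (ι → ℝ)}
    (h : J.card + #I < n) : M.mixedDegree I J = 0 := by
  induction J using Multiset.induction_on generalizing I with
  | empty => simpa [mixedDegree] using M.localSum_one (by simpa using h)
  | cons a J ih =>
    by_cases hI : M.IsCone I
    swap
    · exact mixedDegree_eq_zero hI _
    obtain ⟨w, hw⟩ := hI
    rw [Multiset.card_cons] at h
    rw [mixedDegree_cons_eq_add (p := M.shift a w) fun l hl => height_shift (hw hl) a,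
      ih (by lia), mul_zero, zero_add]
    refine sum_eq_zero fun k hk => ?_
    have hcard := card_insert_of_notMem (mem_compl.1 hk)
    rw [ih (by lia), mul_zero]

theorem mixedDegree_cons {I : Finset ι} {a : ι → ℝ} {p : E} (hp : ∀ l ∈ I, M.height l p = a l)
    {J : Multiset (ι → ℝ)} (hJ : J.card + 1 + #I = n) :
    M.mixedDegree I (a ::ₘ J) =
      ∑ k ∈ Iᶜ, (M.height k p - a k) * M.mixedDegree (insert k I) J := by
  rw [mixedDegree_cons_eq_add hp, mixedDegree_eq_zero_of_card_lt (by lia), mul_zero, zero_add]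

theorem mixedDegree_single_cons {I : Finset ι} {i : ι} (hi : i ∉ I) (J : Multiset (ι → ℝ)) :
    M.mixedDegree I (Pi.single i 1 ::ₘ J) =
      M.mixedDegree I (0 ::ₘ J) - M.mixedDegree (insert i I) J := by
  have h := M.localSum_sum_weight_mul I (Pi.single i 1) fun w =>
    (J.map fun a => M.generic (M.shift a w)).prod
  rw [sum_eq_single_of_mem i (mem_compl.2 hi) fun k _ hk => by
    rw [Pi.single_eq_of_ne hk, zero_mul], Pi.single_eq_same, one_mul] at h
  rw [eq_sub_iff_add_eq]
  simp only [mixedDegree]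
  rw [← h, ← localSum_add]
  refine M.localSum_congr fun w _ => ?_
  simp only [Multiset.map_cons, Multiset.prod_cons, ← add_mul, shift_zero]
  congr 1
  by_cases hiw : i ∈ M.facetsAt w
  · rw [shift_single hiw, sum_eq_single_of_mem i (mem_sdiff.2 ⟨hiw, hi⟩) fun k _ hk => by
      rw [Pi.single_eq_of_ne hk, zero_mul], Pi.single_eq_same, map_add, weight]
    ring
  · rw [shift_single_of_notMem hiw, sum_eq_zero fun k hk => ?_, add_zero]
    rw [Pi.single_eq_of_ne (ne_of_mem_of_not_mem (mem_sdiff.1 hk).1 hiw), zero_mul]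

theorem mixedDegree_facetsAt (w : ω) : M.mixedDegree (M.facetsAt w) 0 = 1 := by
  have h : ({x | M.facetsAt w ⊆ M.facetsAt x} : Finset ω) = {w} := by
    ext x
    simp only [mem_filter, mem_univ, true_and, mem_singleton]
    exact ⟨fun h => (eq_of_facetsAt_subset h).symm, fun h => h ▸ Subset.rfl⟩
  rw [mixedDegree, localSum, h]
  simp

theorem mixedDegree_nonneg {I : Finset ι} {J : Multiset (ι → ℝ)} (hJ : ∀ a ∈ J, M.IsNef a)
    (h : J.card + #I = n) : 0 ≤ M.mixedDegree I J := by
  by_cases hI : M.IsCone I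
  swap
  · exact (mixedDegree_eq_zero hI J).ge
  obtain ⟨w, hw⟩ := hI
  induction J using Multiset.induction_on generalizing I w with
  | empty =>
    rw [eq_of_subset_of_card_le hw (by rw [M.card_facetsAt, ← h, Multiset.card_zero, zero_add]),
      mixedDegree_facetsAt]
    exact zero_le_one
  | cons a J ih =>
    rw [Multiset.card_cons] at h
    rw [mixedDegree_cons (p := M.shift a w) (fun l hl => height_shift (hw hl) a) h]
    refine sum_nonneg fun k hk => mul_nonneg (sub_nonneg.2 (hJ a (by simp) w k)) ?_
    by_cases hkI : M.IsCone (insert k I)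
    · obtain ⟨x, hx⟩ := hkI
      refine ih (fun b hb => hJ b (Multiset.mem_cons_of_mem hb)) ?_ x hx
      rw [card_insert_of_notMem (mem_compl.1 hk)]
      lia
    · exact (mixedDegree_eq_zero hkI J).ge

theorem mixedDegree_cons_pos {I : Finset ι} {a : ι → ℝ} {p : E} {k : ι} {J : Multiset (ι → ℝ)}
    (hp : ∀ l ∈ I, M.height l p = a l) (hge : ∀ l, a l ≤ M.height l p) (hk : k ∉ I)
    (hlt : a k < M.height k p) (hJ : ∀ b ∈ J, M.IsNef b) (hcard : J.card + 1 + #I = n)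
    (hpos : 0 < M.mixedDegree (insert k I) J) : 0 < M.mixedDegree I (a ::ₘ J) := by
  rw [mixedDegree_cons hp hcard]
  refine sum_pos' (fun l hl => mul_nonneg (sub_nonneg.2 (hge l)) (mixedDegree_nonneg hJ ?_))
    ⟨k, mem_compl.2 hk, mul_pos (sub_pos.2 hlt) hpos⟩
  rw [card_insert_of_notMem (mem_compl.1 hl)]
  lia

end SmoothPresentation

end MixedDegree

section DualDegree

open Finset

section Powerset

variable {ι R : Type*} [DecidableEq ι] [CommRing R]

theorem sum_powerset_union_of_disjoint {A B : Finset ι} (h : Disjoint A B) (f : Finset ι → R) :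
    ∑ T ∈ (A ∪ B).powerset, f T = ∑ S ∈ A.powerset, ∑ T ∈ B.powerset, f (S ∪ T) := by
  induction A using Finset.induction_on generalizing f with
  | empty => simp
  | insert a A ha ih =>
    obtain ⟨haB, hAB⟩ := disjoint_insert_left.1 h
    rw [insert_union, sum_powerset_insert (by simp [ha, haB]), sum_powerset_insert ha, ih hAB,
      ih hAB]
    simp only [insert_union]

theorem sum_powerset_sum_powerset_sdiff (B : Finset ι) (f : Finset ι → R) :
    ∑ S ∈ B.powerset, ∑ T ∈ (B \ S).powerset, (-1) ^ #T * f (S ∪ T) = f ∅ := by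
  induction B using Finset.induction_on with
  | empty => simp
  | insert b B hb ih =>
    rw [sum_powerset_insert hb, ← sum_add_distrib, ← ih]
    refine sum_congr rfl fun S hS => ?_
    have hbS : b ∉ S := fun h => hb (mem_powerset.1 hS h)
    have hbT : b ∉ B \ S := fun h => hb (mem_sdiff.1 h).1
    rw [insert_sdiff_of_notMem _ hbS, insert_sdiff_insert, sdiff_insert_of_notMem hb,
      sum_powerset_insert hbT, add_assoc, ← sum_add_distrib]
    refine add_eq_left.2 (sum_eq_zero fun T hT => ?_)
    rw [card_insert_of_notMem fun h => hbT (mem_powerset.1 hT h), union_insert, insert_union]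
    ring

theorem sum_powerset_sum_mul_sum_powerset_sdiff (B : Finset ι) (a : ι → R) (f : Finset ι → R) :
    ∑ S ∈ B.powerset, (∑ k ∈ S, a k) * ∑ T ∈ (B \ S).powerset, (-1) ^ #T * f (S ∪ T) =
      ∑ k ∈ B, a k * f {k} := by
  simp only [sum_mul]
  rw [sum_comm' (t' := B) (s' := fun k => (B.erase k).powerset.image (insert k))]
  · refine sum_congr rfl fun k _ => ?_
    rw [← mul_sum, sum_image, ← insert_empty_eq k,
      ← sum_powerset_sum_powerset_sdiff (B.erase k) fun S => f (insert k S)]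
    · simp only [insert_union, sdiff_insert, erase_sdiff_comm]
    · intro S hS T hT hST
      have hkS : k ∉ S := fun h => notMem_erase k B (mem_powerset.1 hS h)
      have hkT : k ∉ T := fun h => notMem_erase k B (mem_powerset.1 hT h)
      rw [← erase_insert hkS, hST, erase_insert hkT]
  · intro S k
    simp only [mem_powerset, mem_image]
    constructor
    · rintro ⟨hS, hk⟩
      exact ⟨⟨S.erase k, erase_subset_erase k hS, insert_erase hk⟩, hS hk⟩
    · rintro ⟨⟨T, hT, rfl⟩, hk⟩
      exact ⟨insert_subset hk (hT.trans (erase_subset k B)), mem_insert_self k T⟩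

end Powerset

namespace SmoothPresentation

variable {n : ℕ} {ι ω E : Type*} [Fintype ι] [DecidableEq ι] [Fintype ω]
  [AddCommGroup E] [Module ℝ E] (M : SmoothPresentation n ι ω E)

/-- The normalized volume `d! Vol(F)` of the `d`-dimensional face `F` on which the facets in `I`
meet. -/
def normVol (I : Finset ι) : ℝ := M.mixedDegree I (Multiset.replicate (n - #I) 0)

/-- The degree of the discriminant of the face on which the facets in `I` meet: the alternating sum
of `(dim F + 1)! Vol(F)` over its faces `F`. -/
def dualDegree (I : Finset ι) : ℝ :=
  ∑ T ∈ Iᶜ.powerset, (-1) ^ #T * ((n + 1 - #(I ∪ T)) * M.normVol (I ∪ T))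

/-- The mixed degree of the face of `I` with respect to the polytopes obtained by moving one facet
through the vertex `v`, not in `I`, to distance one. -/
def vertexDegree (v : ω) (I : Finset ι) : ℝ :=
  M.mixedDegree I ((M.facetsAt v \ I).val.map fun i => Pi.single i 1)

variable {M}

theorem normVol_eq_zero {I : Finset ι} (h : ¬M.IsCone I) : M.normVol I = 0 :=
  mixedDegree_eq_zero h _

theorem normVol_facetsAt (w : ω) : M.normVol (M.facetsAt w) = 1 := by
  rw [normVol, M.card_facetsAt, Nat.sub_self, Multiset.replicate_zero, mixedDegree_facetsAt]

theorem normVol_nonneg (I : Finset ι) : 0 ≤ M.normVol I := by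
  by_cases hI : M.IsCone I
  · have hcard := hI.elim fun _ => card_le_of_subset_facetsAt
    refine mixedDegree_nonneg (fun a ha => Multiset.eq_of_mem_replicate ha ▸ isNef_zero) ?_
    rw [Multiset.card_replicate, Nat.sub_add_cancel hcard]
  · exact (normVol_eq_zero hI).ge

theorem normVol_eq_sum {I : Finset ι} {p : E} (hp : ∀ l ∈ I, M.height l p = 0) (hI : #I < n) :
    M.normVol I = ∑ k ∈ Iᶜ, M.height k p * M.normVol (insert k I) := by
  obtain ⟨d, hd⟩ := Nat.exists_eq_add_of_lt hI
  rw [normVol, show n - #I = d + 1 by lia, Multiset.replicate_succ,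
    mixedDegree_cons (a := 0) hp (by rw [Multiset.card_replicate]; lia)]
  refine sum_congr rfl fun k hk => ?_
  rw [normVol, card_insert_of_notMem (mem_compl.1 hk), show n - (#I + 1) = d by lia, Pi.zero_apply,
    sub_zero]

theorem mixedDegree_map_single_add_replicate {I K : Finset ι} (hIK : Disjoint I K) (m : ℕ) :
    M.mixedDegree I ((K.val.map fun i => Pi.single i 1) + Multiset.replicate m 0) =
      ∑ J ∈ K.powerset,
        (-1) ^ #J * M.mixedDegree (I ∪ J) (Multiset.replicate (m + #K - #J) 0) := by
  induction K using Finset.induction_on generalizing I m with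
  | empty => simp
  | insert k K hk ih =>
    obtain ⟨hkI, hIK⟩ := disjoint_insert_right.1 hIK
    have hinsert : Disjoint (insert k I) K := disjoint_insert_left.2 ⟨hk, hIK⟩
    rw [insert_val_of_notMem hk, Multiset.map_cons, Multiset.cons_add, mixedDegree_single_cons hkI,
      ← Multiset.add_cons, ← Multiset.replicate_succ, ih hIK, ih hinsert, sum_powerset_insert hk,
      card_insert_of_notMem hk, sub_eq_add_neg, ← sum_neg_distrib]
    congr 1 <;> refine sum_congr rfl fun J hJ => ?_
    · rw [show m + 1 + #K - #J = m + (#K + 1) - #J by lia]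
    · rw [card_insert_of_notMem fun h => hk (mem_powerset.1 hJ h), insert_union, union_insert,
        show m + (#K + 1) - (#J + 1) = m + #K - #J by lia, pow_succ]
      ring

theorem vertexDegree_eq_sum {v : ω} {I : Finset ι} (hI : I ⊆ M.facetsAt v) :
    M.vertexDegree v I = ∑ J ∈ (M.facetsAt v \ I).powerset, (-1) ^ #J * M.normVol (I ∪ J) := by
  have h := mixedDegree_map_single_add_replicate (M := M) (disjoint_sdiff (s := I)
    (t := M.facetsAt v)) 0
  rw [Multiset.replicate_zero, add_zero] at h
  rw [vertexDegree, h]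
  refine sum_congr rfl fun J hJ => ?_
  rw [normVol, card_union_of_disjoint (disjoint_sdiff.mono_right (mem_powerset.1 hJ)),
    card_facetsAt_sdiff hI, zero_add, Nat.sub_sub]

theorem dualDegree_union {v : ω} {I S : Finset ι} (hI : I ⊆ M.facetsAt v)
    (hS : S ⊆ (M.facetsAt v)ᶜ) :
    M.dualDegree (I ∪ S) = ∑ J ∈ (M.facetsAt v \ I).powerset, (-1) ^ #J *
      ∑ T ∈ ((M.facetsAt v)ᶜ \ S).powerset, (-1) ^ #T *
        ((n + 1 - #(I ∪ J ∪ (S ∪ T))) * M.normVol (I ∪ J ∪ (S ∪ T))) := by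
  have hcompl : (I ∪ S)ᶜ = (M.facetsAt v \ I) ∪ ((M.facetsAt v)ᶜ \ S) := by
    ext k
    have := @hI k
    have := @hS k
    simp only [mem_compl, mem_union, mem_sdiff] at *
    tauto
  have hdisj : Disjoint (M.facetsAt v \ I) ((M.facetsAt v)ᶜ \ S) :=
    disjoint_compl_right.mono sdiff_subset sdiff_subset
  rw [dualDegree, hcompl, sum_powerset_union_of_disjoint hdisj]
  refine sum_congr rfl fun J hJ => ?_
  rw [mul_sum]
  refine sum_congr rfl fun T hT => ?_
  rw [card_union_of_disjoint (hdisj.mono (mem_powerset.1 hJ) (mem_powerset.1 hT)), pow_add,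
    union_union_union_comm, mul_assoc]

theorem sum_height_mul_normVol_insert {v : ω} {L : Finset ι} (hL : L ⊆ M.facetsAt v) :
    ∑ k ∈ (M.facetsAt v)ᶜ, M.height k (M.vertex v) * ((n - #L) * M.normVol (insert k L)) =
      (n - #L) * M.normVol L := by
  rcases (card_le_of_subset_facetsAt hL).eq_or_lt with h | h
  · simp [h]
  rw [normVol_eq_sum (fun l hl => height_vertex (hL hl)) h, mul_sum]
  refine (sum_congr rfl fun _ _ => mul_left_comm _ _ _).trans
    (sum_subset (compl_subset_compl.2 hL) fun k _ hk => ?_)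
  rw [height_vertex (not_not.1 (mt mem_compl.2 hk)), zero_mul, mul_zero]

theorem sum_mul_dualDegree_union {v : ω} {I : Finset ι} (hI : I ⊆ M.facetsAt v) :
    ∑ S ∈ (M.facetsAt v)ᶜ.powerset,
      (∑ k ∈ S, M.height k (M.vertex v) - 1) * M.dualDegree (I ∪ S) = -M.vertexDegree v I := by
  rw [sum_congr rfl fun S hS => by rw [dualDegree_union hI (mem_powerset.1 hS), mul_sum], sum_comm,
    vertexDegree_eq_sum hI, ← sum_neg_distrib]
  refine sum_congr rfl fun J hJ => ?_
  have hL : I ∪ J ⊆ M.facetsAt v := union_subset hI ((mem_powerset.1 hJ).trans sdiff_subset)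
  let f : Finset ι → ℝ := fun S => (n + 1 - #(I ∪ J ∪ S)) * M.normVol (I ∪ J ∪ S)
  have hmass : ∑ k ∈ (M.facetsAt v)ᶜ, M.height k (M.vertex v) * f {k} =
      (n - #(I ∪ J)) * M.normVol (I ∪ J) := by
    rw [← sum_height_mul_normVol_insert hL]
    refine sum_congr rfl fun k hk => ?_
    have hkL : k ∉ I ∪ J := fun h => mem_compl.1 hk (hL h)
    rw [show f {k} = (n + 1 - #(I ∪ J ∪ {k})) * M.normVol (I ∪ J ∪ {k}) from rfl, union_comm _ {k},
      ← insert_eq, card_insert_of_notMem hkL]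
    push_cast
    ring
  simp only [mul_left_comm _ ((-1 : ℝ) ^ #J)]
  rw [← mul_sum, ← mul_neg]
  congr 1
  change ∑ S ∈ (M.facetsAt v)ᶜ.powerset, (∑ k ∈ S, M.height k (M.vertex v) - 1) *
    ∑ T ∈ ((M.facetsAt v)ᶜ \ S).powerset, (-1) ^ #T * f (S ∪ T) = _
  rw [sum_congr rfl fun S _ => sub_one_mul _ _, sum_sub_distrib,
    sum_powerset_sum_mul_sum_powerset_sdiff _ _ f, sum_powerset_sum_powerset_sdiff _ f, hmass,
    show f ∅ = (n + 1 - #(I ∪ J)) * M.normVol (I ∪ J) by simp [f]]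
  ring

theorem dualDegree_eq_zero_of_not_isCone {I : Finset ι} (h : ¬M.IsCone I) :
    M.dualDegree I = 0 := by
  refine sum_eq_zero fun T _ => ?_
  rw [normVol_eq_zero fun ⟨w, hw⟩ => h ⟨w, subset_union_left.trans hw⟩, mul_zero, mul_zero]

theorem dualDegree_eq_vertexDegree_add {v : ω} {I : Finset ι} (hI : I ⊆ M.facetsAt v) :
    M.dualDegree I = M.vertexDegree v I + ∑ S ∈ (M.facetsAt v)ᶜ.powerset.erase ∅,
      (∑ k ∈ S, M.height k (M.vertex v) - 1) * M.dualDegree (I ∪ S) := by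
  have h := sum_mul_dualDegree_union hI
  rw [← add_sum_erase _ _ (empty_mem_powerset _), sum_empty, union_empty] at h
  linarith

theorem one_le_sum_height_vertex {v : ω} {S : Finset ι} (hS : S.Nonempty)
    (hSv : S ⊆ (M.facetsAt v)ᶜ) : 1 ≤ ∑ k ∈ S, M.height k (M.vertex v) := by
  obtain ⟨k, hk⟩ := hS
  exact (one_le_height_vertex (mem_compl.1 (hSv hk))).trans
    (single_le_sum (f := fun k => M.height k (M.vertex v))
      (fun l _ => M.height_vertex_nonneg v l) hk)

theorem vertexDegree_nonneg {v : ω} {I : Finset ι} (hI : I ⊆ M.facetsAt v) :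
    0 ≤ M.vertexDegree v I := by
  refine mixedDegree_nonneg (fun a ha => ?_) ?_
  · obtain ⟨i, -, rfl⟩ := Multiset.mem_map.1 ha
    exact isNef_single i
  · have h := card_le_of_subset_facetsAt hI
    rw [Multiset.card_map, card_val, card_facetsAt_sdiff hI]
    lia

theorem vertexDegree_le_dualDegree_of_forall {v : ω} {I : Finset ι} (hI : I ⊆ M.facetsAt v)
    (h : ∀ J, I ⊂ J → 0 ≤ M.dualDegree J) : M.vertexDegree v I ≤ M.dualDegree I := by
  rw [dualDegree_eq_vertexDegree_add hI, le_add_iff_nonneg_right]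
  refine sum_nonneg fun S hS => ?_
  obtain ⟨hne, hSv⟩ := mem_erase.1 hS
  rw [mem_powerset] at hSv
  rw [← nonempty_iff_ne_empty] at hne
  refine mul_nonneg (sub_nonneg.2 (one_le_sum_height_vertex hne hSv)) (h _ ?_)
  obtain ⟨k, hk⟩ := hne
  exact Finset.ssubset_iff_subset_ne.2 ⟨subset_union_left, fun heq =>
    mem_compl.1 (hSv hk) (hI (heq ▸ mem_union_right _ hk))⟩

theorem dualDegree_nonneg (I : Finset ι) : 0 ≤ M.dualDegree I := by
  induction h : #Iᶜ using Nat.strong_induction_on generalizing I with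
  | _ d ih =>
    by_cases hI : M.IsCone I
    · obtain ⟨v, hv⟩ := hI
      refine (vertexDegree_nonneg hv).trans (vertexDegree_le_dualDegree_of_forall hv fun J hJ => ?_)
      exact ih _ (h ▸ card_lt_card (compl_ssubset_compl.2 hJ)) J rfl
    · exact (dualDegree_eq_zero_of_not_isCone hI).ge

theorem vertexDegree_le_dualDegree {v : ω} {I : Finset ι} (hI : I ⊆ M.facetsAt v) :
    M.vertexDegree v I ≤ M.dualDegree I :=
  vertexDegree_le_dualDegree_of_forall hI fun J _ => dualDegree_nonneg J

theorem vertexDegree_empty_eq_zero (h : M.dualDegree ∅ = 0) (v : ω) : M.vertexDegree v ∅ = 0 :=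
  ((vertexDegree_le_dualDegree (empty_subset _)).trans_eq h).antisymm
    (vertexDegree_nonneg (empty_subset _))

end SmoothPresentation

end DualDegree

section Barycentric

open Finset

namespace SmoothPresentation

theorem two_mul_card_inter_le {α : Type*} [DecidableEq α] {A S : Finset α} {c : α}
    (h : A ∩ S ⊆ {c}) (hS : S ≠ {c}) : 2 * #(A ∩ S) ≤ #S := by
  rcases subset_singleton_iff.1 h with hc | hc
  · simp [hc]
  · have hcS : {c} ⊂ S := Finset.ssubset_iff_subset_ne.2 ⟨hc ▸ inter_subset_right, hS.symm⟩
    simpa [hc, Nat.succ_le_iff] using card_lt_card hcS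

variable {n : ℕ} {ι ω E : Type*} [Fintype ι] [DecidableEq ι] [Fintype ω]
  [AddCommGroup E] [Module ℝ E] (M : SmoothPresentation n ι ω E)

variable {M} in
theorem IsCone.exists_notMem_facetsAt {I : Finset ι} (hI : M.IsCone I) {c : ι} (hc : c ∉ I) :
    ∃ w, I ⊆ M.facetsAt w ∧ c ∉ M.facetsAt w := by
  obtain ⟨w, hw⟩ := hI
  by_cases hcw : c ∈ M.facetsAt w
  · exact ⟨M.neighbor w c, fun k hk => erase_subset_facetsAt_neighbor hcw
      (mem_erase.2 ⟨ne_of_mem_of_not_mem hk hc, hw hk⟩), notMem_facetsAt_neighbor hcw⟩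
  · exact ⟨w, hw, hcw⟩

/-- The lattice distances to the facets in `C` are the barycentric coordinates of an affine map to
a standard simplex. A polytope with such a `C` is the Cayley sum of `#C` polytopes. -/
def IsBarycentric (C : Finset ι) : Prop := ∀ p, ∑ c ∈ C, M.height c p = 1

namespace IsBarycentric

variable {M} {C : Finset ι}

theorem exists_height_vertex_eq_one (hC : M.IsBarycentric C) (w : ω) :
    ∃ c ∈ C, c ∉ M.facetsAt w ∧ M.height c (M.vertex w) = 1 ∧ C.erase c ⊆ M.facetsAt w := by
  have hsum := hC (M.vertex w)
  have hC_not_subset : ¬C ⊆ M.facetsAt w := by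
    intro h
    rw [sum_eq_zero fun c hc => height_vertex (h hc)] at hsum
    exact zero_ne_one hsum
  obtain ⟨c, hc, hcw⟩ := not_subset.1 hC_not_subset
  have hone := one_le_height_vertex hcw
  have hnonneg : ∀ b ∈ C.erase c, 0 ≤ M.height b (M.vertex w) :=
    fun b _ => M.height_vertex_nonneg w b
  rw [← add_sum_erase _ _ hc] at hsum
  have hrest : ∑ b ∈ C.erase c, M.height b (M.vertex w) = 0 :=
    (by linarith : _ ≤ _).antisymm (sum_nonneg hnonneg)
  exact ⟨c, hc, hcw, by linarith, fun b hb =>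
    (M.mem_facetsAt_iff w b).2 ((sum_eq_zero_iff_of_nonneg hnonneg).1 hrest b hb)⟩

theorem card_add_card_sdiff_le (hC : M.IsBarycentric C) {I : Finset ι} (hI : M.IsCone I) :
    #I + #(C \ I) ≤ n + 1 := by
  obtain ⟨w, hw⟩ := hI
  obtain ⟨c, -, -, -, hcC⟩ := hC.exists_height_vertex_eq_one w
  rw [add_comm, card_sdiff_add_card]
  calc #(C ∪ I) ≤ #(insert c (M.facetsAt w)) :=
        card_le_card (union_subset (subset_insert_iff.2 hcC) (hw.trans (subset_insert _ _)))
    _ ≤ n + 1 := (card_insert_le _ _).trans_eq (by rw [M.card_facetsAt])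

theorem mixedDegree_eq_zero (hC : M.IsBarycentric C) {K I : Finset ι} (hK : K ⊆ C \ I)
    (J : Multiset (ι → ℝ)) (hcard : #K + J.card + #I = n) (hlt : n + 1 < #I + #(C \ I) + #K) :
    M.mixedDegree I ((K.val.map fun i => Pi.single i 1) + J) = 0 := by
  by_cases hI : M.IsCone I
  swap
  · exact SmoothPresentation.mixedDegree_eq_zero hI _
  induction K using Finset.induction_on generalizing I with
  | empty =>
    rw [card_empty, add_zero] at hlt
    exact absurd (hC.card_add_card_sdiff_le hI) hlt.not_ge
  | insert c K hcK ih =>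
    obtain ⟨hc, hK⟩ := insert_subset_iff.1 hK
    obtain ⟨hcC, hcI⟩ := mem_sdiff.1 hc
    rw [card_insert_of_notMem hcK] at hcard hlt
    obtain ⟨x, hxI, hcx⟩ := hI.exists_notMem_facetsAt hcI
    obtain ⟨b, -, -, hone, hbC⟩ := hC.exists_height_vertex_eq_one x
    obtain rfl : c = b := not_not.1 fun h => hcx (hbC (mem_erase.2 ⟨h, hcC⟩))
    have hp : ∀ l ∈ I, M.height l (M.vertex x) = Pi.single (M := fun _ => ℝ) c 1 l := fun l hl => by
      rw [height_vertex (hxI hl), Pi.single_eq_of_ne (ne_of_mem_of_not_mem hl hcI)]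
    rw [insert_val_of_notMem hcK, Multiset.map_cons, Multiset.cons_add, mixedDegree_cons hp
      (by rw [Multiset.card_add, Multiset.card_map, card_val]; lia)]
    refine sum_eq_zero fun k hk => ?_
    rw [mem_compl] at hk
    by_cases hkC : k ∈ C
    · rw [mul_eq_zero_of_left]
      rcases eq_or_ne k c with rfl | hkc
      · rw [hone, Pi.single_eq_same, sub_self]
      · rw [height_vertex (hbC (mem_erase.2 ⟨hkc, hkC⟩)), Pi.single_eq_of_ne hkc, sub_self]
    · have hsdiff : C \ insert k I = C \ I := by
        rw [sdiff_insert, erase_eq_of_notMem (by simp [hkC])]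
      refine mul_eq_zero_of_right _ ?_
      by_cases hkI : M.IsCone (insert k I)
      · refine ih (hsdiff ▸ hK) ?_ ?_ hkI
        · rw [card_insert_of_notMem hk]
          lia
        · rw [hsdiff, card_insert_of_notMem hk]
          lia
      · exact SmoothPresentation.mixedDegree_eq_zero hkI _

theorem vertexDegree_eq_zero (hC : M.IsBarycentric C) {v : ω} {I : Finset ι}
    (hI : I ⊆ M.facetsAt v) (hlt : n + 2 < #I + 2 * #(C \ I)) : M.vertexDegree v I = 0 := by
  obtain ⟨c, hcC, hcv, -, hC_erase⟩ := hC.exists_height_vertex_eq_one v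
  let K := (C \ I).erase c
  have hK : K ⊆ M.facetsAt v \ I := fun k hk => by
    obtain ⟨hkc, hk⟩ := mem_erase.1 hk
    obtain ⟨hkC, hkI⟩ := mem_sdiff.1 hk
    exact mem_sdiff.2 ⟨hC_erase (mem_erase.2 ⟨hkc, hkC⟩), hkI⟩
  have hcardK : #K + 1 = #(C \ I) :=
    card_erase_add_one (mem_sdiff.2 ⟨hcC, fun h => hcv (hI h)⟩)
  have hcard := card_le_of_subset_facetsAt hI
  have hcardF := card_facetsAt_sdiff hI
  have hcard_sdiff := card_sdiff_add_card_eq_card hK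
  rw [vertexDegree, ← add_tsub_cancel_of_le (val_le_iff.2 hK), ← sdiff_val, Multiset.map_add]
  refine hC.mixedDegree_eq_zero (erase_subset _ _) _ ?_ (by lia)
  rw [Multiset.card_map, card_val]
  lia

theorem dualDegree_eq_zero (hC : M.IsBarycentric C) {I : Finset ι}
    (hlt : n + 2 < #I + 2 * #(C \ I)) : M.dualDegree I = 0 := by
  induction h : #Iᶜ using Nat.strong_induction_on generalizing I with
  | _ d ih =>
    by_cases hI : M.IsCone I
    swap
    · exact dualDegree_eq_zero_of_not_isCone hI
    obtain ⟨v, hv⟩ := hI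
    obtain ⟨c, -, -, hone, hC_erase⟩ := hC.exists_height_vertex_eq_one v
    rw [dualDegree_eq_vertexDegree_add hv, hC.vertexDegree_eq_zero hv hlt, zero_add]
    refine sum_eq_zero fun S hS => ?_
    obtain ⟨hne, hSv⟩ := mem_erase.1 hS
    rw [mem_powerset] at hSv
    rw [← nonempty_iff_ne_empty] at hne
    by_cases hSc : S = {c}
    · rw [hSc, sum_singleton, hone, sub_self, zero_mul]
    have hdisj : Disjoint I S := disjoint_left.2 fun k hkI hkS => mem_compl.1 (hSv hkS) (hv hkI)
    have hinter : (C \ I) ∩ S ⊆ {c} := fun k hk => by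
      obtain ⟨hkC, hkS⟩ := mem_inter.1 hk
      refine mem_singleton.2 (not_not.1 fun hkc => mem_compl.1 (hSv hkS) ?_)
      exact hC_erase (mem_erase.2 ⟨hkc, (mem_sdiff.1 hkC).1⟩)
    have hinter_card := two_mul_card_inter_le hinter hSc
    have hsplit := card_sdiff_add_card_inter (C \ I) S
    have hpos := hne.card_pos
    refine mul_eq_zero_of_right _ (ih _ ?_ ?_ rfl)
    · rw [← h, card_compl, card_compl, card_union_of_disjoint hdisj]
      have := card_le_univ (I ∪ S)
      rw [card_union_of_disjoint hdisj] at this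
      lia
    · rw [card_union_of_disjoint hdisj, ← sup_eq_union, ← sdiff_sdiff_left]
      lia

end IsBarycentric

end SmoothPresentation

end Barycentric

section Conflict

open Finset

theorem exists_injOn_forall_not_rel {α : Type*} {r : α → α → Prop} [DecidableRel r] [Std.Symm r]
    [IsTrans α r] {K : Finset α}
    (h : ∀ a ∈ K, #{b ∈ K | r a b} ≤ #{b ∈ K | ¬r a b}) :
    ∃ f : α → α, Set.InjOn f K ∧ ∀ a ∈ K, f a ∈ K ∧ ¬r a (f a) := by
  classical
  let t : K → Finset α := fun a => {b ∈ K | ¬r a b}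
  have hHall : ∀ s : Finset K, #s ≤ #(s.biUnion t) := by
    intro s
    rcases s.eq_empty_or_nonempty with rfl | ⟨a, ha⟩
    · exact Nat.zero_le _
    by_cases hcover : K ⊆ s.biUnion t
    · exact (card_le_univ s).trans ((Fintype.card_coe K).trans_le (card_le_card hcover))
    obtain ⟨b, hb, hbs⟩ := not_subset.1 hcover
    have hrb : ∀ c ∈ s, r c b := fun c hc => not_not.1 fun hcb =>
      hbs (mem_biUnion.2 ⟨c, hc, mem_filter.2 ⟨hb, hcb⟩⟩)
    calc #s = #(s.map (Function.Embedding.subtype _)) := (card_map _).symm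
      _ ≤ #{c ∈ K | r b c} := card_le_card fun c hc => by
        obtain ⟨d, hd, rfl⟩ := mem_map.1 hc
        exact mem_filter.2 ⟨d.2, symm_of r (hrb d hd)⟩
      _ ≤ #{c ∈ K | ¬r b c} := h b hb
      _ ≤ #(s.biUnion t) := card_le_card fun c hc => by
        obtain ⟨hcK, hbc⟩ := mem_filter.1 hc
        exact mem_biUnion.2
          ⟨a, ha, mem_filter.2 ⟨hcK, fun hac => hbc (trans_of r (symm_of r (hrb a ha)) hac)⟩⟩
  obtain ⟨f, hf, hft⟩ := (all_card_le_biUnion_card_iff_exists_injective t).1 hHall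
  let F : α → α := fun a => if ha : a ∈ K then f ⟨a, ha⟩ else a
  have hF : ∀ a (ha : a ∈ K), F a = f ⟨a, ha⟩ := fun a ha => dif_pos ha
  refine ⟨F, fun a ha b hb hab => ?_, fun a ha => hF a ha ▸ mem_filter.1 (hft ⟨a, ha⟩)⟩
  rw [hF a ha, hF b hb] at hab
  exact congrArg Subtype.val (hf hab)

theorem card_filter_rel_le {α : Type*} [DecidableEq α] {r : α → α → Prop} [DecidableRel r]
    [Std.Symm r] [IsTrans α r] {B C : Finset α} {k : α} (hB : ∀ b ∈ B, ¬r k b)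
    (hC : ∀ c ∈ C, r k c) (h : #B = #C) :
    ∀ a ∈ B ∪ C, #{b ∈ B ∪ C | r a b} ≤ #{b ∈ B ∪ C | ¬r a b} := by
  have hBC : ∀ b ∈ B, ∀ c ∈ C, ¬r c b := fun b hb c hc hcb => hB b hb (trans_of r (hC c hc) hcb)
  intro a ha
  rcases mem_union.1 ha with ha | ha
  · calc #{b ∈ B ∪ C | r a b} ≤ #B := card_le_card fun b hb => by
          obtain ⟨hb, hab⟩ := mem_filter.1 hb
          exact (mem_union.1 hb).resolve_right fun hbC => hBC a ha b hbC (symm_of r hab)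
      _ = #C := h
      _ ≤ #{b ∈ B ∪ C | ¬r a b} := card_le_card fun c hc =>
          mem_filter.2 ⟨mem_union_right _ hc, fun hac => hBC a ha c hc (symm_of r hac)⟩
  · calc #{b ∈ B ∪ C | r a b} ≤ #C := card_le_card fun b hb => by
          obtain ⟨hb, hab⟩ := mem_filter.1 hb
          exact (mem_union.1 hb).resolve_left fun hbB => hBC b hbB a ha hab
      _ = #B := h.symm
      _ ≤ #{b ∈ B ∪ C | ¬r a b} := card_le_card fun b hb =>
          mem_filter.2 ⟨mem_union_left _ hb, hBC b hb a ha⟩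

namespace SmoothPresentation

variable {n : ℕ} {ι ω E : Type*} [Fintype ι] [DecidableEq ι] [Fintype ω]
  [AddCommGroup E] [Module ℝ E] (M : SmoothPresentation n ι ω E)

/-- The polytope presented by `M`. -/
def polytope : Set E := {p | ∀ k, 0 ≤ M.height k p}

theorem convex_polytope : Convex ℝ M.polytope := by
  have h : M.polytope = ⋂ k, M.height k ⁻¹' Set.Ici 0 := by
    ext p
    simp [polytope]
  rw [h]
  exact convex_iInter fun k => (convex_Ici 0).affine_preimage (M.height k)

theorem vertex_mem_polytope (w : ω) : M.vertex w ∈ M.polytope := M.height_vertex_nonneg w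

/-- The facets `i` and `k` through the vertex `v` are in conflict if the sum of the primitive edge
vectors leaving them at `v` leads out of the polytope. -/
def Conflict (v : ω) (i k : ι) : Prop :=
  i ∈ M.facetsAt v ∧ k ∈ M.facetsAt v ∧ M.vertex v + M.edge v i + M.edge v k ∉ M.polytope

variable {M} {v : ω} {i k : ι}

theorem vertex_add_edge_mem_polytope (hk : k ∈ M.facetsAt v) :
    M.vertex v + M.edge v k ∈ M.polytope :=
  height_vertex_add_edge_nonneg hk

theorem add_smul_mem_polytope {p d : E} {s t : ℝ} (hp : p ∈ M.polytope)
    (hq : p + t • d ∈ M.polytope) (hs : 0 ≤ s) (hst : s ≤ t) : p + s • d ∈ M.polytope := by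
  rcases (hs.trans hst).eq_or_lt with ht | ht
  · rwa [show s = t by linarith]
  have h := M.convex_polytope.add_smul_mem hp hq
    ⟨div_nonneg hs ht.le, (div_le_one ht).2 hst⟩
  rwa [smul_smul, div_mul_cancel₀ _ ht.ne'] at h

theorem vertex_neighbor_add_edge (hi : i ∈ M.facetsAt v) (hk : k ∈ M.facetsAt v) (hki : k ≠ i) :
    M.vertex (M.neighbor v i) + M.edge (M.neighbor v i) k = M.vertex v + M.edge v k +
      (M.edgeLength v i + M.slope (M.entering v i) (M.edge v k)) • M.edge v i := by
  rw [M.vertex_neighbor v i hi, edge_neighbor_of_ne hi hk hki]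
  module

theorem vertex_add_edge_add_smul_mem_polytope (hi : i ∈ M.facetsAt v) (hk : k ∈ M.facetsAt v)
    (hki : k ≠ i) {s : ℝ} (hs : 0 ≤ s)
    (hle : s ≤ M.edgeLength v i + M.slope (M.entering v i) (M.edge v k)) :
    M.vertex v + M.edge v k + s • M.edge v i ∈ M.polytope := by
  have hk' : k ∈ M.facetsAt (M.neighbor v i) :=
    erase_subset_facetsAt_neighbor hi (mem_erase.2 ⟨hki, hk⟩)
  refine add_smul_mem_polytope (vertex_add_edge_mem_polytope hk) ?_ hs hle
  rw [← vertex_neighbor_add_edge hi hk hki]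
  exact vertex_add_edge_mem_polytope hk'

namespace Conflict

theorem symm (h : M.Conflict v i k) : M.Conflict v k i :=
  ⟨h.2.1, h.1, by rw [add_right_comm]; exact h.2.2⟩

theorem slope_entering_edge_of_ne (h : M.Conflict v i k) (hki : k ≠ i) :
    M.slope (M.entering v i) (M.edge v k) = -M.edgeLength v i := by
  obtain ⟨hi, hk, hmem⟩ := h
  have hlt : M.edgeLength v i + M.slope (M.entering v i) (M.edge v k) < 1 := by
    by_contra! hle
    have hsum := vertex_add_edge_add_smul_mem_polytope hi hk hki zero_le_one hle
    rw [one_smul, add_right_comm] at hsum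
    exact hmem hsum
  have hge := vertex_add_edge_mem_polytope hk (M.entering v i)
  rw [M.height_add, height_entering_vertex hi] at hge
  obtain ⟨a, ha⟩ := exists_int_edgeLength hi
  obtain ⟨b, hb⟩ := M.exists_int_linear_height_edge v k (M.entering v i) hk
  rw [← slope] at hb
  rw [ha, hb] at hlt hge ⊢
  norm_cast at hlt hge ⊢
  lia

theorem edgeLength_eq_one (h : M.Conflict v i k) : M.edgeLength v k = 1 := by
  obtain ⟨hi, hk, hmem⟩ := h
  have hlen := M.one_le_edgeLength v k hk
  rcases eq_or_ne k i with rfl | hki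
  · by_contra hne
    have htwo : 2 ≤ M.edgeLength v k := by
      obtain ⟨a, ha⟩ := exists_int_edgeLength hk
      rw [ha] at hlen hne ⊢
      norm_cast at hlen hne ⊢
      lia
    refine hmem ?_
    rw [add_assoc, ← two_smul ℝ]
    refine add_smul_mem_polytope (M.vertex_mem_polytope v) ?_ zero_le_two htwo
    rw [← M.vertex_neighbor v k hk]
    exact M.vertex_mem_polytope _
  · have hnonneg := M.height_vertex_nonneg (M.neighbor v k) (M.entering v i)
    rw [M.vertex_neighbor v k hk, M.height_add, map_smul, height_entering_vertex hi,
      slope_entering_edge_of_ne ⟨hi, hk, hmem⟩ hki, smul_eq_mul] at hnonneg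
    have hleni := M.one_le_edgeLength v i hi
    nlinarith

theorem slope_entering_edge (h : M.Conflict v i k) :
    M.slope (M.entering v i) (M.edge v k) = -1 := by
  rcases eq_or_ne k i with rfl | hki
  · exact SmoothPresentation.slope_entering_edge h.1
  · rw [h.slope_entering_edge_of_ne hki, h.symm.edgeLength_eq_one]

theorem height_entering_vertex (h : M.Conflict v i k) :
    M.height (M.entering v i) (M.vertex v) = 1 := by
  rw [SmoothPresentation.height_entering_vertex h.1, h.symm.edgeLength_eq_one]

theorem entering_eq (h : M.Conflict v i k) : M.entering v i = M.entering v k := by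
  have hmem : M.entering v i ∈ M.facetsAt (M.neighbor v k) := by
    rw [M.mem_facetsAt_iff, M.vertex_neighbor v k h.2.1, M.height_add, map_smul,
      h.height_entering_vertex, h.slope_entering_edge, h.edgeLength_eq_one]
    norm_num
  rw [facetsAt_neighbor h.2.1] at hmem
  exact (mem_insert.1 hmem).resolve_right fun hv =>
    entering_notMem_facetsAt h.1 (mem_of_mem_erase hv)

theorem of_slope_eq {g : ι} (hg : M.height g (M.vertex v) = 1) (hi : i ∈ M.facetsAt v)
    (hk : k ∈ M.facetsAt v) (hgi : M.slope g (M.edge v i) = -1)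
    (hgk : M.slope g (M.edge v k) = -1) : M.Conflict v i k := by
  refine ⟨hi, hk, fun h => ?_⟩
  have hnonneg := h g
  rw [M.height_add, M.height_add, hg, hgi, hgk] at hnonneg
  norm_num at hnonneg

theorem trans {j : ι} (hij : M.Conflict v i j) (hjk : M.Conflict v j k) : M.Conflict v i k :=
  of_slope_eq hjk.height_entering_vertex hij.1 hjk.2.1 hij.symm.slope_entering_edge
    hjk.slope_entering_edge

end Conflict

instance : Std.Symm (M.Conflict v) := ⟨fun _ _ => Conflict.symm⟩

instance : IsTrans ι (M.Conflict v) := ⟨fun _ _ _ => Conflict.trans⟩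

end SmoothPresentation

end Conflict

section ConflictClass

open Finset

namespace SmoothPresentation

variable {n : ℕ} {ι ω E : Type*} [Fintype ι] [DecidableEq ι] [Fintype ω]
  [AddCommGroup E] [Module ℝ E] {M : SmoothPresentation n ι ω E} {v : ω}

theorem mixedDegree_map_add_pos {I K : Finset ι} (hIK : Disjoint I K) {a : ι → ι → ℝ} {p : ι → E}
    (ha : ∀ k ∈ K, M.IsNef (a k)) (hp : ∀ k ∈ K, ∀ l ∈ I ∪ K, l ≠ k → M.height l (p k) = a k l)
    (hge : ∀ k ∈ K, ∀ l, a k l ≤ M.height l (p k)) (hlt : ∀ k ∈ K, a k k < M.height k (p k))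
    {J : Multiset (ι → ℝ)} (hJ : ∀ b ∈ J, M.IsNef b) (hcard : #K + J.card + #I = n)
    (hpos : 0 < M.mixedDegree (I ∪ K) J) : 0 < M.mixedDegree I (K.val.map a + J) := by
  induction K using Finset.induction_on generalizing I with
  | empty => simpa using hpos
  | insert k K hk ih =>
    obtain ⟨hkI, hIK⟩ := disjoint_insert_right.1 hIK
    rw [union_insert, ← insert_union] at hp hpos
    rw [card_insert_of_notMem hk] at hcard
    rw [insert_val_of_notMem hk, Multiset.map_cons, Multiset.cons_add]
    have hk_mem := mem_insert_self k K
    refine mixedDegree_cons_pos (p := p k) (k := k) (fun l hl => ?_) (hge k hk_mem) hkI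
      (hlt k hk_mem) (fun b hb => ?_) ?_ (ih (disjoint_insert_left.2 ⟨hk, hIK⟩)
        (fun j hj => ha j (mem_insert_of_mem hj))
        (fun j hj => hp j (mem_insert_of_mem hj)) (fun j hj => hge j (mem_insert_of_mem hj))
        (fun j hj => hlt j (mem_insert_of_mem hj)) ?_ hpos)
    · exact hp k hk_mem l (mem_union_left _ (mem_insert_of_mem hl)) (ne_of_mem_of_not_mem hl hkI)
    · rcases Multiset.mem_add.1 hb with hb | hb
      · obtain ⟨j, hj, rfl⟩ := Multiset.mem_map.1 hb
        exact ha j (mem_insert_of_mem hj)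
      · exact hJ b hb
    · rw [Multiset.card_add, Multiset.card_map, card_val]
      lia
    · rw [card_insert_of_notMem hkI]
      lia

theorem slope_edge_eq_single {i l : ι} (hi : i ∈ M.facetsAt v) (hl : l ∈ M.facetsAt v) :
    M.slope l (M.edge v i) = Pi.single (M := fun _ => ℝ) i 1 l := by
  rw [slope_edge hi hl, Pi.single_apply]

theorem mixedDegree_pos_of_not_conflict {K : Finset ι} (hK : K ⊆ M.facetsAt v) {f : ι → ι}
    (hf : Set.InjOn f K) (hfK : ∀ k ∈ K, f k ∈ K ∧ ¬M.Conflict v k (f k)) :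
    0 < M.mixedDegree (M.facetsAt v \ K) (K.val.map fun k => Pi.single k 1) := by
  have hv : M.facetsAt v \ K ∪ K = M.facetsAt v := sdiff_union_of_subset hK
  have himage : K.image f = K :=
    eq_of_subset_of_card_le (image_subset_iff.2 fun k hk => (hfK k hk).1)
      (card_image_of_injOn hf).ge
  have hmap : (K.val.map fun k => Pi.single k 1 : Multiset (ι → ℝ)) =
      K.val.map fun k => Pi.single (f k) 1 := by
    conv_lhs => rw [← himage, image_val_of_injOn hf, Multiset.map_map]
    rfl
  have hheight : ∀ k ∈ K, ∀ l ∈ M.facetsAt v,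
      M.height l (M.vertex v + M.edge v k + M.edge v (f k)) =
        Pi.single (M := fun _ => ℝ) k 1 l + Pi.single (M := fun _ => ℝ) (f k) 1 l :=
    fun k hk l hl => by
      rw [M.height_add, height_vertex_add hl, slope_edge_eq_single (hK hk) hl,
        slope_edge_eq_single (hK (hfK k hk).1) hl]
  have hsingle : ∀ i l : ι, 0 ≤ Pi.single (M := fun _ => ℝ) i 1 l := fun i =>
    (Pi.single_nonneg (α := fun _ => ℝ)).2 zero_le_one
  rw [hmap, ← add_zero (Multiset.map _ _)]
  refine mixedDegree_map_add_pos sdiff_disjoint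
    (p := fun k => M.vertex v + M.edge v k + M.edge v (f k))
    (fun k _ => isNef_single (f k)) (fun k hk l hl hlk => ?_)
    (fun k hk l => ?_) (fun k hk => ?_) (by simp) ?_
    (by rw [hv, mixedDegree_facetsAt]; exact one_pos)
  · rw [hheight k hk l (hv ▸ hl), Pi.single_eq_of_ne hlk, zero_add]
  · by_cases hl : l ∈ M.facetsAt v
    · rw [hheight k hk l hl]
      exact le_add_of_nonneg_left (hsingle k l)
    · rw [Pi.single_eq_of_ne (ne_of_mem_of_not_mem (hK (hfK k hk).1) hl).symm]
      exact not_not.1 (fun h => (hfK k hk).2 ⟨hK hk, hK (hfK k hk).1, h⟩) l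
  · rw [hheight k hk k (hK hk), Pi.single_eq_same]
    exact lt_add_of_pos_left _ one_pos
  · rw [Multiset.card_zero, add_zero, add_comm, card_sdiff_add_card_eq_card hK, M.card_facetsAt]

theorem vertexDegree_pos_of_mixedDegree_pos {K : Finset ι} (hK : K ⊆ M.facetsAt v) {j : ι}
    (hj : j ∈ K) (hloop : ∀ i ∈ M.facetsAt v \ K,
      M.vertex v + M.edge v j + (2 : ℝ) • M.edge v i ∈ M.polytope)
    (hpos : 0 < M.mixedDegree (M.facetsAt v \ K) (K.val.map fun k => Pi.single k 1)) :
    0 < M.vertexDegree v ∅ := by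
  have hheight : ∀ i ∈ M.facetsAt v \ K, ∀ l ∈ M.facetsAt v,
      M.height l (M.vertex v + M.edge v j + (2 : ℝ) • M.edge v i) =
        Pi.single (M := fun _ => ℝ) j 1 l + 2 * Pi.single (M := fun _ => ℝ) i 1 l :=
    fun i hi l hl => by
      rw [M.height_add, height_vertex_add hl, map_smul, slope_edge_eq_single (hK hj) hl,
        slope_edge_eq_single (sdiff_subset hi) hl, smul_eq_mul]
  have hsingle : ∀ i l : ι, 0 ≤ Pi.single (M := fun _ => ℝ) i 1 l := fun i =>
    (Pi.single_nonneg (α := fun _ => ℝ)).2 zero_le_one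
  rw [vertexDegree, sdiff_empty, ← sdiff_union_of_subset hK,
    ← disjUnion_eq_union _ _ sdiff_disjoint, disjUnion_val, Multiset.map_add]
  refine mixedDegree_map_add_pos (disjoint_empty_left _)
    (p := fun i => M.vertex v + M.edge v j + (2 : ℝ) • M.edge v i)
    (fun i _ => isNef_single i) (fun i hi l hl hli => ?_)
    (fun i hi l => ?_) (fun i hi => ?_) (fun a ha => ?_) ?_ (by rwa [empty_union])
  · rw [empty_union] at hl
    rw [hheight i hi l (sdiff_subset hl), Pi.single_eq_of_ne hli, Pi.single_eq_of_ne
      (ne_of_mem_of_not_mem hj (mem_sdiff.1 hl).2).symm, mul_zero, add_zero]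
  · by_cases hl : l ∈ M.facetsAt v
    · rw [hheight i hi l hl]
      linarith [hsingle i l, hsingle j l]
    · rw [Pi.single_eq_of_ne (ne_of_mem_of_not_mem (sdiff_subset hi) hl).symm]
      exact hloop i hi l
  · rw [hheight i hi i (sdiff_subset hi), Pi.single_eq_same]
    linarith [hsingle j i]
  · obtain ⟨k, -, rfl⟩ := Multiset.mem_map.1 ha
    exact isNef_single k
  · rw [Multiset.card_map, card_val, card_empty, add_zero, card_sdiff_add_card_eq_card hK,
      M.card_facetsAt]

open scoped Classical in
theorem exists_card_not_conflict_lt (h : M.vertexDegree v ∅ = 0) : ∃ k ∈ M.facetsAt v,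
    #{l ∈ M.facetsAt v | ¬M.Conflict v k l} < #{l ∈ M.facetsAt v | M.Conflict v k l} := by
  by_contra! hle
  obtain ⟨f, hf, hfv⟩ := exists_injOn_forall_not_rel hle
  have hpos := mixedDegree_pos_of_not_conflict Subset.rfl hf hfv
  rw [sdiff_self] at hpos
  rw [vertexDegree, sdiff_empty] at h
  exact hpos.ne' h

theorem slope_entering_edge_nonneg {i j k : ι} (hki : M.Conflict v k i) (hj : j ∈ M.facetsAt v)
    (hkj : ¬M.Conflict v k j) : 0 ≤ M.slope (M.entering v k) (M.edge v j) := by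
  have hheight := hki.height_entering_vertex
  have hne : M.slope (M.entering v k) (M.edge v j) ≠ -1 := fun h =>
    hkj (.of_slope_eq hheight hki.1 hj (slope_entering_edge hki.1) h)
  have hge := height_vertex_add_edge_nonneg hj (M.entering v k)
  rw [M.height_add, hheight] at hge
  obtain ⟨z, hz⟩ := M.exists_int_linear_height_edge v j (M.entering v k) hj
  rw [← slope] at hz
  rw [hz] at hne hge ⊢
  norm_cast at hne hge ⊢
  lia

open scoped Classical in
theorem slope_entering_edge_eq_zero {j k : ι} (h : M.vertexDegree v ∅ = 0)
    (hcard : #{l ∈ M.facetsAt v | ¬M.Conflict v k l} < #{l ∈ M.facetsAt v | M.Conflict v k l})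
    (hj : j ∈ M.facetsAt v) (hkj : ¬M.Conflict v k j) :
    M.slope (M.entering v k) (M.edge v j) = 0 := by
  obtain ⟨C, hC, hCcard⟩ := exists_subset_card_eq hcard.le
  have hCv : ∀ c ∈ C, c ∈ M.facetsAt v ∧ M.Conflict v k c := fun c hc => mem_filter.1 (hC hc)
  let K : Finset ι := {l ∈ M.facetsAt v | ¬M.Conflict v k l} ∪ C
  have hKv : K ⊆ M.facetsAt v := union_subset (filter_subset _ _) fun c hc => (hCv c hc).1
  have hconflict : ∀ i ∈ M.facetsAt v \ K, M.Conflict v k i := fun i hi => by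
    obtain ⟨hiv, hiK⟩ := mem_sdiff.1 hi
    exact not_not.1 fun hki => hiK (mem_union_left _ (mem_filter.2 ⟨hiv, hki⟩))
  obtain ⟨f, hf, hfK⟩ := exists_injOn_forall_not_rel (card_filter_rel_le (r := M.Conflict v)
    (fun b hb => (mem_filter.1 hb).2) (fun c hc => (hCv c hc).2) hCcard.symm)
  obtain ⟨i, hi⟩ := card_pos.1 (Nat.zero_lt_of_lt hcard)
  have hnonneg := slope_entering_edge_nonneg (mem_filter.1 hi).2 hj hkj
  obtain ⟨z, hz⟩ := M.exists_int_linear_height_edge v j (M.entering v k) hj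
  rw [← slope] at hz
  by_contra hne
  have hone : 1 ≤ M.slope (M.entering v k) (M.edge v j) := by
    rw [hz] at hne hnonneg ⊢
    norm_cast at hne hnonneg ⊢
    lia
  refine (vertexDegree_pos_of_mixedDegree_pos hKv (mem_union_left C (mem_filter.2 ⟨hj, hkj⟩))
    (fun i hi => ?_) (mixedDegree_pos_of_not_conflict hKv hf hfK)).ne' h
  have hki := hconflict i hi
  refine vertex_add_edge_add_smul_mem_polytope hki.2.1 hj
    (fun hji => hkj (hji ▸ hki)) zero_le_two ?_
  rw [hki.edgeLength_eq_one, ← hki.entering_eq]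
  linarith

theorem exists_isBarycentric_of_vertexDegree_eq_zero (h : M.vertexDegree v ∅ = 0) :
    ∃ C, M.IsBarycentric C ∧ n + 2 < 2 * #C := by
  classical
  obtain ⟨k, hk, hcard⟩ := exists_card_not_conflict_lt h
  set C : Finset ι := {l ∈ M.facetsAt v | M.Conflict v k l} with hC
  obtain ⟨i, hi⟩ := card_pos.1 (Nat.zero_lt_of_lt hcard)
  have hg : M.entering v k ∉ C := fun hmem =>
    entering_notMem_facetsAt hk (mem_of_mem_filter _ hmem)
  have hheight : ∀ p, M.height (M.entering v k) p = 1 - ∑ c ∈ C, M.height c p := by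
    intro p
    conv_lhs => rw [← M.vertex_add_sum_height_smul_edge v p]
    rw [M.height_add, (mem_filter.1 hi).2.height_entering_vertex, map_sum, sub_eq_add_neg,
      ← sum_neg_distrib, add_right_inj, hC, sum_filter]
    refine sum_congr rfl fun l hl => ?_
    rw [map_smul, smul_eq_mul]
    split_ifs with hkl
    · rw [hkl.slope_entering_edge, mul_neg_one]
    · rw [slope_entering_edge_eq_zero h hcard hl hkl, mul_zero]
  refine ⟨insert (M.entering v k) C, fun p => ?_, ?_⟩
  · rw [sum_insert hg, hheight, sub_add_cancel]
  · have hsplit := card_filter_add_card_filter_not (s := M.facetsAt v) (M.Conflict v k)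
    rw [M.card_facetsAt] at hsplit
    rw [card_insert_of_notMem hg]
    lia

theorem dualDegree_empty_eq_zero_iff :
    M.dualDegree ∅ = 0 ↔ ∃ C, M.IsBarycentric C ∧ n + 2 < 2 * #C := by
  constructor
  · intro h
    obtain ⟨v⟩ := M.nonempty
    exact exists_isBarycentric_of_vertexDegree_eq_zero (vertexDegree_empty_eq_zero h v)
  · rintro ⟨C, hC, h⟩
    exact hC.dualDegree_eq_zero (by simpa using h)

end SmoothPresentation

end ConflictClass

section ConvexHull

open Set

variable {E : Type*} [AddCommGroup E] [Module ℝ E]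

theorem isExtreme_setOf_eq {A : Set E} {u : E →ₗ[ℝ] ℝ} {c : ℝ} (h : ∀ x ∈ A, c ≤ u x) :
    IsExtreme ℝ A {x ∈ A | u x = c} := by
  refine ⟨sep_subset _ _, ?_⟩
  rintro x hx y hy _ ⟨-, hz⟩ ⟨α, β, hα, hβ, hαβ, rfl⟩
  rw [map_add, map_smul, map_smul, smul_eq_mul, smul_eq_mul] at hz
  refine ⟨hx, le_antisymm ?_ (h x hx)⟩
  by_contra! hlt
  have hαx := mul_lt_mul_of_pos_left hlt hα
  have hβy := mul_le_mul_of_nonneg_left (h y hy) hβ.le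
  refine (add_lt_add_of_lt_of_le hαx hβy).ne ?_
  rw [hz, ← add_mul, hαβ, one_mul]

theorem sep_convexHull_eq {S : Set E} {u : E →ₗ[ℝ] ℝ} {c : ℝ} (h : ∀ s ∈ S, c ≤ u s) :
    {x ∈ convexHull ℝ S | u x = c} = convexHull ℝ {s ∈ S | u s = c} := by
  have hc : ∀ x ∈ convexHull ℝ S, c ≤ u x :=
    convexHull_min h (convex_halfSpace_ge u.isLinear c)
  refine Subset.antisymm ?_ (subset_inter (convexHull_mono (sep_subset _ _))
    (convexHull_min (fun s hs => hs.2) (convex_hyperplane u.isLinear c)))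
  have hconvex : Convex ℝ {x ∈ convexHull ℝ S | u x = c → x ∈ convexHull ℝ {s ∈ S | u s = c}} := by
    refine convex_iff_openSegment_subset.2 fun x hx y hy z hz =>
      ⟨(convex_convexHull ℝ S).openSegment_subset hx.1 hy.1 hz, fun hzc => ?_⟩
    have hzF : z ∈ {x ∈ convexHull ℝ S | u x = c} :=
      ⟨(convex_convexHull ℝ S).openSegment_subset hx.1 hy.1 hz, hzc⟩
    have hext := isExtreme_setOf_eq hc
    exact (convex_convexHull ℝ _).openSegment_subset
      (hx.2 (hext.left_mem_of_mem_openSegment hx.1 hy.1 hzF hz).2)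
      (hy.2 (hext.left_mem_of_mem_openSegment hy.1 hx.1 hzF (openSegment_symm ℝ x y ▸ hz)).2) hz
  have hsub : S ⊆ {x ∈ convexHull ℝ S | u x = c → x ∈ convexHull ℝ {s ∈ S | u s = c}} :=
    fun s hs => ⟨subset_convexHull ℝ S hs, fun hsc => subset_convexHull ℝ _ ⟨hs, hsc⟩⟩
  exact fun x hx => (convexHull_min hsub hconvex hx.1).2 hx.2

theorem right_mem_extremePoints_segment (a b : E) : b ∈ (segment ℝ a b).extremePoints ℝ := by
  rcases eq_or_ne a b with rfl | hab
  · rw [segment_same, extremePoints_singleton]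
    exact mem_singleton a
  refine ⟨right_mem_segment ℝ a b, ?_⟩
  rw [segment_eq_image_lineMap]
  rintro _ ⟨θ, hθ, rfl⟩ _ ⟨η, hη, rfl⟩ hb
  rw [← image_openSegment] at hb
  obtain ⟨τ, hτ, hτb⟩ := hb
  obtain rfl : τ = 1 :=
    AffineMap.lineMap_injective ℝ hab (hτb.trans (AffineMap.lineMap_apply_one a b).symm)
  have hone : (1 : ℝ) ∈ (Icc (0 : ℝ) 1).extremePoints ℝ := by
    rw [extremePoints_Icc zero_le_one]
    exact mem_insert_of_mem 0 (mem_singleton 1)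
  rw [hone.2 hθ hη hτ, AffineMap.lineMap_apply_one]

variable [TopologicalSpace E] [T2Space E] [IsTopologicalAddGroup E] [ContinuousSMul ℝ E]
  [LocallyConvexSpace ℝ E]

theorem exists_forall_lt_of_mem_extremePoints_convexHull {S : Set E} (hS : S.Finite) {v : E}
    (hv : v ∈ (convexHull ℝ S).extremePoints ℝ) :
    ∃ f : E →ₗ[ℝ] ℝ, ∀ s ∈ S, s ≠ v → f v < f s := by
  have hvS : v ∉ convexHull ℝ (S \ {v}) := fun h =>
    ((convex_convexHull ℝ S).mem_extremePoints_iff_mem_sdiff_convexHull_sdiff.1 hv).2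
      (convexHull_mono (sdiff_subset_sdiff_left (subset_convexHull ℝ S)) h)
  obtain ⟨f, u, hu, hf⟩ := geometric_hahn_banach_point_closed (convex_convexHull ℝ _)
    (hS.sdiff.isClosed_convexHull (𝕜 := ℝ)) hvS
  exact ⟨f, fun s hs hsv => hu.trans (hf s (subset_convexHull ℝ _ ⟨hs, hsv⟩))⟩

theorem convexHull_extremePoints_convexHull {S : Set E} (hS : S.Finite) :
    convexHull ℝ ((convexHull ℝ S).extremePoints ℝ) = convexHull ℝ S := by
  have hclosed : IsClosed (convexHull ℝ ((convexHull ℝ S).extremePoints ℝ)) :=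
    (hS.subset extremePoints_convexHull_subset).isClosed_convexHull (𝕜 := ℝ)
  rw [← hclosed.closure_eq]
  exact closure_convexHull_extremePoints (hS.isCompact_convexHull (𝕜 := ℝ)) (convex_convexHull ℝ S)

namespace SmoothPresentation

variable {n : ℕ} {ι ω : Type*} [Fintype ι] [DecidableEq ι] [Fintype ω]
  (M : SmoothPresentation n ι ω E)

theorem convexHull_range_vertex : convexHull ℝ (range M.vertex) = M.polytope := by
  refine Subset.antisymm (convexHull_min (range_subset_iff.2 M.vertex_mem_polytope)
    M.convex_polytope) fun x hx => ?_
  by_contra hxV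
  obtain ⟨f, u, hu, hf⟩ := geometric_hahn_banach_point_closed (convex_convexHull ℝ _)
    ((finite_range M.vertex).isClosed_convexHull (𝕜 := ℝ)) hxV
  have := M.nonempty
  obtain ⟨w, hw⟩ := Finite.exists_min fun w => f (M.vertex w)
  have hedge : ∀ k ∈ M.facetsAt w, 0 ≤ f (M.edge w k) := fun k hk => by
    have hle := hw (M.neighbor w k)
    rw [M.vertex_neighbor w k hk, map_add, map_smul, le_add_iff_nonneg_right] at hle
    exact nonneg_of_mul_nonneg_right hle (one_pos.trans_le (M.one_le_edgeLength w k hk))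
  refine (hu.trans (hf _ (subset_convexHull ℝ _ (mem_range_self w)))).not_ge ?_
  rw [← M.vertex_add_sum_height_smul_edge w x, map_add, map_sum]
  exact le_add_of_nonneg_right (Finset.sum_nonneg fun k hk => by
    rw [map_smul]
    exact mul_nonneg (hx k) (hedge k hk))

end SmoothPresentation

end ConvexHull

section VertexFrame

open Set

variable {n : ℕ} {P S : Set (Fin n → ℝ)} {v w : Fin n → ℝ}

/-- The lattice `ℤ^n` as a subgroup of `ℝ^n`, so that subgroup lemmas apply to `IsLatticePt`. -/
def latticePts (n : ℕ) : AddSubgroup (Fin n → ℝ) where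
  carrier := {x | IsLatticePt x}
  zero_mem' _ := ⟨0, Int.cast_zero.symm⟩
  add_mem' hx hy i := by
    obtain ⟨a, ha⟩ := hx i
    obtain ⟨b, hb⟩ := hy i
    exact ⟨a + b, by rw [Pi.add_apply, ha, hb, Int.cast_add]⟩
  neg_mem' hx i := by
    obtain ⟨a, ha⟩ := hx i
    exact ⟨-a, by rw [Pi.neg_apply, ha, Int.cast_neg]⟩

theorem mem_latticePts {x : Fin n → ℝ} : x ∈ latticePts n ↔ IsLatticePt x := Iff.rfl

theorem IsLatticePt.sub {x y : Fin n → ℝ} (hx : IsLatticePt x) (hy : IsLatticePt y) :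
    IsLatticePt (x - y) :=
  mem_latticePts.1 (sub_mem hx hy)

theorem IsLatticePolytope.isLatticePt_of_mem_extremePoints (hP : IsLatticePolytope P)
    (hv : v ∈ P.extremePoints ℝ) : IsLatticePt v := by
  obtain ⟨V, hV, rfl⟩ := hP
  exact hV v (extremePoints_convexHull_subset hv)

theorem vectorSpan_eq_top (hfull : affineSpan ℝ P = ⊤) : vectorSpan ℝ P = ⊤ := by
  rw [← direction_affineSpan, hfull, AffineSubspace.direction_top]

theorem IsFace.isExtreme {F : Set (Fin n → ℝ)} (hF : IsFace P F) : IsExtreme ℝ P F := by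
  obtain ⟨-, u, c, hu, rfl⟩ := hF
  exact isExtreme_setOf_eq hu

/-- The directions from `v` to the other points of `S`, rescaled to have height one with respect
to `g`. If `g` is smallest at `v`, this spans the vertex figure of `convexHull ℝ S` at `v`. -/
def figurePts (g : (Fin n → ℝ) →ₗ[ℝ] ℝ) (S : Set (Fin n → ℝ)) (v : Fin n → ℝ) :
    Set (Fin n → ℝ) :=
  (fun s => (g s - g v)⁻¹ • (s - v)) '' (S \ {v})

theorem finite_figurePts (hS : S.Finite) (g : (Fin n → ℝ) →ₗ[ℝ] ℝ) (v : Fin n → ℝ) :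
    (figurePts g S v).Finite :=
  hS.sdiff.image _

theorem isFace_and_fdim_eq_one {u : (Fin n → ℝ) →ₗ[ℝ] ℝ} {s : Fin n → ℝ} (hv : v ∈ S)
    (hs : s ∈ S) (hsv : s ≠ v) (hle : ∀ p ∈ S, u v ≤ u p) (hus : u s = u v)
    (hspan : ∀ p ∈ S, u p = u v → p - v ∈ Submodule.span ℝ {s - v}) :
    IsFace (convexHull ℝ S) {x ∈ convexHull ℝ S | u x = u v} ∧
      fdim {x ∈ convexHull ℝ S | u x = u v} = 1 := by
  refine ⟨⟨⟨v, subset_convexHull ℝ S hv, rfl⟩, u, u v,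
    convexHull_min hle (convex_halfSpace_ge u.isLinear _), rfl⟩, ?_⟩
  have hvectorSpan : vectorSpan ℝ {p ∈ S | u p = u v} = Submodule.span ℝ {s - v} := by
    rw [vectorSpan_eq_span_vsub_set_right ℝ (show v ∈ {p ∈ S | u p = u v} from ⟨hv, rfl⟩)]
    refine le_antisymm (Submodule.span_le.2 ?_) (Submodule.span_mono ?_)
    · rintro _ ⟨p, ⟨hp, hpv⟩, rfl⟩
      exact hspan p hp hpv
    · exact singleton_subset_iff.2 ⟨s, ⟨hs, hus⟩, rfl⟩
  rw [fdim, sep_convexHull_eq hle, ← direction_affineSpan, affineSpan_convexHull,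
    direction_affineSpan, hvectorSpan, finrank_span_singleton (sub_ne_zero.2 hsv)]

theorem exists_isFace_of_mem_extremePoints_figurePts {g : (Fin n → ℝ) →ₗ[ℝ] ℝ}
    (hS : S.Finite) (hv : v ∈ S) (hg : ∀ s ∈ S, s ≠ v → g v < g s) {t : Fin n → ℝ}
    (ht : t ∈ (convexHull ℝ (figurePts g S v)).extremePoints ℝ) :
    ∃ F, (IsFace (convexHull ℝ S) F ∧ v ∈ F ∧ fdim F = 1) ∧ ∃ r : ℝ, 0 < r ∧ v + r • t ∈ F := by
  obtain ⟨f, hf⟩ := exists_forall_lt_of_mem_extremePoints_convexHull (finite_figurePts hS g v) ht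
  obtain ⟨s, ⟨hs, hsv⟩, hst⟩ := extremePoints_convexHull_subset ht
  dsimp only at hst
  have hpos : ∀ p ∈ S, p ≠ v → 0 < g p - g v := fun p hp hpv => sub_pos.2 (hg p hp hpv)
  have hsub : ∀ p ∈ S, p ≠ v → p - v = (g p - g v) • (g p - g v)⁻¹ • (p - v) := fun p hp hpv =>
    (smul_inv_smul₀ (hpos p hp hpv).ne' _).symm
  have htspan : t ∈ Submodule.span ℝ {s - v} :=
    hst ▸ Submodule.smul_mem _ _ (Submodule.mem_span_singleton_self _)
  -- `u` compares `f` with its value `f t` on the rays through the figure points.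
  let u : (Fin n → ℝ) →ₗ[ℝ] ℝ := f - f t • g
  have hu : ∀ p ∈ S, p ≠ v →
      u p - u v = (g p - g v) * (f ((g p - g v)⁻¹ • (p - v)) - f t) := fun p hp hpv => by
    rw [mul_sub, ← smul_eq_mul, ← map_smul, ← hsub p hp hpv]
    simp only [u, LinearMap.sub_apply, LinearMap.smul_apply, map_sub, smul_eq_mul]
    ring
  have hcases : ∀ p ∈ S, u v < u p ∨ u p = u v ∧ p - v ∈ Submodule.span ℝ {s - v} :=
      fun p hp => by
    by_cases hpv : p = v
    · exact .inr ⟨hpv ▸ rfl, by rw [hpv, sub_self]; exact zero_mem _⟩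
    by_cases hpt : (g p - g v)⁻¹ • (p - v) = t
    · refine .inr ⟨sub_eq_zero.1 (by rw [hu p hp hpv, hpt, sub_self, mul_zero]), ?_⟩
      rw [hsub p hp hpv, hpt]
      exact Submodule.smul_mem _ _ htspan
    · refine .inl (sub_pos.1 ?_)
      rw [hu p hp hpv]
      exact mul_pos (hpos p hp hpv) (sub_pos.2 (hf _ ⟨p, ⟨hp, hpv⟩, rfl⟩ hpt))
  have hus : u s = u v := sub_eq_zero.1 (by rw [hu s hs hsv, hst, sub_self, mul_zero])
  obtain ⟨hface, hdim⟩ := isFace_and_fdim_eq_one hv hs hsv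
    (fun p hp => (hcases p hp).elim le_of_lt fun h => h.1.ge) hus
    (fun p hp hpv => ((hcases p hp).resolve_left hpv.not_gt).2)
  refine ⟨_, ⟨hface, ⟨subset_convexHull ℝ S hv, rfl⟩, hdim⟩, g s - g v, hpos s hs hsv, ?_⟩
  rw [← hst, ← hsub s hs hsv, add_sub_cancel]
  exact ⟨subset_convexHull ℝ S hs, hus⟩

/-- A lattice basis along the edges of `P` at its vertex `v`, together with the lattice lengths of
these edges. -/
structure VertexFrame (P : Set (Fin n → ℝ)) (v : Fin n → ℝ) where
  basis : Module.Basis (Fin n) ℝ (Fin n → ℝ)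
  length : Fin n → ℝ
  mem_extremePoints : v ∈ P.extremePoints ℝ
  length_pos : ∀ i, 0 < length i
  isLatticePt_basis : ∀ i, IsLatticePt (basis i)
  exists_int_coord : ∀ x, IsLatticePt x → ∀ i, ∃ z : ℤ, basis.coord i x = z
  isFace_iff : ∀ F, (IsFace P F ∧ v ∈ F ∧ fdim F = 1) ↔
    ∃ i, F = segment ℝ v (v + length i • basis i)

theorem IsSmoothPoly.nonempty_vertexFrame (hsm : IsSmoothPoly P) (hfull : affineSpan ℝ P = ⊤)
    (hv : v ∈ P.extremePoints ℝ) : Nonempty (VertexFrame P v) := by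
  have hspan := vectorSpan_eq_top hfull
  have hdim : fdim P = n := by rw [fdim, hspan, finrank_top, Module.finrank_fin_fun]
  have hframe := hsm v hv
  rw [hdim] at hframe
  obtain ⟨a, c, hc, -, hli, -, h_int, hF⟩ := hframe
  let b := Module.Basis.mk hli (hli.span_eq_top_of_card_eq_finrank' (by simp)).ge
  have hb : ∀ i, b i = fun j => (a i j : ℝ) := Module.Basis.mk_apply hli _
  refine ⟨b, c, hv, hc, fun i j => ⟨a i j, congrFun (hb i) j⟩, fun x hx i => ?_, fun F => ?_⟩
  · choose z hz using hx
    obtain ⟨m, hm⟩ := h_int z (hspan ▸ Submodule.mem_top)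
    rw [← funext hz] at hm
    simp only [← hb] at hm
    exact ⟨m i, by rw [hm, Module.Basis.coord_apply, b.repr_sum_self]⟩
  · simp only [hb]
    exact hF F

namespace VertexFrame

/-- The affine coordinates of a vertex frame, with origin at the vertex. -/
def coord (D : VertexFrame P v) (i : Fin n) : (Fin n → ℝ) →ᵃ[ℝ] ℝ :=
  (D.basis.coord i).toAffineMap - AffineMap.const ℝ _ (D.basis.coord i v)

variable (D : VertexFrame P v) (D' : VertexFrame P w) {i j : Fin n} {x y : Fin n → ℝ}

theorem coord_apply : D.coord i x = D.basis.coord i (x - v) := by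
  simp [coord]

theorem linear_coord : (D.coord i).linear = D.basis.coord i := by
  ext
  simp [coord]

theorem coord_add : D.coord i (x + y) = D.coord i x + D.basis.coord i y := by
  rw [coord_apply, coord_apply, add_sub_right_comm, map_add]

theorem coord_self : D.coord i v = 0 := by
  rw [coord_apply, sub_self, map_zero]

theorem basis_coord_basis : D.basis.coord i (D.basis j) = if i = j then 1 else 0 := by
  rw [Module.Basis.coord_apply, Module.Basis.repr_self, Finsupp.single_apply]
  simp only [eq_comm]

theorem apply_eq_add_sum (f : (Fin n → ℝ) →ᵃ[ℝ] ℝ) (x : Fin n → ℝ) :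
    f x = f v + ∑ i, D.coord i x * f.linear (D.basis i) := by
  conv_lhs => rw [← sub_add_cancel x v, ← vadd_eq_add, f.map_vadd, vadd_eq_add, add_comm,
    ← D.basis.sum_repr (x - v), map_sum]
  simp [coord_apply]

/-- The other endpoint of an edge. -/
def tip (i : Fin n) : Fin n → ℝ := v + D.length i • D.basis i

theorem coord_tip : D.coord i (D.tip j) = if i = j then D.length i else 0 := by
  rw [tip, coord_add, coord_self, map_smul, basis_coord_basis, zero_add, smul_eq_mul, mul_ite,
    mul_one, mul_zero]
  split_ifs with h
  · rw [h]
  · rfl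

theorem isFace_segment (i : Fin n) : IsFace P (segment ℝ v (D.tip i)) :=
  ((D.isFace_iff _).2 ⟨i, rfl⟩).1

theorem tip_mem_extremePoints : D.tip i ∈ P.extremePoints ℝ :=
  (D.isFace_segment i).isExtreme.extremePoints_subset_extremePoints
    (right_mem_extremePoints_segment v _)

theorem coord_nonneg (hP : IsLatticePolytope P) (hx : x ∈ P) : 0 ≤ D.coord i x := by
  obtain ⟨V, -, rfl⟩ := hP
  have hvV := extremePoints_convexHull_subset D.mem_extremePoints
  obtain ⟨g, hg⟩ :=
    exists_forall_lt_of_mem_extremePoints_convexHull V.finite_toSet D.mem_extremePoints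
  have hextreme : ∀ t ∈ (convexHull ℝ (figurePts g V v)).extremePoints ℝ,
      0 ≤ D.basis.coord i t := fun t ht => by
    obtain ⟨F, hF, r, hr, hrt⟩ :=
      exists_isFace_of_mem_extremePoints_figurePts V.finite_toSet hvV hg ht
    obtain ⟨j, rfl⟩ := (D.isFace_iff F).1 hF
    rw [segment_eq_image'] at hrt
    obtain ⟨θ, hθ, h⟩ := hrt
    rw [add_sub_cancel_left, add_right_inj] at h
    have hcoord := congrArg (D.basis.coord i) h
    rw [map_smul, map_smul, map_smul, basis_coord_basis] at hcoord
    refine nonneg_of_mul_nonneg_right (a := r) (hcoord.le.trans' ?_) hr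
    exact mul_nonneg hθ.1 (mul_nonneg (D.length_pos j).le (by split_ifs <;> norm_num))
  have hfigure : ∀ t ∈ figurePts g V v, 0 ≤ D.basis.coord i t := fun t ht => by
    have hhull := subset_convexHull ℝ _ ht
    rw [← convexHull_extremePoints_convexHull (finite_figurePts V.finite_toSet g v)] at hhull
    exact convexHull_min hextreme (convex_halfSpace_ge (D.basis.coord i).isLinear 0) hhull
  refine convexHull_min (fun s hs => ?_) ((convex_Ici 0).affine_preimage (D.coord i)) hx
  rw [mem_preimage, mem_Ici]
  by_cases hsv : s = v
  · rw [hsv, coord_self]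
  have hpos := sub_pos.2 (hg s hs hsv)
  rw [coord_apply, ← smul_inv_smul₀ hpos.ne' (s - v), map_smul]
  exact mul_nonneg hpos.le (hfigure _ ⟨s, ⟨hs, hsv⟩, rfl⟩)

theorem mem_segment_tip (hx : x ∈ P) (h : ∀ j ≠ i, D.coord j x = 0) :
    x ∈ segment ℝ v (D.tip i) := by
  obtain ⟨-, u, c, -, hu⟩ := D.isFace_segment i
  have hv : u v = c := (hu ▸ left_mem_segment ℝ v (D.tip i) : v ∈ {x ∈ P | u x = c}).2
  have htip : u (D.tip i) = c :=
    (hu ▸ right_mem_segment ℝ v (D.tip i) : D.tip i ∈ {x ∈ P | u x = c}).2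
  have hbasis : u (D.basis i) = 0 := by
    rw [tip, map_add, map_smul, hv, add_eq_left, smul_eq_mul] at htip
    exact (mul_eq_zero.1 htip).resolve_left (D.length_pos i).ne'
  rw [hu]
  refine ⟨hx, ?_⟩
  have hsum := D.apply_eq_add_sum u.toAffineMap x
  rw [Finset.sum_eq_single i (fun j _ hj => by rw [h j hj, zero_mul]) (by simp)] at hsum
  simpa [hbasis, hv] using hsum

theorem eq_or_eq_tip (hx : x ∈ P.extremePoints ℝ) (h : ∀ j ≠ i, D.coord j x = 0) :
    x = v ∨ x = D.tip i :=
  ((mem_extremePoints_iff_forall_segment.1 hx).2 v D.mem_extremePoints.1 _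
    D.tip_mem_extremePoints.1 (D.mem_segment_tip hx.1 h)).imp Eq.symm Eq.symm

theorem one_le_length (hP : IsLatticePolytope P) : 1 ≤ D.length i := by
  obtain ⟨z, hz⟩ := D.exists_int_coord _
    ((hP.isLatticePt_of_mem_extremePoints D.tip_mem_extremePoints).sub
      (hP.isLatticePt_of_mem_extremePoints D.mem_extremePoints)) i
  rw [← coord_apply, coord_tip, if_pos rfl] at hz
  have hpos := D.length_pos i
  rw [hz] at hpos ⊢
  exact_mod_cast hpos

end VertexFrame

end VertexFrame

section Construction

variable {n : ℕ} {P : Set (Fin n → ℝ)} {v w : Fin n → ℝ}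

namespace VertexFrame

variable (D : VertexFrame P v) (D' : VertexFrame P w) {i j : Fin n}

theorem apply_tip (f : (Fin n → ℝ) →ᵃ[ℝ] ℝ) (i : Fin n) :
    f (D.tip i) = f v + D.length i * f.linear (D.basis i) := by
  rw [tip, add_comm v, ← vadd_eq_add, f.map_vadd, map_smul, vadd_eq_add, smul_eq_mul, add_comm]

theorem mem (D : VertexFrame P v) : v ∈ P := D.mem_extremePoints.1

theorem tip_mem (i : Fin n) : D.tip i ∈ P := D.tip_mem_extremePoints.1

theorem length_ne_zero (i : Fin n) : D.length i ≠ 0 := (D.length_pos i).ne'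

theorem coord_tip_self (i : Fin n) : D.coord i (D.tip i) = D.length i := by
  rw [coord_tip, if_pos rfl]

theorem coord_tip_of_ne (h : i ≠ j) : D.coord i (D.tip j) = 0 := by
  rw [coord_tip, if_neg h]

theorem basis_coord_basis_self (i : Fin n) : D.basis.coord i (D.basis i) = 1 := by
  rw [basis_coord_basis, if_pos rfl]

theorem basis_coord_basis_nonneg (hP : IsLatticePolytope P) (h : D.coord j w = 0) (i : Fin n) :
    0 ≤ D.basis.coord j (D'.basis i) := by
  have htip := D.coord_nonneg (i := j) hP (D'.tip_mem i)
  rw [apply_tip, h, zero_add, linear_coord] at htip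
  exact nonneg_of_mul_nonneg_right htip (D'.length_pos i)

theorem exists_forall_coord_eq_zero (hP : IsLatticePolytope P) (h : D.coord j w = 0) :
    ∃ i, ∀ x ∈ P, D.coord j x = 0 → D'.coord i x = 0 := by
  have hsum : ∀ x, D.coord j x = ∑ i, D'.coord i x * D.basis.coord j (D'.basis i) := fun x => by
    rw [D'.apply_eq_add_sum (D.coord j) x, h, zero_add, linear_coord]
  obtain ⟨i, hi⟩ : ∃ i, D.basis.coord j (D'.basis i) ≠ 0 := by
    by_contra! hzero
    refine D.length_ne_zero j ?_
    rw [← coord_tip_self, hsum]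
    exact Finset.sum_eq_zero fun i _ => by rw [hzero, mul_zero]
  refine ⟨i, fun x hx hxj => ?_⟩
  rw [hsum, Finset.sum_eq_zero_iff_of_nonneg fun i _ =>
    mul_nonneg (D'.coord_nonneg hP hx) (D.basis_coord_basis_nonneg D' hP h i)] at hxj
  exact (mul_eq_zero.1 (hxj i (Finset.mem_univ i))).resolve_right hi

theorem exists_coord_eq (hP : IsLatticePolytope P) (h : D.coord j w = 0) :
    ∃ i, D'.coord i = D.coord j := by
  obtain ⟨i, hi⟩ := D.exists_forall_coord_eq_zero D' hP h
  have hv : D'.coord i v = 0 := hi v D.mem D.coord_self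
  have hbasis : ∀ l ≠ j, D'.basis.coord i (D.basis l) = 0 := fun l hl => by
    have htip := hi _ (D.tip_mem l) (D.coord_tip_of_ne hl.symm)
    rw [apply_tip, hv, zero_add, linear_coord] at htip
    exact (mul_eq_zero.1 htip).resolve_left (D.length_ne_zero l)
  have hmul : ∀ x, D'.coord i x = D.coord j x * D'.basis.coord i (D.basis j) := fun x => by
    rw [D.apply_eq_add_sum (D'.coord i) x, hv, zero_add, linear_coord,
      Finset.sum_eq_single j (fun l _ hl => by rw [hbasis l hl, mul_zero]) (by simp)]
  have hunit : 1 = D.basis.coord j (D'.basis i) * D'.basis.coord i (D.basis j) := by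
    have := hmul (w + D'.basis i)
    rwa [coord_add, coord_add, coord_self, h, zero_add, zero_add, basis_coord_basis_self] at this
  have hnonneg := D.basis_coord_basis_nonneg D' hP h i
  obtain ⟨a, ha⟩ := D.exists_int_coord _ (D'.isLatticePt_basis i) j
  obtain ⟨b, hb⟩ := D'.exists_int_coord _ (D.isLatticePt_basis j) i
  rw [ha, hb] at hunit
  rw [ha] at hnonneg
  have ha_one : a = 1 := Int.eq_one_of_mul_eq_one_right (by exact_mod_cast hnonneg)
    (by exact_mod_cast hunit.symm : a * b = 1)
  rw [ha_one, Int.cast_one, one_mul] at hunit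
  refine ⟨i, AffineMap.ext fun x => ?_⟩
  rw [hmul, hb, ← hunit, mul_one]

theorem basis_eq_neg_basis (hP : IsLatticePolytope P) (D' : VertexFrame P (D.tip i))
    (h : ∀ l ≠ j, D'.coord l v = 0) : D'.basis j = -D.basis i := by
  have hcoord : ∀ l, D'.coord l v = -(D.length i * D'.basis.coord l (D.basis i)) := fun l => by
    rw [coord_apply,
      show v - D.tip i = -(D.length i • D.basis i) from sub_add_cancel_left v _, map_neg,
      map_smul, smul_eq_mul]
  have hsmul : D.basis i = D'.basis.coord j (D.basis i) • D'.basis j := by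
    conv_lhs => rw [← D'.basis.sum_repr (D.basis i)]
    refine Finset.sum_eq_single j (fun l _ hl => ?_) (by simp)
    have hl := h l hl
    rw [hcoord, neg_eq_zero] at hl
    exact smul_eq_zero_of_left ((mul_eq_zero.1 hl).resolve_left (D.length_ne_zero i)) _
  have hunit : 1 = D'.basis.coord j (D.basis i) * D.basis.coord i (D'.basis j) := by
    rw [← smul_eq_mul, ← map_smul, ← hsmul, basis_coord_basis_self]
  have hnonneg := D'.coord_nonneg (i := j) hP D.mem
  obtain ⟨a, ha⟩ := D'.exists_int_coord _ (D.isLatticePt_basis i) j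
  obtain ⟨b, hb⟩ := D.exists_int_coord _ (D'.isLatticePt_basis j) i
  rw [hcoord, ha, ← mul_neg] at hnonneg
  have ha_nonpos : a ≤ 0 := by
    have := nonneg_of_mul_nonneg_right hnonneg (D.length_pos i)
    exact_mod_cast neg_nonneg.1 this
  rw [ha, hb] at hunit
  have ha_eq : a = -1 := by
    rcases Int.eq_one_or_neg_one_of_mul_eq_one (by exact_mod_cast hunit.symm : a * b = 1) with h | h
    · exact absurd h (by lia)
    · exact h
  rw [hsmul, ha, ha_eq, Int.cast_neg, Int.cast_one, neg_one_smul, neg_neg]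

end VertexFrame

theorem IsLatticePolytope.finite_extremePoints (hP : IsLatticePolytope P) :
    (P.extremePoints ℝ).Finite := by
  obtain ⟨V, -, rfl⟩ := hP
  exact V.finite_toSet.subset extremePoints_convexHull_subset

theorem IsLatticePolytope.convexHull_extremePoints (hP : IsLatticePolytope P) :
    convexHull ℝ (P.extremePoints ℝ) = P := by
  obtain ⟨V, -, rfl⟩ := hP
  exact convexHull_extremePoints_convexHull V.finite_toSet

section Frames

variable (D : ∀ w : P.extremePoints ℝ, VertexFrame P w)

/-- The coordinates of all vertex frames. Their zero sets on `P` are the facets of `P`, and frames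
at different vertices of a facet share the corresponding coordinate, so this set indexes the
facets. -/
def frameCoords : Set ((Fin n → ℝ) →ᵃ[ℝ] ℝ) :=
  Set.range fun q : P.extremePoints ℝ × Fin n => (D q.1).coord q.2

/-- The `i`-th coordinate of the frame at `w`, as an element of the index set of the facets. -/
def frameCoord (w : P.extremePoints ℝ) (i : Fin n) : frameCoords D :=
  ⟨(D w).coord i, (w, i), rfl⟩

variable {D}

theorem frameCoord_injective (w : P.extremePoints ℝ) : Function.Injective (frameCoord D w) := by
  intro i j h
  by_contra hij
  have heq := congrArg (fun k => k.1 ((D w).tip i)) h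
  dsimp only [frameCoord] at heq
  rw [VertexFrame.coord_tip_self, VertexFrame.coord_tip_of_ne _ (Ne.symm hij)] at heq
  exact (D w).length_ne_zero i heq

theorem exists_frameCoord_eq_iff (hP : IsLatticePolytope P) {w : P.extremePoints ℝ}
    {k : frameCoords D} : (∃ i, frameCoord D w i = k) ↔ k.1 w = 0 := by
  constructor
  · rintro ⟨i, rfl⟩
    exact (D w).coord_self
  · obtain ⟨_, ⟨v, j⟩, rfl⟩ := k
    intro h
    obtain ⟨i, hi⟩ := (D v).exists_coord_eq (D w) hP h
    exact ⟨i, Subtype.ext hi⟩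

theorem frameCoords_nonneg (hP : IsLatticePolytope P) (k : frameCoords D) {x : Fin n → ℝ}
    (hx : x ∈ P) : 0 ≤ k.1 x := by
  obtain ⟨_, ⟨v, j⟩, rfl⟩ := k
  exact (D v).coord_nonneg hP hx

theorem exists_int_frameCoords_linear (k : frameCoords D) {x : Fin n → ℝ} (hx : IsLatticePt x) :
    ∃ z : ℤ, k.1.linear x = z := by
  obtain ⟨_, ⟨v, j⟩, rfl⟩ := k
  dsimp only
  rw [VertexFrame.linear_coord]
  exact (D v).exists_int_coord x hx j

theorem exists_int_frameCoords (hP : IsLatticePolytope P) (k : frameCoords D)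
    (w : P.extremePoints ℝ) : ∃ z : ℤ, k.1 w = z := by
  obtain ⟨_, ⟨v, j⟩, rfl⟩ := k
  dsimp only
  rw [VertexFrame.coord_apply]
  exact (D v).exists_int_coord _ ((hP.isLatticePt_of_mem_extremePoints w.2).sub
    (hP.isLatticePt_of_mem_extremePoints v.2)) j

open scoped Classical in
theorem coord_eq_zero_of_frameCoord_notMem (hP : IsLatticePolytope P) {w x : P.extremePoints ℝ}
    {i j : Fin n} (hx : (x : Fin n → ℝ) = (D w).tip i)
    (hj : frameCoord D x j ∉ Finset.univ.image (frameCoord D w)) :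
    ∀ l ≠ j, (D x).coord l w = 0 := by
  have hmem : ∀ (y : P.extremePoints ℝ) (k : frameCoords D),
      k ∈ Finset.univ.image (frameCoord D y) ↔ k.1 y = 0 := fun y k => by
    rw [← exists_frameCoord_eq_iff hP]
    simp only [Finset.mem_image, Finset.mem_univ, true_and]
  have hself : ∀ (y : P.extremePoints ℝ) (m : Fin n),
      frameCoord D y m ∈ Finset.univ.image (frameCoord D y) := fun y m =>
    Finset.mem_image_of_mem _ (Finset.mem_univ m)
  have hcard : ∀ (y : P.extremePoints ℝ) (m : Fin n),
      ((Finset.univ.image (frameCoord D y)).erase (frameCoord D y m)).card = n - 1 := fun y m => by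
    rw [Finset.card_erase_of_mem (hself y m),
      Finset.card_image_of_injective _ (frameCoord_injective y), Finset.card_univ,
      Fintype.card_fin]
  have hsub : (Finset.univ.image (frameCoord D w)).erase (frameCoord D w i) ⊆
      (Finset.univ.image (frameCoord D x)).erase (frameCoord D x j) := fun k hk => by
    obtain ⟨hki, hk⟩ := Finset.mem_erase.1 hk
    refine Finset.mem_erase.2 ⟨fun h => hj (h ▸ hk), (hmem x k).2 ?_⟩
    obtain ⟨m, -, rfl⟩ := Finset.mem_image.1 hk
    rw [hx]
    exact (D w).coord_tip_of_ne fun h => hki (h ▸ rfl)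
  have heq := Finset.eq_of_subset_of_card_le hsub (by rw [hcard, hcard])
  intro l hl
  have hl_mem := Finset.mem_erase.2 ⟨(frameCoord_injective x).ne hl, hself x l⟩
  rw [← heq] at hl_mem
  exact (hmem w _).1 (Finset.mem_of_mem_erase hl_mem)

variable (D)

open scoped Classical in
/-- The presentation of a smooth lattice polytope by the frames at its vertices. -/
def presentationOfFrames [Fintype (P.extremePoints ℝ)] [Fintype (frameCoords D)]
    (hP : IsLatticePolytope P) (hne : (P.extremePoints ℝ).Nonempty) :
    SmoothPresentation n (frameCoords D) (P.extremePoints ℝ) (Fin n → ℝ) where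
  facetsAt w := Finset.univ.image (frameCoord D w)
  height k := k.1
  vertex w := w
  edge w := Function.extend (frameCoord D w) (D w).basis 0
  neighbor w := Function.extend (frameCoord D w) (fun i => ⟨_, (D w).tip_mem_extremePoints⟩)
    fun _ => w
  edgeLength w := Function.extend (frameCoord D w) (D w).length 0
  nonempty := hne.to_subtype
  vertex_injective := Subtype.val_injective
  card_facetsAt w := by
    rw [Finset.card_image_of_injective _ (frameCoord_injective w), Finset.card_univ,
      Fintype.card_fin]
  mem_facetsAt_iff w k := by
    rw [← exists_frameCoord_eq_iff hP]
    simp only [Finset.mem_image, Finset.mem_univ, true_and]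
  linear_height_edge w k l hk hl := by
    obtain ⟨i, -, rfl⟩ := Finset.mem_image.1 hk
    obtain ⟨j, -, rfl⟩ := Finset.mem_image.1 hl
    rw [(frameCoord_injective w).extend_apply, frameCoord, VertexFrame.linear_coord,
      VertexFrame.basis_coord_basis]
    exact if_congr (frameCoord_injective w).eq_iff.symm rfl rfl
  sum_linear_height_smul_edge w p := by
    rw [Finset.sum_image (frameCoord_injective w).injOn]
    simp only [(frameCoord_injective w).extend_apply]
    simp only [frameCoord, VertexFrame.linear_coord]
    exact (D w).basis.sum_repr p
  exists_int_height_vertex w k := exists_int_frameCoords hP k w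
  exists_int_linear_height_edge w k l hk := by
    obtain ⟨i, -, rfl⟩ := Finset.mem_image.1 hk
    rw [(frameCoord_injective w).extend_apply]
    exact exists_int_frameCoords_linear l ((D w).isLatticePt_basis i)
  height_vertex_nonneg w k := frameCoords_nonneg hP k (D w).mem
  one_le_edgeLength w k hk := by
    obtain ⟨i, -, rfl⟩ := Finset.mem_image.1 hk
    rw [(frameCoord_injective w).extend_apply]
    exact (D w).one_le_length hP
  vertex_neighbor w k hk := by
    obtain ⟨i, -, rfl⟩ := Finset.mem_image.1 hk
    simp only [(frameCoord_injective w).extend_apply]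
    rfl
  eq_or_eq_neighbor w k hk x hx := by
    obtain ⟨i, -, rfl⟩ := Finset.mem_image.1 hk
    rw [(frameCoord_injective w).extend_apply]
    refine ((D w).eq_or_eq_tip (i := i) x.2 fun j hj => ?_).imp Subtype.ext Subtype.ext
    have hj_mem := hx (Finset.mem_erase.2 ⟨(frameCoord_injective w).ne hj,
      Finset.mem_image_of_mem _ (Finset.mem_univ j)⟩)
    exact (exists_frameCoord_eq_iff hP).1 ((Finset.mem_image.1 hj_mem).imp fun _ h => h.2)
  edge_neighbor w k hk l hl hlw := by
    obtain ⟨i, -, rfl⟩ := Finset.mem_image.1 hk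
    rw [(frameCoord_injective w).extend_apply] at hl ⊢
    rw [(frameCoord_injective w).extend_apply]
    obtain ⟨j, -, rfl⟩ := Finset.mem_image.1 hl
    rw [(frameCoord_injective _).extend_apply]
    exact (D w).basis_eq_neg_basis hP _ (coord_eq_zero_of_frameCoord_notMem hP rfl hlw)

end Frames

/-- The vertices, edges and facet normals of the presentation are defined over the lattice
`ℤ^n`. -/
structure SmoothPresentation.IsLattice {ι ω : Type*} [Fintype ι] [DecidableEq ι] [Fintype ω]
    (M : SmoothPresentation n ι ω (Fin n → ℝ)) : Prop where
  isLatticePt_vertex : ∀ w, IsLatticePt (M.vertex w)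
  isLatticePt_edge : ∀ w, ∀ k ∈ M.facetsAt w, IsLatticePt (M.edge w k)
  exists_int_slope : ∀ k x, IsLatticePt x → ∃ z : ℤ, M.slope k x = z

theorem IsLatticePolytope.extremePoints_nonempty (hP : IsLatticePolytope P)
    (hfull : affineSpan ℝ P = ⊤) : (P.extremePoints ℝ).Nonempty := by
  by_contra! h
  have hconv := hP.convexHull_extremePoints
  rw [h, convexHull_empty] at hconv
  rw [← hconv, AffineSubspace.span_empty] at hfull
  exact AffineSubspace.bot_ne_top ℝ _ _ hfull

theorem IsSmoothPoly.exists_presentation (hsm : IsSmoothPoly P) (hP : IsLatticePolytope P)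
    (hfull : affineSpan ℝ P = ⊤) :
    ∃ (ι ω : Type) (_ : Fintype ι) (_ : DecidableEq ι) (_ : Fintype ω)
      (M : SmoothPresentation n ι ω (Fin n → ℝ)), M.IsLattice ∧ M.polytope = P := by
  classical
  have _ : Fintype (P.extremePoints ℝ) := hP.finite_extremePoints.fintype
  let D : ∀ w : P.extremePoints ℝ, VertexFrame P w := fun w =>
    (hsm.nonempty_vertexFrame hfull w.2).some
  have _ : Fintype (frameCoords D) := (Set.finite_range _).fintype
  refine ⟨frameCoords D, P.extremePoints ℝ, inferInstance, inferInstance, inferInstance,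
    presentationOfFrames D hP (hP.extremePoints_nonempty hfull),
    ⟨fun w => hP.isLatticePt_of_mem_extremePoints w.2, fun w k hk => ?_,
      fun k x => exists_int_frameCoords_linear k⟩, ?_⟩
  · obtain ⟨i, -, rfl⟩ := Finset.mem_image.1 hk
    dsimp only [presentationOfFrames]
    rw [(frameCoord_injective w).extend_apply]
    exact (D w).isLatticePt_basis i
  · rw [← SmoothPresentation.convexHull_range_vertex]
    exact (congrArg _ Subtype.range_coe).trans hP.convexHull_extremePoints

end Construction

section LatticeVolume

open Set

variable {d : ℕ}

theorem isLatticePt_single (i : Fin d) : IsLatticePt (Pi.single i 1 : Fin d → ℝ) := fun j =>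
  ⟨(Pi.single i 1 : Fin d → ℤ) j, by rw [Pi.single_apply, Pi.single_apply]; split_ifs <;> simp⟩

theorem exists_det_eq_intCast {L : (Fin d → ℝ) →ₗ[ℝ] Fin d → ℝ}
    (hL : ∀ y, IsLatticePt y → IsLatticePt (L y)) : ∃ z : ℤ, LinearMap.det L = z := by
  choose A hA using fun i j => hL _ (isLatticePt_single j) i
  refine ⟨(Matrix.of A).det, ?_⟩
  rw [← LinearMap.det_toMatrix', Int.cast_det]
  congr 1
  ext i j
  rw [LinearMap.toMatrix'_apply, Matrix.map_apply, Matrix.of_apply, ← hA]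

theorem abs_det_eq_one_of_image_isLatticePt {L : (Fin d → ℝ) →ₗ[ℝ] Fin d → ℝ}
    (hL : L '' {y | IsLatticePt y} = {y | IsLatticePt y}) : |LinearMap.det L| = 1 := by
  have hsurj : Function.Surjective L := by
    rw [← LinearMap.range_eq_top, eq_top_iff, ← (Pi.basisFun ℝ (Fin d)).span_eq, Submodule.span_le]
    rintro _ ⟨i, rfl⟩
    obtain ⟨y, -, hy⟩ := hL.ge (isLatticePt_single i)
    exact ⟨y, by rw [hy, Pi.basisFun_apply]⟩
  let e := LinearEquiv.ofBijective L ⟨LinearMap.injective_iff_surjective.2 hsurj, hsurj⟩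
  obtain ⟨a, ha⟩ := exists_det_eq_intCast fun y hy => hL.le (mem_image_of_mem L hy)
  let f : (Fin d → ℝ) →ₗ[ℝ] Fin d → ℝ := e.symm
  obtain ⟨b, hb⟩ := exists_det_eq_intCast (L := f) fun y hy => by
    obtain ⟨x, hx, rfl⟩ := hL.ge hy
    exact (e.symm_apply_apply x).symm ▸ hx
  have hab : a * b = 1 := by
    exact_mod_cast ha ▸ hb ▸ e.det_mul_det_symm
  rw [ha]
  exact_mod_cast Int.isUnit_iff_abs_eq.1 (IsUnit.of_mul_eq_one b hab)

theorem volume_image_of_image_isLatticePt {φ : (Fin d → ℝ) →ᵃ[ℝ] Fin d → ℝ}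
    (hφ : φ '' {y | IsLatticePt y} = {y | IsLatticePt y}) (S : Set (Fin d → ℝ)) :
    volume (φ '' S) = volume S := by
  have happly (y) : φ y = φ 0 + φ.linear y := by
    simpa [add_comm] using φ.map_vadd 0 y
  have h0 : IsLatticePt (φ 0) := hφ.le (mem_image_of_mem φ (latticePts d).zero_mem)
  have hlin : φ.linear '' {y | IsLatticePt y} = {y | IsLatticePt y} := by
    ext y
    constructor
    · rintro ⟨x, hx, rfl⟩
      rw [← add_sub_cancel_left (φ 0) (φ.linear x), ← happly]
      exact (hφ.le (mem_image_of_mem φ hx)).sub h0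
    · intro hy
      obtain ⟨x, hx, hxy⟩ := hφ.ge ((latticePts d).add_mem h0 hy)
      exact ⟨x, hx, add_left_cancel ((happly x).symm.trans hxy)⟩
  have himage : φ '' S = (fun y => φ 0 + y) '' (φ.linear '' S) := by
    rw [image_image]
    exact image_congr fun y _ => happly y
  rw [himage, image_add_left, measure_preimage_add, Measure.addHaar_image_linearMap,
    abs_det_eq_one_of_image_isLatticePt hlin, ENNReal.ofReal_one, one_mul]

end LatticeVolume

section Pyramid

open Set

theorem image_convexJoin_singleton_left {E F : Type*} [AddCommGroup E] [Module ℝ E]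
    [AddCommGroup F] [Module ℝ F] (f : E →ᵃ[ℝ] F) (x : E) (s : Set E) :
    f '' convexJoin ℝ {x} s = convexJoin ℝ {f x} (f '' s) := by
  rw [convexJoin_singleton_left, convexJoin_singleton_left, image_iUnion₂, biUnion_image]
  simp only [image_segment]

theorem isCompact_convexJoin_singleton_left {E : Type*} [AddCommGroup E] [Module ℝ E]
    [TopologicalSpace E] [IsTopologicalAddGroup E] [ContinuousSMul ℝ E] {s : Set E}
    (hs : IsCompact s) (x : E) : IsCompact (convexJoin ℝ {x} s) := by
  have himage : convexJoin ℝ {x} s =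
      (fun p : ℝ × E => AffineMap.lineMap x p.2 p.1) '' (Icc 0 1 ×ˢ s) := by
    ext y
    simp only [convexJoin_singleton_left, segment_eq_image_lineMap, mem_iUnion₂, mem_image,
      mem_prod, Prod.exists]
    grind
  rw [himage]
  refine (isCompact_Icc.prod hs).image ?_
  simp only [AffineMap.lineMap_apply_module]
  fun_prop

variable {d : ℕ} {c : ℝ}

theorem lintegral_Ico_one_sub_div_pow (hc : 0 < c) :
    ∫⁻ h in Ico 0 c, ENNReal.ofReal ((1 - h / c) ^ d) = ENNReal.ofReal (c / (d + 1)) := by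
  have hcont : Continuous fun h : ℝ => (1 - h / c) ^ d := by fun_prop
  rw [← ofReal_integral_eq_lintegral_ofReal, integral_Ico_eq_integral_Ioc,
    ← intervalIntegral.integral_of_le hc.le]
  · congr 1
    have hsub := intervalIntegral.integral_comp_sub_div (a := 0) (b := c) (fun x : ℝ => x ^ d)
      hc.ne' 1
    rw [hsub, zero_div, sub_zero, div_self hc.ne', sub_self, integral_pow]
    simp [div_eq_mul_inv]
  · exact (hcont.integrableOn_Icc (a := 0) (b := c)).mono_set Ico_subset_Icc_self
  · refine (ae_restrict_iff' measurableSet_Ico).2 (.of_forall fun h hh => pow_nonneg ?_ d)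
    rw [sub_nonneg, div_le_one hc]
    exact hh.2.le

theorem cons_mem_convexJoin_iff (hc : 0 < c) {a z : Fin d → ℝ} {B : Set (Fin d → ℝ)} {h : ℝ} :
    (Fin.cons h z : Fin (d + 1) → ℝ) ∈
        convexJoin ℝ {Fin.cons c a} (Fin.cons (α := fun _ => ℝ) 0 '' B) ↔
      h ∈ Icc 0 c ∧ z ∈ AffineMap.homothety a (1 - h / c) '' B := by
  have hcons (t : ℝ) (b : Fin d → ℝ) :
      AffineMap.lineMap (Fin.cons (α := fun _ => ℝ) c a) (Fin.cons (α := fun _ => ℝ) 0 b) t =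
        Fin.cons (α := fun _ => ℝ) (c * (1 - t)) (AffineMap.lineMap a b t) := by
    ext i
    refine Fin.cases ?_ (fun i => ?_) i <;> simp [AffineMap.lineMap_apply_module]; ring
  rw [convexJoin_singleton_left, biUnion_image]
  simp only [segment_eq_image_lineMap, mem_iUnion₂, mem_image, AffineMap.homothety_eq_lineMap,
    hcons, Fin.cons_inj]
  constructor
  · rintro ⟨b, hb, t, ⟨ht0, ht1⟩, rfl, rfl⟩
    refine ⟨⟨by nlinarith, by nlinarith⟩, b, hb, ?_⟩
    rw [mul_div_cancel_left₀ _ hc.ne', sub_sub_cancel]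
  · rintro ⟨⟨hh0, hhc⟩, b, hb, rfl⟩
    exact ⟨b, hb, 1 - h / c, ⟨sub_nonneg.2 ((div_le_one hc).2 hhc),
      sub_le_self _ (div_nonneg hh0 hc.le)⟩, by rw [sub_sub_cancel, mul_div_cancel₀ _ hc.ne'], rfl⟩

theorem volume_convexJoin_cons (hc : 0 < c) (a : Fin d → ℝ) {B : Set (Fin d → ℝ)}
    (hS : MeasurableSet
      (convexJoin ℝ {Fin.cons c a} (Fin.cons (α := fun _ => ℝ) 0 '' B))) :
    volume (convexJoin ℝ {Fin.cons c a} (Fin.cons (α := fun _ => ℝ) 0 '' B)) =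
      ENNReal.ofReal (c / (d + 1)) * volume B := by
  have hmp := (volume_preserving_piFinSuccAbove (fun _ : Fin (d + 1) => ℝ) 0).symm
  rw [← hmp.measure_preimage hS.nullMeasurableSet, Measure.volume_eq_prod,
    Measure.prod_apply (hmp.measurable hS)]
  have hslice (h : ℝ) (hhc : h ≠ c) : volume (Prod.mk h ⁻¹' ((MeasurableEquiv.piFinSuccAbove
      (fun _ : Fin (d + 1) => ℝ) 0).symm ⁻¹'
        convexJoin ℝ {Fin.cons c a} (Fin.cons (α := fun _ => ℝ) 0 '' B))) =
      (Ico 0 c).indicator (fun h => ENNReal.ofReal ((1 - h / c) ^ d) * volume B) h := by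
    have hmem (z : Fin d → ℝ) :
        (MeasurableEquiv.piFinSuccAbove (fun _ : Fin (d + 1) => ℝ) 0).symm (h, z) =
          Fin.cons h z := by
      simp [MeasurableEquiv.piFinSuccAbove, Fin.insertNthEquiv]
    simp only [preimage, mem_ofPred_eq, hmem, cons_mem_convexJoin_iff hc]
    by_cases hh : h ∈ Ico 0 c
    · have hpos := pow_nonneg (sub_nonneg.2 ((div_le_one hc).2 hh.2.le)) d
      simp only [Ico_subset_Icc_self hh, true_and, ofPred_mem_eq, indicator_of_mem hh]
      rw [Measure.addHaar_image_homothety, Module.finrank_fin_fun, abs_of_nonneg hpos]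
    · have hh' : h ∉ Icc 0 c := fun h' => hh ⟨h'.1, h'.2.lt_of_ne hhc⟩
      simp [hh, hh']
  rw [lintegral_congr_ae ((Measure.ae_ne volume c).mono hslice),
    lintegral_indicator measurableSet_Ico, lintegral_mul_const _ (by fun_prop),
    lintegral_Ico_one_sub_div_pow hc]

end Pyramid

section Faces

open Finset

namespace SmoothPresentation

variable {n d : ℕ} {ι ω E : Type*} [Fintype ι] [DecidableEq ι] [Fintype ω]
  [AddCommGroup E] [Module ℝ E] (M : SmoothPresentation n ι ω E) {I : Finset ι} {v w : ω} {k : ι}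

/-- The affine subspace on which all facet distances indexed by `I` vanish. -/
def flat (I : Finset ι) : AffineSubspace ℝ E where
  carrier := {x | ∀ i ∈ I, M.height i x = 0}
  smul_vsub_vadd_mem' c p q r hp hq hr i hi := by
    rw [vadd_eq_add, add_comm, height_add, vsub_eq_sub, map_smul, slope_sub, hp i hi, hq i hi,
      hr i hi, sub_zero, smul_zero, add_zero]

/-- The face of the polytope in which the facets indexed by `I` intersect. -/
def face (I : Finset ι) : Set E := M.polytope ∩ M.flat I

variable {M}

theorem mem_flat {x : E} : x ∈ M.flat I ↔ ∀ i ∈ I, M.height i x = 0 := Iff.rfl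

theorem mem_face {x : E} : x ∈ M.face I ↔ x ∈ M.polytope ∧ ∀ i ∈ I, M.height i x = 0 := Iff.rfl

theorem flat_anti : Antitone M.flat := fun _ _ h _ hx i hi => hx i (h hi)

theorem face_anti : Antitone M.face := fun _ _ h => Set.inter_subset_inter_right _ (flat_anti h)

theorem face_subset_flat : M.face I ⊆ M.flat I := Set.inter_subset_right

theorem convex_face : Convex ℝ (M.face I) := M.convex_polytope.inter (M.flat I).convex

theorem vertex_mem_flat_iff : M.vertex w ∈ M.flat I ↔ I ⊆ M.facetsAt w :=
  forall₂_congr fun i _ => (M.mem_facetsAt_iff w i).symm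

theorem vertex_mem_face_iff : M.vertex w ∈ M.face I ↔ I ⊆ M.facetsAt w :=
  (and_iff_right (M.vertex_mem_polytope w)).trans vertex_mem_flat_iff

variable (M) in
theorem face_empty : M.face ∅ = M.polytope := by
  ext x
  simp [mem_face]

theorem eq_zero_of_forall_slope_nonneg {v : E} (hv : ∀ k, 0 ≤ M.slope k v) : v = 0 := by
  have hslope (k : ι) : M.slope k v = 0 := by
    have := M.nonempty
    obtain ⟨w, hw⟩ := Finite.exists_max fun w => M.height k (M.vertex w)
    refine (hv k).antisymm' ?_
    rw [← M.sum_slope_smul_edge w v, map_sum]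
    refine sum_nonpos fun l hl => ?_
    have hle := hw (M.neighbor w l)
    rw [M.vertex_neighbor w l hl, height_add, map_smul, add_le_iff_nonpos_right] at hle
    rw [map_smul]
    exact mul_nonpos_of_nonneg_of_nonpos (hv l)
      (nonpos_of_mul_nonpos_right hle (one_pos.trans_le (M.one_le_edgeLength w l hl)))
  have := M.nonempty
  rw [← M.sum_slope_smul_edge (Classical.arbitrary ω) v]
  exact sum_eq_zero fun l _ => by rw [hslope l, zero_smul]

theorem eq_vertex_of_forall_height_le {x : E} (hx : x ∈ M.polytope)
    (h : ∀ k ∉ M.facetsAt v, M.height k (M.vertex v) ≤ M.height k x) : x = M.vertex v := by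
  refine sub_eq_zero.1 (M.eq_zero_of_forall_slope_nonneg fun l => ?_)
  rw [slope_sub, sub_nonneg]
  by_cases hl : l ∈ M.facetsAt v
  · exact (height_vertex hl).trans_le (hx l)
  · exact h l hl

/-- The ray from the apex `vertex v` through the point leaves the polytope in the facet `k` that
minimizes the ratio of the distances of the point and of the apex. -/
theorem exists_mem_convexJoin_face_insert {x : E} (hI : I ⊆ M.facetsAt v) (hx : x ∈ M.face I)
    (hne : x ≠ M.vertex v) :
    ∃ k ∉ M.facetsAt v, x ∈ convexJoin ℝ {M.vertex v} (M.face (insert k I)) := by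
  have hpos {k : ι} (hk : k ∉ M.facetsAt v) : 0 < M.height k (M.vertex v) :=
    one_pos.trans_le (one_le_height_vertex hk)
  obtain ⟨k₀, hk₀, hlt⟩ : ∃ k ∉ M.facetsAt v, M.height k x < M.height k (M.vertex v) := by
    by_contra! h
    exact hne (eq_vertex_of_forall_height_le hx.1 h)
  obtain ⟨k, hk, hmin⟩ := exists_min_image (M.facetsAt v)ᶜ
    (fun k => M.height k x / M.height k (M.vertex v)) ⟨k₀, mem_compl.2 hk₀⟩
  rw [mem_compl] at hk
  set r := M.height k x / M.height k (M.vertex v) with hr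
  have hr0 : 0 ≤ r := div_nonneg (hx.1 k) (hpos hk).le
  have hr1 : 0 < 1 - r :=
    sub_pos.2 ((hmin k₀ (mem_compl.2 hk₀)).trans_lt ((div_lt_one (hpos hk₀)).2 hlt))
  let y := AffineMap.lineMap (M.vertex v) x (1 - r)⁻¹
  have hy (l : ι) : (1 - r) * M.height l y = M.height l x - r * M.height l (M.vertex v) := by
    rw [AffineMap.apply_lineMap, AffineMap.lineMap_apply_ring']
    field_simp
    ring
  have hyk : M.height k y = 0 := by
    have h := hy k
    rw [hr, div_mul_cancel₀ _ (hpos hk).ne', sub_self] at h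
    exact (mul_eq_zero.1 h).resolve_left hr1.ne'
  refine ⟨k, hk, ?_⟩
  rw [convexJoin_singleton_left, Set.mem_iUnion₂]
  refine ⟨y, mem_face.2 ⟨fun l => ?_, forall_mem_insert _ _ _ |>.2 ⟨hyk, fun i hi => ?_⟩⟩, ?_⟩
  · refine nonneg_of_mul_nonneg_right ?_ hr1
    rw [hy, sub_nonneg]
    by_cases hl : l ∈ M.facetsAt v
    · rw [height_vertex hl, mul_zero]
      exact hx.1 l
    · exact (le_div_iff₀ (hpos hl)).1 (hmin l (mem_compl.2 hl))
  · rw [AffineMap.apply_lineMap, height_vertex (hI hi), hx.2 i hi, AffineMap.lineMap_same_apply]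
  · rw [segment_eq_image_lineMap]
    refine ⟨1 - r, ⟨hr1.le, sub_le_self _ hr0⟩, ?_⟩
    rw [AffineMap.lineMap_lineMap_right, mul_inv_cancel₀ hr1.ne', AffineMap.lineMap_apply_one]

theorem face_eq_biUnion_convexJoin (hI : I ⊂ M.facetsAt v) :
    M.face I = ⋃ k ∈ (M.facetsAt v)ᶜ, convexJoin ℝ {M.vertex v} (M.face (insert k I)) := by
  refine Set.Subset.antisymm (fun x hx => Set.mem_iUnion₂.2 ?_) (Set.iUnion₂_subset fun k _ => ?_)
  · obtain rfl | hne := eq_or_ne x (M.vertex v)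
    · obtain ⟨l, hl, hlI⟩ := exists_of_ssubset hI
      refine ⟨M.entering v l, mem_compl.2 (entering_notMem_facetsAt hl),
        subset_convexJoin_left ⟨M.vertex (M.neighbor v l), vertex_mem_face_iff.2 ?_⟩ rfl⟩
      rw [facetsAt_neighbor hl]
      exact insert_subset_insert _ (subset_erase.2 ⟨hI.subset, hlI⟩)
    · obtain ⟨k, hk, hxk⟩ := exists_mem_convexJoin_face_insert hI.subset hx hne
      exact ⟨k, mem_compl.2 hk, hxk⟩
  · exact convexJoin_subset (Set.singleton_subset_iff.2 (vertex_mem_face_iff.2 hI.subset))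
      (face_anti (subset_insert _ _)) convex_face

theorem height_mul_height_le_of_mem_convexJoin {l : ι} {x : E}
    (hx : x ∈ convexJoin ℝ {M.vertex v} (M.face (insert k I))) :
    M.height k x * M.height l (M.vertex v) ≤ M.height l x * M.height k (M.vertex v) := by
  rw [convexJoin_singleton_left] at hx
  obtain ⟨y, hy, α, β, -, hβ, hαβ, rfl⟩ := Set.mem_iUnion₂.1 hx
  rw [Convex.combo_affine_apply hαβ, Convex.combo_affine_apply hαβ,
    hy.2 k (mem_insert_self _ _), smul_zero, add_zero, smul_eq_mul, smul_eq_mul, smul_eq_mul]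
  nlinarith [mul_nonneg (mul_nonneg hβ (hy.1 l)) (M.height_vertex_nonneg v k)]

theorem sum_slope_apply (I : Finset ι) (x : E) :
    (∑ i ∈ I, M.slope i) x = ∑ i ∈ I, M.height i x - ∑ i ∈ I, M.height i 0 := by
  rw [LinearMap.sum_apply, ← sum_sub_distrib]
  exact sum_congr rfl fun i _ => by rw [← slope_sub, sub_zero]

theorem neg_sum_height_zero_le_sum_slope {x : E} (hx : x ∈ M.polytope) :
    -∑ i ∈ I, M.height i 0 ≤ (∑ i ∈ I, M.slope i) x := by
  rw [sum_slope_apply, neg_eq_zero_sub]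
  exact sub_le_sub_right (sum_nonneg fun i _ => hx i) _

theorem mem_face_iff_sum_slope_eq {x : E} (hx : x ∈ M.polytope) :
    x ∈ M.face I ↔ (∑ i ∈ I, M.slope i) x = -∑ i ∈ I, M.height i 0 := by
  rw [sum_slope_apply, neg_eq_zero_sub, sub_left_inj, sum_eq_zero_iff_of_nonneg fun i _ => hx i]
  exact and_iff_right hx

theorem face_eq_sep (I : Finset ι) :
    M.face I = {x ∈ M.polytope | (∑ i ∈ I, M.slope i) x = -∑ i ∈ I, M.height i 0} := by
  ext x
  exact ⟨fun hx => ⟨hx.1, (mem_face_iff_sum_slope_eq hx.1).1 hx⟩,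
    fun hx => (mem_face_iff_sum_slope_eq hx.1).2 hx.2⟩

section Topology

variable [TopologicalSpace E] [T2Space E] [IsTopologicalAddGroup E] [ContinuousSMul ℝ E]
  [LocallyConvexSpace ℝ E]

theorem face_eq_convexHull (I : Finset ι) :
    M.face I = convexHull ℝ (M.vertex '' {w | I ⊆ M.facetsAt w}) := by
  rw [face_eq_sep, ← M.convexHull_range_vertex, sep_convexHull_eq]
  · congr 1
    ext x
    constructor
    · rintro ⟨⟨w, rfl⟩, hw⟩
      exact ⟨w, vertex_mem_face_iff.1
        ((mem_face_iff_sum_slope_eq (M.vertex_mem_polytope w)).2 hw), rfl⟩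
    · rintro ⟨w, hw, rfl⟩
      exact ⟨⟨w, rfl⟩, (mem_face_iff_sum_slope_eq (M.vertex_mem_polytope w)).1
        (vertex_mem_face_iff.2 hw)⟩
  · rintro _ ⟨w, rfl⟩
    exact neg_sum_height_zero_le_sum_slope (M.vertex_mem_polytope w)

theorem face_nonempty_iff : (M.face I).Nonempty ↔ M.IsCone I := by
  rw [face_eq_convexHull, convexHull_nonempty_iff, Set.image_nonempty]
  rfl

theorem isCompact_face : IsCompact (M.face I) := by
  rw [face_eq_convexHull]
  exact (Set.toFinite _).isCompact_convexHull (𝕜 := ℝ)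

end Topology

end SmoothPresentation

end Faces

section FaceChart

open Finset

/-- Affine coordinates on the flat of `I`: the `d` facets through the vertex `base` that are not in
`I`, whose distances are the coordinates, are enumerated by `index`. -/
structure SmoothPresentation.FaceChart {n : ℕ} {ι ω E : Type*} [Fintype ι] [DecidableEq ι]
    [Fintype ω] [AddCommGroup E] [Module ℝ E] (M : SmoothPresentation n ι ω E)
    (I : Finset ι) (d : ℕ) where
  base : ω
  index : Fin d → ι
  index_injective : Function.Injective index
  subset : I ⊆ M.facetsAt base
  image_index : univ.image index = M.facetsAt base \ I

namespace SmoothPresentation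

variable {n d : ℕ} {ι ω E : Type*} [Fintype ι] [DecidableEq ι] [Fintype ω]
  [AddCommGroup E] [Module ℝ E] {M : SmoothPresentation n ι ω E} {I : Finset ι} {w : ω} {k : ι}

theorem exists_faceChart (hI : I ⊆ M.facetsAt w) (hd : #I + d = n) :
    ∃ D : M.FaceChart I d, D.base = w := by
  have hcard : #(M.facetsAt w \ I) = d := by
    rw [card_sdiff_of_subset hI, M.card_facetsAt]
    lia
  let e := (M.facetsAt w \ I).equivFinOfCardEq hcard
  refine ⟨⟨w, fun i => e.symm i, Subtype.val_injective.comp e.symm.injective, hI, ?_⟩, rfl⟩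
  ext k
  simp only [mem_image, mem_univ, true_and]
  exact ⟨fun ⟨i, hi⟩ => hi ▸ (e.symm i).2, fun hk => ⟨e ⟨k, hk⟩, by rw [e.symm_apply_apply]⟩⟩

namespace FaceChart

theorem index_mem (D : M.FaceChart I d) (i : Fin d) :
    D.index i ∈ M.facetsAt D.base ∧ D.index i ∉ I := by
  rw [← mem_sdiff, ← D.image_index]
  exact mem_image_of_mem _ (mem_univ i)

theorem card_add (D : M.FaceChart I d) : #I + d = n := by
  have h := congrArg card D.image_index
  rw [card_image_of_injective _ D.index_injective, card_univ, Fintype.card_fin,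
    card_sdiff_of_subset D.subset, M.card_facetsAt] at h
  have := card_le_card D.subset
  rw [M.card_facetsAt] at this
  lia

section

variable (D : M.FaceChart I d)

/-- The coordinates of a point in a chart. -/
def coords : E →ᵃ[ℝ] Fin d → ℝ := AffineMap.pi fun i => M.height (D.index i)

/-- The point of the flat of `I` with given coordinates in a chart. -/
def param : (Fin d → ℝ) →ᵃ[ℝ] E :=
  (Fintype.linearCombination ℝ fun i => M.edge D.base (D.index i)).toAffineMap +
    AffineMap.const ℝ _ (M.vertex D.base)

theorem coords_apply (x : E) (i : Fin d) : D.coords x i = M.height (D.index i) x := rfl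

theorem param_apply (y : Fin d → ℝ) :
    D.param y = M.vertex D.base + ∑ i, y i • M.edge D.base (D.index i) :=
  add_comm _ _

theorem height_param (l : ι) (y : Fin d → ℝ) :
    M.height l (D.param y) =
      M.height l (M.vertex D.base) + ∑ i, y i * M.slope l (M.edge D.base (D.index i)) := by
  rw [param_apply, height_add, map_sum]
  simp only [map_smul, smul_eq_mul]

theorem param_mem_flat (y : Fin d → ℝ) : D.param y ∈ M.flat I := fun l hl => by
  have hlw := D.subset hl
  rw [height_param, height_vertex hlw, zero_add]
  refine sum_eq_zero fun i _ => ?_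
  rw [slope_edge_of_ne (D.index_mem i).1 hlw fun h => (D.index_mem i).2 (h ▸ hl), mul_zero]

theorem coords_param (y : Fin d → ℝ) : D.coords (D.param y) = y := by
  ext j
  have hj := (D.index_mem j).1
  rw [coords_apply, height_param, height_vertex hj, zero_add, sum_eq_single_of_mem j (mem_univ j),
    slope_edge_self hj, mul_one]
  intro i _ hij
  rw [slope_edge_of_ne (D.index_mem i).1 hj (D.index_injective.ne hij.symm), mul_zero]

theorem param_coords {x : E} (hx : x ∈ M.flat I) : D.param (D.coords x) = x := by
  conv_rhs => rw [← M.vertex_add_sum_height_smul_edge D.base x]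
  rw [param_apply]
  simp only [coords_apply]
  rw [← sum_image (f := fun k => M.height k x • M.edge D.base k)
    fun i _ j _ h => D.index_injective h, D.image_index]
  congr 1
  refine sum_subset sdiff_subset fun k hk hk' => ?_
  rw [hx k (by_contra fun hkI => hk' (mem_sdiff.2 ⟨hk, hkI⟩)), zero_smul]

theorem range_param : Set.range D.param = M.flat I :=
  Set.Subset.antisymm (Set.range_subset_iff.2 D.param_mem_flat)
    fun x hx => ⟨D.coords x, D.param_coords hx⟩

theorem injOn_coords : Set.InjOn D.coords (M.flat I) := fun x hx y hy h => by
  rw [← D.param_coords hx, h, D.param_coords hy]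

theorem coords_image_flat : D.coords '' M.flat I = Set.univ :=
  Set.eq_univ_of_forall fun y => ⟨D.param y, D.param_mem_flat y, D.coords_param y⟩

theorem finrank_direction_flat (D : M.FaceChart I d) :
    Module.finrank ℝ (M.flat I).direction = d := by
  have hflat : M.flat I = (⊤ : AffineSubspace ℝ (Fin d → ℝ)).map D.param := by
    apply SetLike.coe_injective
    rw [AffineSubspace.coe_map, AffineSubspace.top_coe, Set.image_univ, D.range_param]
  have hinj : Function.Injective D.param.linear := by
    rw [AffineMap.linear_injective_iff]
    exact Function.LeftInverse.injective D.coords_param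
  rw [hflat, AffineSubspace.map_direction, AffineSubspace.direction_top, ← LinearMap.range_eq_map,
    LinearMap.finrank_range_of_inj hinj, Module.finrank_fin_fun]

theorem isLatticePt_coords_param {m : ℕ} {J : Finset ι} (D' : M.FaceChart J m) {y : Fin d → ℝ}
    (hy : IsLatticePt y) : IsLatticePt (D'.coords (D.param y)) := fun j => by
  obtain ⟨a, ha⟩ := M.exists_int_height_vertex D.base (D'.index j)
  choose b hb using hy
  choose c hc using fun i =>
    M.exists_int_linear_height_edge D.base (D.index i) (D'.index j) (D.index_mem i).1
  refine ⟨a + ∑ i, b i * c i, ?_⟩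
  rw [coords_apply, height_param]
  push_cast
  simp only [ha, hb, slope, hc]

theorem volume_image_coords (D' : M.FaceChart I d) {S : Set E} (hS : S ⊆ M.flat I) :
    volume (D.coords '' S) = volume (D'.coords '' S) := by
  have himage : D'.coords.comp D.param '' (D.coords '' S) = D'.coords '' S := by
    rw [Set.image_image]
    exact Set.image_congr fun x hx => congrArg D'.coords (D.param_coords (hS hx))
  rw [← himage, volume_image_of_image_isLatticePt]
  refine Set.Subset.antisymm
    (Set.image_subset_iff.2 fun y hy => D.isLatticePt_coords_param D' hy) fun y hy =>
    ⟨D.coords (D'.param y), D'.isLatticePt_coords_param D hy, ?_⟩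
  rw [AffineMap.comp_apply, D.param_coords (D'.param_mem_flat y), D'.coords_param]

end

/-- Extends a chart of the flat of `insert k I` to one of the flat of `I`, with the distance to the
facet `k` as the first coordinate. -/
def cons (D : M.FaceChart (insert k I) d) (hk : k ∉ I) : M.FaceChart I (d + 1) where
  base := D.base
  index := Fin.cons k D.index
  index_injective := Fin.cons_injective_iff.2
    ⟨fun ⟨i, hi⟩ => (D.index_mem i).2 (by rw [hi]; exact mem_insert_self k I), D.index_injective⟩
  subset := (subset_insert k I).trans D.subset
  image_index := by
    have hkD := D.subset (mem_insert_self k I)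
    have himage : univ.image (Fin.cons (α := fun _ => ι) k D.index) =
        insert k (univ.image D.index) := by
      ext l
      simp only [mem_image, mem_insert, mem_univ, true_and, Fin.exists_fin_succ, Fin.cons_zero,
        Fin.cons_succ, eq_comm]
    rw [himage, D.image_index]
    ext l
    grind

theorem cons_coords (D : M.FaceChart (insert k I) d) (hk : k ∉ I) (x : E) :
    (D.cons hk).coords x = Fin.cons (M.height k x) (D.coords x) := by
  ext i
  refine Fin.cases ?_ (fun i => ?_) i <;> rfl

theorem cons_coords_image_face (D : M.FaceChart (insert k I) d) (hk : k ∉ I) :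
    (D.cons hk).coords '' M.face (insert k I) =
      Fin.cons (α := fun _ => ℝ) 0 '' (D.coords '' M.face (insert k I)) := by
  rw [Set.image_image]
  refine Set.image_congr fun x hx => ?_
  rw [cons_coords, hx.2 k (mem_insert_self k I)]

end FaceChart

end SmoothPresentation

end FaceChart

section FaceVolume

open Finset

theorem volume_setOf_eq_zero {d : ℕ} {f : (Fin d → ℝ) →ᵃ[ℝ] ℝ} {y : Fin d → ℝ} (hy : f y ≠ 0) :
    volume {y | f y = 0} = 0 := by
  let s : AffineSubspace ℝ (Fin d → ℝ) := (AffineSubspace.mk' (0 : ℝ) ⊥).comap f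
  have hs : (s : Set (Fin d → ℝ)) = {y | f y = 0} := by
    ext y
    simp [s, AffineSubspace.mem_mk']
  rw [← hs]
  refine Measure.addHaar_affineSubspace _ _ fun h => hy ?_
  have hmem : y ∈ (s : Set (Fin d → ℝ)) := by
    rw [h]
    trivial
  rwa [hs] at hmem

namespace SmoothPresentation

variable {n d : ℕ} {ι ω : Type*} [Fintype ι] [DecidableEq ι] [Fintype ω]
  {M : SmoothPresentation n ι ω (Fin n → ℝ)} {I : Finset ι} {v : ω} {k l : ι}

namespace FaceChart

theorem isCompact_image_coords (D : M.FaceChart I d) {S : Set (Fin n → ℝ)} (hS : IsCompact S) :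
    IsCompact (D.coords '' S) :=
  hS.image D.coords.continuous_of_finiteDimensional

theorem convexJoin_subset_flat (hI : I ⊆ M.facetsAt v) :
    convexJoin ℝ {M.vertex v} (M.face (insert k I)) ⊆ M.flat I :=
  convexJoin_subset (Set.singleton_subset_iff.2 (vertex_mem_flat_iff.2 hI))
    (face_subset_flat.trans (flat_anti (subset_insert k I))) (M.flat I).convex

theorem volume_image_coords_convexJoin (D : M.FaceChart I (d + 1))
    (D' : M.FaceChart (insert k I) d) (hI : I ⊆ M.facetsAt v) (hk : k ∉ M.facetsAt v) :
    volume (D.coords '' convexJoin ℝ {M.vertex v} (M.face (insert k I))) =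
      ENNReal.ofReal (M.height k (M.vertex v) / (d + 1)) *
        volume (D'.coords '' M.face (insert k I)) := by
  have hkI : k ∉ I := fun h => hk (hI h)
  have hcompact := isCompact_convexJoin_singleton_left (isCompact_face (M := M) (I := insert k I))
    (M.vertex v)
  have hmeas := ((D'.cons hkI).isCompact_image_coords hcompact).measurableSet
  rw [image_convexJoin_singleton_left, cons_coords, cons_coords_image_face] at hmeas
  rw [D.volume_image_coords (D'.cons hkI) (convexJoin_subset_flat hI),
    image_convexJoin_singleton_left, cons_coords, cons_coords_image_face,
    volume_convexJoin_cons (one_pos.trans_le (one_le_height_vertex hk)) _ hmeas]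

theorem exists_mem_flat_ne (hI : I ⊆ M.facetsAt v) (hk : k ∉ M.facetsAt v)
    (hl : l ∉ M.facetsAt v) (hkl : k ≠ l) (hcone : M.IsCone (insert k I)) :
    ∃ x ∈ M.flat I, M.height l (M.vertex v) * M.height k x ≠
      M.height k (M.vertex v) * M.height l x := by
  obtain ⟨w, hw⟩ := hcone
  have hkw := hw (mem_insert_self k I)
  have hIw := (subset_insert k I).trans hw
  have hvk := (one_pos.trans_le (one_le_height_vertex hk)).ne'
  have hvl := (one_pos.trans_le (one_le_height_vertex hl)).ne'
  by_cases hlw : l ∈ M.facetsAt w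
  · refine ⟨M.vertex w + M.edge w k, fun i hi => ?_, ?_⟩
    · rw [height_vertex_add (hIw hi), slope_edge_of_ne hkw (hIw hi) fun h => hk (hI (h ▸ hi))]
    · rw [height_vertex_add hkw, height_vertex_add hlw, slope_edge_self hkw,
        slope_edge_of_ne hkw hlw hkl.symm, mul_one, mul_zero]
      exact hvl
  · refine ⟨M.vertex w, vertex_mem_flat_iff.2 hIw, ?_⟩
    rw [height_vertex hkw, mul_zero]
    exact (mul_pos (hvk.lt_of_le' (M.height_vertex_nonneg v k))
      (one_pos.trans_le (one_le_height_vertex hlw))).ne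

theorem aedisjoint_image_coords_convexJoin (D : M.FaceChart I d) (hI : I ⊆ M.facetsAt v)
    (hk : k ∉ M.facetsAt v) (hl : l ∉ M.facetsAt v) (hkl : k ≠ l) :
    AEDisjoint volume (D.coords '' convexJoin ℝ {M.vertex v} (M.face (insert k I)))
      (D.coords '' convexJoin ℝ {M.vertex v} (M.face (insert l I))) := by
  by_cases hcone : M.IsCone (insert k I)
  swap
  · rw [Set.not_nonempty_iff_eq_empty.1 (face_nonempty_iff.not.2 hcone), convexJoin_empty_right,
      Set.image_empty, AEDisjoint, Set.empty_inter, measure_empty]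
  let g : (Fin n → ℝ) →ᵃ[ℝ] ℝ :=
    M.height l (M.vertex v) • M.height k - M.height k (M.vertex v) • M.height l
  obtain ⟨x, hx, hgx⟩ := exists_mem_flat_ne hI hk hl hkl hcone
  have hgx' : (g.comp D.param) (D.coords x) ≠ 0 := by
    rw [AffineMap.comp_apply, D.param_coords hx]
    exact sub_ne_zero.2 hgx
  refine measure_mono_null ?_ (volume_setOf_eq_zero hgx')
  rintro _ ⟨⟨x, hxk, rfl⟩, y, hyl, hyx⟩
  obtain rfl := D.injOn_coords (convexJoin_subset_flat hI hyl) (convexJoin_subset_flat hI hxk) hyx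
  change g (D.param (D.coords y)) = 0
  rw [D.param_coords (convexJoin_subset_flat hI hyl)]
  have hk_le := height_mul_height_le_of_mem_convexJoin (l := l) hxk
  have hl_le := height_mul_height_le_of_mem_convexJoin (l := k) hyl
  refine sub_eq_zero.2 ?_
  change M.height l (M.vertex v) * M.height k y = M.height k (M.vertex v) * M.height l y
  linarith

theorem volume_image_coords_face_eq_sum (D : M.FaceChart I d) (hI : I ⊂ M.facetsAt v) :
    volume (D.coords '' M.face I) =
      ∑ k ∈ (M.facetsAt v)ᶜ,
        volume (D.coords '' convexJoin ℝ {M.vertex v} (M.face (insert k I))) := by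
  rw [face_eq_biUnion_convexJoin hI, Set.image_iUnion₂]
  exact measure_biUnion_finset₀
    (fun k hk l hl => D.aedisjoint_image_coords_convexJoin hI.subset (mem_compl.1 hk)
      (mem_compl.1 hl))
    (fun k _ => (D.isCompact_image_coords
      (isCompact_convexJoin_singleton_left isCompact_face _)).measurableSet.nullMeasurableSet)

theorem volume_image_coords_convexJoin_eq_ofReal_normVol (D : M.FaceChart I (d + 1))
    (hI : I ⊆ M.facetsAt v) (hk : k ∉ M.facetsAt v)
    (h : ∀ D' : M.FaceChart (insert k I) d,
      volume (D'.coords '' M.face (insert k I)) =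
        ENNReal.ofReal (M.normVol (insert k I) / d.factorial)) :
    volume (D.coords '' convexJoin ℝ {M.vertex v} (M.face (insert k I))) =
      ENNReal.ofReal (M.height k (M.vertex v) * M.normVol (insert k I) / (d + 1).factorial) := by
  by_cases hcone : M.IsCone (insert k I)
  · obtain ⟨w, hw⟩ := hcone
    have hcard := D.card_add
    obtain ⟨D', -⟩ := exists_faceChart (d := d) hw
      (by rw [card_insert_of_notMem fun h => hk (hI h)]; lia)
    rw [D.volume_image_coords_convexJoin D' hI hk, h D',
      ← ENNReal.ofReal_mul (by have := M.height_vertex_nonneg v k; positivity),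
      Nat.factorial_succ]
    congr 1
    push_cast
    field_simp
  · rw [Set.not_nonempty_iff_eq_empty.1 (face_nonempty_iff.not.2 hcone),
      convexJoin_empty_right, Set.image_empty, measure_empty, normVol_eq_zero hcone, mul_zero,
      zero_div, ENNReal.ofReal_zero]

theorem volume_image_coords_face (D : M.FaceChart I d) :
    volume (D.coords '' M.face I) = ENNReal.ofReal (M.normVol I / d.factorial) := by
  induction d generalizing I with
  | zero =>
    have hI : I = M.facetsAt D.base := eq_of_subset_of_card_le D.subset
      (by rw [M.card_facetsAt, ← D.card_add, add_zero])
    have himage : D.coords '' M.face I = Set.univ := Set.Nonempty.eq_univ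
      ⟨_, Set.mem_image_of_mem _ (vertex_mem_face_iff.2 D.subset)⟩
    rw [himage, hI, normVol_facetsAt, volume_pi, Measure.pi_of_empty, measure_univ]
    simp
  | succ d ih =>
    have hcard := D.card_add
    have hI : I ⊂ M.facetsAt D.base := ⟨D.subset, fun h => (D.index_mem 0).2 (h (D.index_mem 0).1)⟩
    rw [D.volume_image_coords_face_eq_sum hI,
      sum_congr rfl fun k hk => D.volume_image_coords_convexJoin_eq_ofReal_normVol D.subset
        (mem_compl.1 hk) ih,
      ← ENNReal.ofReal_sum_of_nonneg fun k _ => div_nonneg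
        (mul_nonneg (M.height_vertex_nonneg _ k) (normVol_nonneg _)) (Nat.cast_nonneg _),
      ← sum_div, normVol_eq_sum (fun l hl => height_vertex (D.subset hl)) (by lia)]
    congr 2
    refine sum_subset (compl_subset_compl.2 D.subset) fun k _ hk => ?_
    rw [height_vertex (notMem_compl.1 hk), zero_mul]

end FaceChart

end SmoothPresentation

end FaceVolume

section FaceLattice

open Finset

theorem IsFace.exists_eq_argmin {n : ℕ} {P F : Set (Fin n → ℝ)} (hF : IsFace P F) :
    ∃ f : (Fin n → ℝ) →ₗ[ℝ] ℝ, F = {x ∈ P | ∀ y ∈ P, f x ≤ f y} := by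
  obtain ⟨⟨x, hx⟩, f, c, hc, rfl⟩ := hF
  refine ⟨f, Set.ext fun y => and_congr_right fun hy => ⟨fun h => h ▸ hc, fun h => ?_⟩⟩
  exact ((h x hx.1).trans_eq hx.2).antisymm (hc y hy)

namespace SmoothPresentation

section General

variable {n : ℕ} {ι ω E : Type*} [Fintype ι] [DecidableEq ι] [Fintype ω]
  [AddCommGroup E] [Module ℝ E] {M : SmoothPresentation n ι ω E} {I J : Finset ι} {w : ω} {k : ι}
  {f : E →ₗ[ℝ] ℝ} {x : E}

theorem vertex_add_edge_mem_face (hI : I ⊆ M.facetsAt w) (hk : k ∈ M.facetsAt w) (hkI : k ∉ I) :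
    M.vertex w + M.edge w k ∈ M.face I :=
  ⟨height_vertex_add_edge_nonneg hk, fun i hi => by
    rw [height_vertex_add (hI hi), slope_edge_of_ne hk (hI hi) (ne_of_mem_of_not_mem hi hkI)]⟩

theorem face_subset_face_iff (hI : M.IsCone I) : M.face I ⊆ M.face J ↔ J ⊆ I := by
  obtain ⟨w, hw⟩ := hI
  refine ⟨fun h j hj => ?_, fun h => face_anti h⟩
  by_contra hjI
  have hjw : j ∈ M.facetsAt w := vertex_mem_face_iff.1 (h (vertex_mem_face_iff.2 hw)) hj
  have hzero := (h (vertex_add_edge_mem_face hw hjw hjI)).2 j hj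
  rw [height_vertex_add hjw, slope_edge_self hjw] at hzero
  exact one_ne_zero hzero

theorem injOn_face : Set.InjOn M.face {I | M.IsCone I} := fun _ hI _ hJ h =>
  ((face_subset_face_iff hJ).1 h.ge).antisymm ((face_subset_face_iff hI).1 h.le)

theorem affineSpan_face (hI : M.IsCone I) : affineSpan ℝ (M.face I) = M.flat I := by
  obtain ⟨w, hw⟩ := hI
  refine le_antisymm (affineSpan_le.2 face_subset_flat) fun x hx => ?_
  have hvertex := subset_affineSpan ℝ (M.face I) (vertex_mem_face_iff.2 hw)
  rw [← M.vertex_add_sum_height_smul_edge w x, add_comm, ← vadd_eq_add]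
  refine AffineSubspace.vadd_mem_of_mem_direction (Submodule.sum_mem _ fun k hk => ?_) hvertex
  by_cases hkI : k ∈ I
  · rw [hx k hkI, zero_smul]
    exact Submodule.zero_mem _
  · refine Submodule.smul_mem _ _ ?_
    have h := AffineSubspace.vsub_mem_direction
      (subset_affineSpan ℝ _ (vertex_add_edge_mem_face hw hk hkI)) hvertex
    rwa [vsub_eq_sub, add_sub_cancel_left] at h

variable (M) in
/-- The facets that cut the face of `I` down to its subface minimizing `f`, if this minimum is
attained at the vertex `w`. -/
def minFacets (w : ω) (I : Finset ι) (f : E →ₗ[ℝ] ℝ) : Finset ι :=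
  I ∪ {k ∈ M.facetsAt w | f (M.edge w k) ≠ 0}

variable (M) in
theorem apply_eq_add_sum_height_mul (w : ω) (f : E →ₗ[ℝ] ℝ) (x : E) :
    f x = f (M.vertex w) + ∑ k ∈ M.facetsAt w, M.height k x * f (M.edge w k) := by
  conv_lhs => rw [← M.vertex_add_sum_height_smul_edge w x]
  simp only [map_add, map_sum, map_smul, smul_eq_mul]

theorem height_mul_apply_edge_nonneg (hf : ∀ k ∈ M.facetsAt w, k ∉ I → 0 ≤ f (M.edge w k))
    (hx : x ∈ M.face I) (hk : k ∈ M.facetsAt w) : 0 ≤ M.height k x * f (M.edge w k) := by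
  by_cases hkI : k ∈ I
  · rw [hx.2 k hkI, zero_mul]
  · exact mul_nonneg (hx.1 k) (hf k hk hkI)

theorem forall_mem_face_apply_vertex_le_iff (hI : I ⊆ M.facetsAt w) :
    (∀ y ∈ M.face I, f (M.vertex w) ≤ f y) ↔
      ∀ k ∈ M.facetsAt w, k ∉ I → 0 ≤ f (M.edge w k) := by
  refine ⟨fun h k hk hkI => ?_, fun h y hy => ?_⟩
  · simpa using h _ (vertex_add_edge_mem_face hI hk hkI)
  · rw [M.apply_eq_add_sum_height_mul w f y]
    exact le_add_of_nonneg_right (sum_nonneg fun k => height_mul_apply_edge_nonneg h hy)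

theorem argmin_face_eq (hI : I ⊆ M.facetsAt w) (hf : ∀ y ∈ M.face I, f (M.vertex w) ≤ f y) :
    {x ∈ M.face I | ∀ y ∈ M.face I, f x ≤ f y} = M.face (M.minFacets w I f) := by
  have hedge := (forall_mem_face_apply_vertex_le_iff hI).1 hf
  have hmin {x : E} (hx : x ∈ M.face I) :
      (∀ y ∈ M.face I, f x ≤ f y) ↔ f x = f (M.vertex w) :=
    ⟨fun h => (h _ (vertex_mem_face_iff.2 hI)).antisymm (hf x hx), fun h => h ▸ hf⟩
  have heq {x : E} (hx : x ∈ M.face I) :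
      f x = f (M.vertex w) ↔ ∀ k ∈ M.facetsAt w, f (M.edge w k) ≠ 0 → M.height k x = 0 := by
    rw [M.apply_eq_add_sum_height_mul w f x, add_eq_left,
      sum_eq_zero_iff_of_nonneg fun k => height_mul_apply_edge_nonneg hedge hx]
    simp only [mul_eq_zero, or_iff_not_imp_right, ne_eq]
  ext x
  simp only [Set.mem_ofPred_eq, minFacets, mem_face (I := I ∪ _), mem_union, mem_filter, or_imp,
    forall_and, and_imp]
  rw [← and_assoc, ← mem_face]
  exact and_congr_right fun hx => (hmin hx).trans (heq hx)

theorem subset_minFacets : I ⊆ M.minFacets w I f := subset_union_left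

theorem minFacets_subset (hI : I ⊆ M.facetsAt w) : M.minFacets w I f ⊆ M.facetsAt w :=
  union_subset hI (filter_subset _ _)

theorem exists_vertex_forall_mem_face_le [TopologicalSpace E] [T2Space E]
    [IsTopologicalAddGroup E] [ContinuousSMul ℝ E] [LocallyConvexSpace ℝ E] (hI : M.IsCone I)
    (f : E →ₗ[ℝ] ℝ) : ∃ w, I ⊆ M.facetsAt w ∧ ∀ y ∈ M.face I, f (M.vertex w) ≤ f y := by
  obtain ⟨w, hw, hmin⟩ := (Set.toFinite {w | I ⊆ M.facetsAt w}).exists_minimalFor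
    (fun w => f (M.vertex w)) _ hI
  refine ⟨w, hw, fun y hy => ?_⟩
  rw [face_eq_convexHull] at hy
  refine convexHull_min (t := {x | f (M.vertex w) ≤ f x}) ?_ (convex_halfSpace_ge f.isLinear _) hy
  rintro _ ⟨v, hv, rfl⟩
  exact (le_total _ _).elim id (hmin hv)

end General

section Lattice

variable {n d : ℕ} {ι ω : Type*} [Fintype ι] [DecidableEq ι] [Fintype ω]
  {M : SmoothPresentation n ι ω (Fin n → ℝ)} {I : Finset ι} {F : Set (Fin n → ℝ)} {r : ℝ}

theorem card_add_fdim_face (hI : M.IsCone I) : #I + fdim (M.face I) = n := by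
  obtain ⟨w, hw⟩ := hI
  have hle := card_le_of_subset_facetsAt hw
  obtain ⟨D, -⟩ := exists_faceChart hw (Nat.add_sub_of_le hle)
  rw [fdim, ← direction_affineSpan, affineSpan_face ⟨w, hw⟩, D.finrank_direction_flat,
    Nat.add_sub_of_le hle]

theorem isFace_face_iff (hI : M.IsCone I) :
    IsFace (M.face I) F ↔ ∃ J, I ⊆ J ∧ M.IsCone J ∧ M.face J = F := by
  refine ⟨fun hF => ?_, ?_⟩
  · obtain ⟨f, rfl⟩ := hF.exists_eq_argmin
    obtain ⟨w, hw, hf⟩ := exists_vertex_forall_mem_face_le hI f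
    exact ⟨_, subset_minFacets, ⟨w, minFacets_subset hw⟩, (argmin_face_eq hw hf).symm⟩
  · rintro ⟨J, hIJ, hJ, rfl⟩
    refine ⟨face_nonempty_iff.2 hJ, ∑ i ∈ J, M.slope i, -∑ i ∈ J, M.height i 0,
      fun x hx => neg_sum_height_zero_le_sum_slope hx.1, Set.ext fun x => ?_⟩
    exact ⟨fun hx => ⟨face_anti hIJ hx, (mem_face_iff_sum_slope_eq hx.1).1 hx⟩,
      fun hx => (mem_face_iff_sum_slope_eq hx.1.1).2 hx.2⟩

theorem IsLattice.exists_int_height (hM : M.IsLattice) (k : ι) {x : Fin n → ℝ}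
    (hx : IsLatticePt x) : ∃ z : ℤ, M.height k x = z := by
  obtain ⟨w⟩ := M.nonempty
  obtain ⟨a, ha⟩ := M.exists_int_height_vertex w k
  obtain ⟨b, hb⟩ := hM.exists_int_slope k _ (hx.sub (hM.isLatticePt_vertex w))
  rw [slope_sub, sub_eq_iff_eq_add] at hb
  exact ⟨b + a, by rw [hb, ha, Int.cast_add]⟩

theorem FaceChart.param_image_isLatticePt (D : M.FaceChart I d) (hM : M.IsLattice) :
    D.param '' {y | IsLatticePt y} = (M.flat I : Set (Fin n → ℝ)) ∩ {x | IsLatticePt x} := by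
  refine Set.Subset.antisymm ?_ fun x ⟨hx, hxlat⟩ =>
    ⟨D.coords x, fun i => hM.exists_int_height _ hxlat, D.param_coords hx⟩
  rintro _ ⟨y, hy, rfl⟩
  refine ⟨D.param_mem_flat y, mem_latticePts.1 ?_⟩
  rw [param_apply]
  refine add_mem (hM.isLatticePt_vertex _) (sum_mem fun i _ => ?_)
  obtain ⟨z, hz⟩ := hy i
  rw [hz, Int.cast_smul_eq_zsmul]
  exact zsmul_mem (mem_latticePts.2 (hM.isLatticePt_edge _ _ (D.index_mem i).1)) z

theorem hasRelVol_face_iff (hM : M.IsLattice) (hI : M.IsCone I) :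
    HasRelVol (M.face I) r ↔ r = M.normVol I / (fdim (M.face I)).factorial := by
  obtain ⟨w, hw⟩ := id hI
  obtain ⟨D, -⟩ := exists_faceChart hw (card_add_fdim_face hI)
  have hvolume : (volume (D.coords '' M.face I)).toReal =
      M.normVol I / (fdim (M.face I)).factorial := by
    rw [D.volume_image_coords_face, ENNReal.toReal_ofReal]
    exact div_nonneg (M.normVol_nonneg I) (Nat.cast_nonneg _)
  rw [HasRelVol, affineSpan_face hI, ← D.param_image_isLatticePt hM, ← hvolume]
  constructor
  · rintro ⟨T, -, hT, rfl⟩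
    have himage : T '' M.face I = T.comp D.param '' (D.coords '' M.face I) := by
      rw [Set.image_image]
      exact Set.image_congr fun x hx => congrArg T (D.param_coords hx.2).symm
    rw [← Set.image_comp] at hT
    rw [himage, volume_image_of_image_isLatticePt hT]
  · rintro rfl
    refine ⟨D.coords, ⟨Set.mapsTo_univ _ _, D.injOn_coords, D.coords_image_flat.ge⟩, ?_, rfl⟩
    rw [Set.image_image]
    simp only [D.coords_param, Set.image_id']

variable (M) in
open Classical in
/-- The finite set of nonempty faces of the polytope. -/
def faces : Finset (Set (Fin n → ℝ)) := ({I | M.IsCone I} : Finset (Finset ι)).image M.face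

theorem mem_faces : F ∈ M.faces ↔ IsFace M.polytope F := by
  have := M.nonempty
  rw [← M.face_empty, isFace_face_iff ⟨Classical.arbitrary ω, empty_subset _⟩]
  simp only [faces, mem_image, mem_filter, mem_univ, true_and, empty_subset]

theorem faceSum_faces (hM : M.IsLattice) {volf : Set (Fin n → ℝ) → ℝ}
    (hvolf : ∀ F ∈ M.faces, HasRelVol F (volf F)) : faceSum M.faces volf = M.dualDegree ∅ := by
  classical
  rw [faceSum, faces, sum_image (by simpa using injOn_face), dualDegree, compl_empty,
    powerset_univ, sum_filter]
  refine sum_congr rfl fun I _ => ?_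
  rw [empty_union]
  split_ifs with hI
  · have hmem : M.face I ∈ M.faces := mem_image_of_mem _ (mem_filter.2 ⟨mem_univ I, hI⟩)
    rw [(hasRelVol_face_iff hM hI).1 (hvolf _ hmem)]
    have hdim := card_add_fdim_face hI
    have hfactorial : ((fdim (M.face I)).factorial : ℝ) ≠ 0 :=
      Nat.cast_ne_zero.2 (Nat.factorial_ne_zero _)
    have hn : (n : ℝ) = #I + fdim (M.face I) := by exact_mod_cast hdim.symm
    rw [← Nat.eq_sub_of_add_eq hdim, hn, Nat.factorial_succ]
    push_cast
    field_simp
    ring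
  · rw [normVol_eq_zero hI, mul_zero, mul_zero]

theorem faceSumZero_polytope_iff (hM : M.IsLattice) :
    FaceSumZero M.polytope ↔ M.dualDegree ∅ = 0 := by
  constructor
  · rintro ⟨𝓕, volf, h𝓕, hvolf, hsum⟩
    obtain rfl : 𝓕 = M.faces := Finset.ext fun F => (h𝓕 F).trans mem_faces.symm
    rw [← faceSum_faces hM hvolf, hsum]
  · intro h
    have hvol (F : Set (Fin n → ℝ)) : ∃ r, F ∈ M.faces → HasRelVol F r := by
      by_cases hF : F ∈ M.faces
      · classical
        obtain ⟨I, hI, rfl⟩ := mem_image.1 hF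
        exact ⟨_, fun _ => (hasRelVol_face_iff hM (mem_filter.1 hI).2).2 rfl⟩
      · exact ⟨0, fun h => absurd h hF⟩
    choose volf hvolf using hvol
    exact ⟨M.faces, volf, fun F => mem_faces, hvolf, (faceSum_faces hM hvolf).trans h⟩

end Lattice

end SmoothPresentation

end FaceLattice

section SmoothFaces

open Finset

theorem isPrimitive_of_apply_eq_one {n : ℕ} {f : (Fin n → ℝ) →ₗ[ℝ] ℝ} {z : Fin n → ℤ}
    (hf : ∀ x, IsLatticePt x → ∃ m : ℤ, f x = m) (hz : f (fun j => (z j : ℝ)) = 1) :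
    IsPrimitive z := by
  refine ⟨?_, fun d hd => ?_⟩
  · rintro rfl
    have hzero : (fun j => ((0 : Fin n → ℤ) j : ℝ)) = 0 := funext fun _ => Int.cast_zero
    rw [hzero, map_zero] at hz
    exact zero_ne_one hz
  · choose q hq using hd
    obtain ⟨m, hm⟩ := hf (fun j => (q j : ℝ)) fun j => ⟨q j, rfl⟩
    have hsmul : (fun j => (z j : ℝ)) = (d : ℝ) • fun j => (q j : ℝ) :=
      funext fun j => by rw [hq j, Int.cast_mul, Pi.smul_apply, smul_eq_mul]
    rw [hsmul, map_smul, hm, smul_eq_mul] at hz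
    exact IsUnit.of_mul_eq_one m (by exact_mod_cast hz)

namespace SmoothPresentation

section General

variable {n d : ℕ} {ι ω E : Type*} [Fintype ι] [DecidableEq ι] [Fintype ω]
  [AddCommGroup E] [Module ℝ E] {M : SmoothPresentation n ι ω E} {I : Finset ι} {w : ω} {k : ι}

theorem mem_direction_flat_iff (hI : M.IsCone I) {x : E} :
    x ∈ (M.flat I).direction ↔ ∀ i ∈ I, M.slope i x = 0 := by
  obtain ⟨w, hw⟩ := hI
  rw [← AffineSubspace.vadd_mem_iff_mem_direction x (vertex_mem_flat_iff.2 hw), vadd_eq_add,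
    add_comm]
  exact forall₂_congr fun i hi => by rw [height_vertex_add (hw hi)]

theorem FaceChart.linearIndependent_edge (D : M.FaceChart I d) :
    LinearIndependent ℝ fun i => M.edge D.base (D.index i) := by
  refine Fintype.linearIndependent_iff.2 fun g hg i => ?_
  have hparam : D.param g = D.param 0 := by
    rw [param_apply, param_apply, hg]
    simp
  rw [← D.coords_param g, hparam, D.coords_param, Pi.zero_apply]

theorem FaceChart.sum_slope_smul_edge (D : M.FaceChart I d) {x : E}
    (hx : x ∈ (M.flat I).direction) :
    ∑ i, M.slope (D.index i) x • M.edge D.base (D.index i) = x := by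
  have hmem : M.vertex D.base + x ∈ M.flat I := by
    rw [add_comm]
    exact AffineSubspace.vadd_mem_of_mem_direction hx (vertex_mem_flat_iff.2 D.subset)
  have hparam := D.param_coords hmem
  rw [param_apply, add_right_inj] at hparam
  refine (sum_congr rfl fun i _ => ?_).trans hparam
  rw [coords_apply, height_vertex_add (D.index_mem i).1]

theorem face_erase_facetsAt [TopologicalSpace E] [T2Space E] [IsTopologicalAddGroup E]
    [ContinuousSMul ℝ E] [LocallyConvexSpace ℝ E] (hk : k ∈ M.facetsAt w) :
    M.face ((M.facetsAt w).erase k) =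
      segment ℝ (M.vertex w) (M.vertex w + M.edgeLength w k • M.edge w k) := by
  have hvertices : {x | (M.facetsAt w).erase k ⊆ M.facetsAt x} = {w, M.neighbor w k} := by
    refine Set.Subset.antisymm (M.eq_or_eq_neighbor w k hk) ?_
    rintro _ (rfl | rfl)
    · exact erase_subset _ _
    · exact erase_subset_facetsAt_neighbor hk
  rw [face_eq_convexHull, hvertices, Set.image_pair, M.vertex_neighbor w k hk, convexHull_pair]

end General

section Lattice

variable {n d : ℕ} {ι ω : Type*} [Fintype ι] [DecidableEq ι] [Fintype ω]
  {M : SmoothPresentation n ι ω (Fin n → ℝ)} {I : Finset ι} {w : ω} {F : Set (Fin n → ℝ)}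

theorem isLatticePolytope_face (hM : M.IsLattice) (I : Finset ι) :
    IsLatticePolytope (M.face I) := by
  classical
  refine ⟨({w | I ⊆ M.facetsAt w} : Finset ω).image M.vertex, ?_, ?_⟩
  · exact forall_mem_image.2 fun w _ => hM.isLatticePt_vertex w
  · rw [face_eq_convexHull, coe_image, coe_filter_univ]

theorem isFace_face_and_fdim_eq_one_iff (hI : I ⊆ M.facetsAt w) :
    (IsFace (M.face I) F ∧ M.vertex w ∈ F ∧ fdim F = 1) ↔
      ∃ k ∈ M.facetsAt w \ I, F = M.face ((M.facetsAt w).erase k) := by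
  constructor
  · rintro ⟨hF, hwF, hdim⟩
    obtain ⟨J, hIJ, hJ, rfl⟩ := (isFace_face_iff ⟨w, hI⟩).1 hF
    have hJw := vertex_mem_face_iff.1 hwF
    have hcard : #(M.facetsAt w \ J) = 1 := by
      have := card_add_fdim_face hJ
      rw [card_facetsAt_sdiff hJw]
      lia
    obtain ⟨k, hk⟩ := card_eq_one.1 hcard
    have hkmem : k ∈ M.facetsAt w \ J := hk ▸ mem_singleton_self k
    refine ⟨k, sdiff_subset_sdiff subset_rfl hIJ hkmem, ?_⟩
    rw [← sdiff_singleton_eq_erase, ← hk, Finset.sdiff_sdiff_eq_self hJw]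
  · rintro ⟨k, hk, rfl⟩
    rw [mem_sdiff] at hk
    have hsub : (M.facetsAt w).erase k ⊆ M.facetsAt w := erase_subset _ _
    refine ⟨(isFace_face_iff ⟨w, hI⟩).2 ⟨_, subset_erase.2 ⟨hI, hk.2⟩, ⟨w, hsub⟩, rfl⟩,
      vertex_mem_face_iff.2 hsub, ?_⟩
    have hdim := card_add_fdim_face ⟨w, hsub⟩
    have hcard := card_erase_add_one hk.1
    rw [M.card_facetsAt] at hcard
    lia

theorem isSmoothPoly_face (hM : M.IsLattice) (I : Finset ι) : IsSmoothPoly (M.face I) := by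
  intro v hv
  rw [face_eq_convexHull] at hv
  obtain ⟨w, hw : I ⊆ M.facetsAt w, rfl⟩ := extremePoints_convexHull_subset hv
  have hcone : M.IsCone I := ⟨w, hw⟩
  obtain ⟨D, rfl⟩ := exists_faceChart hw (card_add_fdim_face hcone)
  choose z hz using fun i => hM.isLatticePt_edge D.base (D.index i) (D.index_mem i).1
  have hz_eq (i) : (fun j => (z i j : ℝ)) = M.edge D.base (D.index i) :=
    funext fun j => (hz i j).symm
  rw [← direction_affineSpan, affineSpan_face hcone]
  refine ⟨z, fun i => M.edgeLength D.base (D.index i),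
    fun i => one_pos.trans_le (M.one_le_edgeLength _ _ (D.index_mem i).1), fun i => ?_,
    ?_, fun i => ?_, fun x hx => ?_, fun F => ?_⟩
  · refine isPrimitive_of_apply_eq_one (hM.exists_int_slope (D.index i)) ?_
    rw [hz_eq, slope_edge_self (D.index_mem i).1]
  · rw [funext hz_eq]
    exact D.linearIndependent_edge
  · rw [hz_eq, mem_direction_flat_iff hcone]
    exact fun l hl => slope_edge_of_ne (D.index_mem i).1 (D.subset hl)
      (ne_of_mem_of_not_mem hl (D.index_mem i).2)
  · choose m hm using fun i => hM.exists_int_slope (D.index i) (fun j => (x j : ℝ))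
      fun j => ⟨x j, rfl⟩
    refine ⟨m, ?_⟩
    simp only [hz_eq, ← hm, D.sum_slope_smul_edge hx]
  · rw [isFace_face_and_fdim_eq_one_iff hw, ← D.image_index]
    simp only [mem_image, mem_univ, true_and, exists_exists_eq_and, hz_eq,
      face_erase_facetsAt (D.index_mem _).1]

end Lattice

end SmoothPresentation

end SmoothFaces

section NormalEquivalence

open Finset

namespace SmoothPresentation

variable {n : ℕ} {ι ω E : Type*} [Fintype ι] [DecidableEq ι] [Fintype ω]
  [AddCommGroup E] [Module ℝ E] {M : SmoothPresentation n ι ω E} {C : Finset ι} {a b k : ι} {w : ω}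
  {f f' : E →ₗ[ℝ] ℝ}

namespace IsBarycentric

theorem sum_slope_eq_zero (hC : M.IsBarycentric C) (v : E) : ∑ c ∈ C, M.slope c v = 0 := by
  have h := hC (0 + v)
  simp only [height_add] at h
  rwa [sum_add_distrib, hC 0, add_eq_left] at h

theorem notMem_facetsAt (hC : M.IsBarycentric C) (hw : C.erase a ⊆ M.facetsAt w) :
    a ∉ M.facetsAt w := by
  obtain ⟨c, hc, hcw, -⟩ := hC.exists_height_vertex_eq_one w
  obtain rfl : c = a := by_contra fun hca => hcw (hw (mem_erase.2 ⟨hca, hc⟩))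
  exact hcw

theorem erase_subset_facetsAt (hC : M.IsBarycentric C) (ha : a ∈ C) (haw : a ∉ M.facetsAt w) :
    C.erase a ⊆ M.facetsAt w := by
  obtain ⟨c, -, -, -, hc⟩ := hC.exists_height_vertex_eq_one w
  obtain rfl : a = c := by_contra fun hac => haw (hc (mem_erase.2 ⟨hac, ha⟩))
  exact hc

theorem erase_subset_facetsAt_neighbor (hC : M.IsBarycentric C) (hb : b ∈ C) (hba : b ≠ a)
    (hw : C.erase a ⊆ M.facetsAt w) : C.erase b ⊆ M.facetsAt (M.neighbor w b) :=
  hC.erase_subset_facetsAt hb (notMem_facetsAt_neighbor (hw (mem_erase.2 ⟨hba, hb⟩)))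

theorem isCone_erase (hC : M.IsBarycentric C) (hb : b ∈ C) : M.IsCone (C.erase b) := by
  obtain ⟨v⟩ := M.nonempty
  obtain ⟨c, -, -, -, hcv⟩ := hC.exists_height_vertex_eq_one v
  obtain rfl | hbc := eq_or_ne b c
  · exact ⟨v, hcv⟩
  · exact ⟨_, hC.erase_subset_facetsAt_neighbor hb hbc hcv⟩

theorem entering_eq (hC : M.IsBarycentric C) (ha : a ∈ C) (hb : b ∈ C) (hba : b ≠ a)
    (hw : C.erase a ⊆ M.facetsAt w) : M.entering w b = a := by
  have hmem := hC.erase_subset_facetsAt_neighbor hb hba hw (mem_erase.2 ⟨hba.symm, ha⟩)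
  rw [facetsAt_neighbor (hw (mem_erase.2 ⟨hba, hb⟩)), mem_insert] at hmem
  exact (hmem.resolve_right fun h => hC.notMem_facetsAt hw (mem_of_mem_erase h)).symm

theorem mem_facetsAt_neighbor_iff (hC : M.IsBarycentric C) (ha : a ∈ C) (hb : b ∈ C)
    (hba : b ≠ a) (hw : C.erase a ⊆ M.facetsAt w) (hk : k ∉ C) :
    k ∈ M.facetsAt (M.neighbor w b) ↔ k ∈ M.facetsAt w := by
  rw [facetsAt_neighbor (hw (mem_erase.2 ⟨hba, hb⟩)), hC.entering_eq ha hb hba hw, mem_insert,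
    mem_erase, or_iff_right (ne_of_mem_of_not_mem ha hk).symm,
    and_iff_right (ne_of_mem_of_not_mem hb hk).symm]

theorem edge_neighbor (hC : M.IsBarycentric C) (ha : a ∈ C) (hb : b ∈ C) (hba : b ≠ a)
    (hw : C.erase a ⊆ M.facetsAt w) (hk : k ∉ C) (hkw : k ∈ M.facetsAt w) :
    M.edge (M.neighbor w b) k = M.edge w k := by
  have hslope : M.slope a (M.edge w k) = 0 := by
    rw [← hC.sum_slope_eq_zero (M.edge w k), sum_eq_single_of_mem a ha]
    intro c hc hca
    exact slope_edge_of_ne hkw (hw (mem_erase.2 ⟨hca, hc⟩)) (ne_of_mem_of_not_mem hc hk)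
  rw [edge_neighbor_of_ne (hw (mem_erase.2 ⟨hba, hb⟩)) hkw (ne_of_mem_of_not_mem hb hk).symm,
    hC.entering_eq ha hb hba hw, hslope, zero_smul, add_zero]

theorem minFacets_neighbor (hC : M.IsBarycentric C) (ha : a ∈ C) (hb : b ∈ C) (hba : b ≠ a)
    (hw : C.erase a ⊆ M.facetsAt w) (f : E →ₗ[ℝ] ℝ) :
    M.minFacets (M.neighbor w b) (C.erase b) f =
      C.erase b ∪ M.minFacets w (C.erase a) f \ C := by
  have hbw := notMem_facetsAt_neighbor (hw (mem_erase.2 ⟨hba, hb⟩))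
  ext k
  simp only [minFacets, mem_union, mem_erase, mem_filter, mem_sdiff]
  by_cases hk : k ∈ C
  · have hkb : k ∈ M.facetsAt (M.neighbor w b) → k ≠ b := fun h => ne_of_mem_of_not_mem h hbw
    tauto
  · rw [hC.mem_facetsAt_neighbor_iff ha hb hba hw hk]
    have hedge := hC.edge_neighbor ha hb hba hw hk
    simp +contextual [hk, hedge]

theorem forall_mem_face_neighbor_le (hC : M.IsBarycentric C) (ha : a ∈ C) (hb : b ∈ C)
    (hba : b ≠ a) (hw : C.erase a ⊆ M.facetsAt w)
    (hf : ∀ y ∈ M.face (C.erase a), f (M.vertex w) ≤ f y) :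
    ∀ y ∈ M.face (C.erase b), f (M.vertex (M.neighbor w b)) ≤ f y := by
  have hw' := hC.erase_subset_facetsAt_neighbor hb hba hw
  rw [forall_mem_face_apply_vertex_le_iff hw] at hf
  rw [forall_mem_face_apply_vertex_le_iff hw']
  intro k hk hkb
  have hkC : k ∉ C := fun h => by
    obtain rfl : k = b := by_contra fun hne => hkb (mem_erase.2 ⟨hne, h⟩)
    exact hC.notMem_facetsAt hw' hk
  have hkw := (hC.mem_facetsAt_neighbor_iff ha hb hba hw hkC).1 hk
  rw [hC.edge_neighbor ha hb hba hw hkC hkw]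
  exact hf k hkw (mt mem_of_mem_erase hkC)

variable [TopologicalSpace E] [T2Space E] [IsTopologicalAddGroup E] [ContinuousSMul ℝ E]
  [LocallyConvexSpace ℝ E]

theorem argmin_face_erase_congr (hC : M.IsBarycentric C) (ha : a ∈ C) (hb : b ∈ C)
    (h : {x ∈ M.face (C.erase a) | ∀ y ∈ M.face (C.erase a), f x ≤ f y} =
      {x ∈ M.face (C.erase a) | ∀ y ∈ M.face (C.erase a), f' x ≤ f' y}) :
    {x ∈ M.face (C.erase b) | ∀ y ∈ M.face (C.erase b), f x ≤ f y} =
      {x ∈ M.face (C.erase b) | ∀ y ∈ M.face (C.erase b), f' x ≤ f' y} := by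
  obtain rfl | hba := eq_or_ne b a
  · exact h
  obtain ⟨w, hw, hf⟩ := exists_vertex_forall_mem_face_le (hC.isCone_erase ha) f
  have hf' : ∀ y ∈ M.face (C.erase a), f' (M.vertex w) ≤ f' y :=
    (h.subset ⟨vertex_mem_face_iff.2 hw, hf⟩).2
  rw [argmin_face_eq hw hf, argmin_face_eq hw hf'] at h
  have hmin := injOn_face ⟨w, minFacets_subset hw⟩ ⟨w, minFacets_subset hw⟩ h
  have hw' := hC.erase_subset_facetsAt_neighbor hb hba hw
  rw [argmin_face_eq hw' (hC.forall_mem_face_neighbor_le ha hb hba hw hf),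
    argmin_face_eq hw' (hC.forall_mem_face_neighbor_le ha hb hba hw hf'),
    hC.minFacets_neighbor ha hb hba hw, hC.minFacets_neighbor ha hb hba hw, hmin]

end IsBarycentric

end SmoothPresentation

theorem SmoothPresentation.IsBarycentric.normEquiv_face_erase {n : ℕ} {ι ω : Type*} [Fintype ι]
    [DecidableEq ι] [Fintype ω] {M : SmoothPresentation n ι ω (Fin n → ℝ)} {C : Finset ι}
    (hC : M.IsBarycentric C) {a b : ι} (ha : a ∈ C) (hb : b ∈ C) :
    NormEquiv (M.face (C.erase a)) (M.face (C.erase b)) := fun _ _ =>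
  ⟨hC.argmin_face_erase_congr ha hb, hC.argmin_face_erase_congr hb ha⟩

end NormalEquivalence

section UnimodularMaps

open Finset

namespace IsLatticePt

variable {n : ℕ}

theorem matMap {t : ℕ} (A : Matrix (Fin t) (Fin n) ℤ) {x : Fin n → ℝ} (hx : IsLatticePt x) :
    IsLatticePt (matMap A x) := by
  choose z hz using hx
  refine fun k => ⟨∑ j, A k j * z j, ?_⟩
  simp only [_root_.matMap, hz]
  push_cast
  rfl

theorem zero : IsLatticePt (0 : Fin n → ℝ) := fun _ => ⟨0, Int.cast_zero.symm⟩

end IsLatticePt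

theorem intCast_map_mul_eq_one {n : ℕ} {A B : Matrix (Fin n) (Fin n) ℤ} (h : A * B = 1) :
    A.map (Int.cast : ℤ → ℝ) * B.map (Int.cast : ℤ → ℝ) = 1 := by
  have hmap := congrArg (Int.castRingHom ℝ).mapMatrix h
  rwa [map_mul, map_one] at hmap

theorem matMap_matMap_of_mul_eq_one {n : ℕ} {A B : Matrix (Fin n) (Fin n) ℤ} (h : A * B = 1)
    (x : Fin n → ℝ) : matMap A (matMap B x) = x := by
  change (A.map (Int.cast : ℤ → ℝ)).mulVec ((B.map (Int.cast : ℤ → ℝ)).mulVec x) = x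
  rw [Matrix.mulVec_mulVec, intCast_map_mul_eq_one h, Matrix.one_mulVec]

/-- The affine automorphism `x ↦ Ux + w` of `ℝ^n` given by a unimodular integer matrix `U` and an
integer vector `w`; its underlying function is `unimodMap U w`. -/
def unimodAffineEquiv {n : ℕ} {U : Matrix (Fin n) (Fin n) ℤ} (hU : IsUnit U.det)
    (w : Fin n → ℤ) : (Fin n → ℝ) ≃ᵃ[ℝ] (Fin n → ℝ) :=
  (Matrix.toLin'OfInv (M := U⁻¹.map (Int.cast : ℤ → ℝ)) (M' := U.map (Int.cast : ℤ → ℝ))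
    (intCast_map_mul_eq_one (U.nonsing_inv_mul hU))
    (intCast_map_mul_eq_one (U.mul_nonsing_inv hU))).toAffineEquiv.trans
    (AffineEquiv.constVAdd ℝ (Fin n → ℝ) fun i => (w i : ℝ))

section

variable {n : ℕ} {U : Matrix (Fin n) (Fin n) ℤ}

theorem coe_unimodAffineEquiv (hU : IsUnit U.det) (w : Fin n → ℤ) :
    ⇑(unimodAffineEquiv hU w) = unimodMap U w :=
  funext fun _ => add_comm _ _

theorem isLatticePt_unimodAffineEquiv_iff (hU : IsUnit U.det) (w : Fin n → ℤ) (x : Fin n → ℝ) :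
    IsLatticePt (unimodAffineEquiv hU w x) ↔ IsLatticePt x := by
  have hw : IsLatticePt fun i => (w i : ℝ) := fun i => ⟨w i, rfl⟩
  have happly : unimodAffineEquiv hU w x = (fun i => (w i : ℝ)) + matMap U x := rfl
  rw [happly]
  constructor
  · intro h
    have hUx : IsLatticePt (matMap U x) := by simpa only [add_sub_cancel_left] using h.sub hw
    simpa only [matMap_matMap_of_mul_eq_one (U.nonsing_inv_mul hU)] using hUx.matMap U⁻¹
  · exact fun h => (latticePts n).add_mem hw (h.matMap U)

theorem IsLatticePt.exists_unimodAffineEquiv_eq_zero {x : Fin n → ℝ} (hx : IsLatticePt x) :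
    ∃ (U : Matrix (Fin n) (Fin n) ℤ) (hU : IsUnit U.det) (w : Fin n → ℤ),
      unimodAffineEquiv hU w x = 0 := by
  choose z hz using hx
  refine ⟨1, Matrix.det_one (n := Fin n) (R := ℤ) ▸ isUnit_one, -z, funext fun i => ?_⟩
  simp [coe_unimodAffineEquiv, unimodMap, Matrix.one_apply, hz]

end

namespace SmoothPresentation

section General

variable {n : ℕ} {ι ω E E' : Type*} [Fintype ι] [DecidableEq ι] [Fintype ω]
  [AddCommGroup E] [Module ℝ E] [AddCommGroup E'] [Module ℝ E']

/-- The presentation of the image polytope under an affine isomorphism. -/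
def map (M : SmoothPresentation n ι ω E) (φ : E ≃ᵃ[ℝ] E') : SmoothPresentation n ι ω E' where
  facetsAt := M.facetsAt
  height k := (M.height k).comp φ.symm
  vertex w := φ (M.vertex w)
  edge w k := φ.linear (M.edge w k)
  neighbor := M.neighbor
  edgeLength := M.edgeLength
  nonempty := M.nonempty
  vertex_injective := φ.injective.comp M.vertex_injective
  card_facetsAt := M.card_facetsAt
  mem_facetsAt_iff w k := by simpa using M.mem_facetsAt_iff w k
  linear_height_edge w k l hk hl := by simpa using M.linear_height_edge w k l hk hl
  sum_linear_height_smul_edge w p := by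
    simpa using congrArg φ.linear (M.sum_linear_height_smul_edge w (φ.linear.symm p))
  exists_int_height_vertex w k := by simpa using M.exists_int_height_vertex w k
  exists_int_linear_height_edge w k l hk := by simpa using M.exists_int_linear_height_edge w k l hk
  height_vertex_nonneg w k := by simpa using M.height_vertex_nonneg w k
  one_le_edgeLength := M.one_le_edgeLength
  vertex_neighbor w k hk := by
    rw [M.vertex_neighbor w k hk, add_comm, ← vadd_eq_add, φ.map_vadd, map_smul, vadd_eq_add,
      add_comm]
  eq_or_eq_neighbor := M.eq_or_eq_neighbor
  edge_neighbor w k hk l hl hlw := by rw [M.edge_neighbor w k hk l hl hlw, map_neg]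

variable (M : SmoothPresentation n ι ω E) (φ : E ≃ᵃ[ℝ] E')

theorem polytope_map : (M.map φ).polytope = φ '' M.polytope :=
  (φ.toEquiv.image_eq_preimage_symm M.polytope).symm

theorem isBarycentric_map_iff {C : Finset ι} : (M.map φ).IsBarycentric C ↔ M.IsBarycentric C :=
  (φ.symm.surjective.forall (p := fun p => ∑ c ∈ C, M.height c p = 1)).symm

end General

theorem IsLattice.map {n : ℕ} {ι ω : Type*} [Fintype ι] [DecidableEq ι] [Fintype ω]
    {M : SmoothPresentation n ι ω (Fin n → ℝ)} (hM : M.IsLattice)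
    {φ : (Fin n → ℝ) ≃ᵃ[ℝ] (Fin n → ℝ)} (hφ : ∀ x, IsLatticePt (φ x) ↔ IsLatticePt x) :
    (M.map φ).IsLattice where
  isLatticePt_vertex w := (hφ _).2 (hM.isLatticePt_vertex w)
  isLatticePt_edge w k hk := by
    have h := ((hφ _).2 (hM.isLatticePt_edge w k hk)).sub ((hφ _).2 .zero)
    rwa [← vsub_eq_sub, ← AffineEquiv.coe_toAffineMap, ← AffineMap.linearMap_vsub, vsub_eq_sub,
      sub_zero] at h
  exists_int_slope k x hx := by
    have hsymm (y) (hy : IsLatticePt y) : IsLatticePt (φ.symm y) := by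
      rwa [← hφ, φ.apply_symm_apply]
    have h := (hsymm x hx).sub (hsymm 0 .zero)
    rw [← vsub_eq_sub, ← AffineEquiv.coe_toAffineMap, ← AffineMap.linearMap_vsub, vsub_eq_sub,
      sub_zero] at h
    exact hM.exists_int_slope k _ h

end SmoothPresentation

end UnimodularMaps

section StandardSimplex

open Finset

section

variable {κ : Type*} [Fintype κ] [DecidableEq κ] {a : κ → ℝ} {k : κ}

theorem eq_single_one_iff (ha : ∑ l, a l = 1) : a = Pi.single k 1 ↔ ∀ l ≠ k, a l = 0 := by
  refine ⟨fun h l hl => by rw [h, Pi.single_eq_of_ne hl], fun h => funext fun l => ?_⟩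
  obtain rfl | hl := eq_or_ne l k
  · rw [Pi.single_eq_same, ← ha, sum_eq_single_of_mem l (mem_univ l) fun m _ => h m]
  · rw [h l hl, Pi.single_eq_of_ne hl]

theorem eq_single_one_iff_apply_eq_one (ha : a ∈ stdSimplex ℝ κ) :
    a = Pi.single k 1 ↔ a k = 1 := by
  refine ⟨fun h => by rw [h, Pi.single_eq_same], fun h => (eq_single_one_iff ha.2).2 ?_⟩
  have hsum := ha.2
  rw [← add_sum_erase _ _ (mem_univ k), h, add_eq_left,
    sum_eq_zero_iff_of_nonneg fun l _ => ha.1 l] at hsum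
  exact fun l hl => hsum l (mem_erase.2 ⟨hl, mem_univ l⟩)

theorem exists_eq_single_one (ha : a ∈ stdSimplex ℝ κ) (h_int : ∀ l, ∃ z : ℤ, a l = z) :
    ∃ k, a = Pi.single k 1 := by
  obtain ⟨k, -, hk⟩ := exists_ne_zero_of_sum_ne_zero (ha.2.trans_ne one_ne_zero)
  refine ⟨k, (eq_single_one_iff_apply_eq_one ha).2 (le_antisymm ?_ ?_)⟩
  · rw [← ha.2]
    exact single_le_sum (fun l _ => ha.1 l) (mem_univ k)
  · have hpos := (ha.1 k).lt_of_ne' hk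
    obtain ⟨z, hz⟩ := h_int k
    rw [hz] at hpos ⊢
    exact_mod_cast hpos

end

/-- The barycentric coordinates with respect to the vertices `0, e_1, …, e_t` of the unimodular
simplex `Δ_t`. -/
def simplexCoords (t : ℕ) : (Fin t → ℝ) →ᵃ[ℝ] (Fin (t + 1) → ℝ) where
  toFun y := Fin.cons (α := fun _ => ℝ) (1 - ∑ j, y j) y
  linear := LinearMap.pi (Fin.cons (-∑ j, LinearMap.proj j) LinearMap.proj)
  map_vadd' y v := funext <| Fin.cases (by simp [sum_add_distrib]; ring) fun _ => rfl

variable {t : ℕ}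

theorem simplexCoords_zero (y : Fin t → ℝ) : simplexCoords t y 0 = 1 - ∑ j, y j := rfl

theorem simplexCoords_succ (y : Fin t → ℝ) (j : Fin t) : simplexCoords t y j.succ = y j := rfl

theorem simplexCoords_injective : Function.Injective (simplexCoords t) := fun _ _ h =>
  funext fun j => congrFun h j.succ

theorem sum_simplexCoords (y : Fin t → ℝ) : ∑ k, simplexCoords t y k = 1 := by
  simp only [Fin.sum_univ_succ, simplexCoords_zero, simplexCoords_succ, sub_add_cancel]

theorem stdSimplexVert_succ (j : Fin t) : stdSimplexVert t j.succ = Pi.single j 1 := by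
  ext i
  simp [stdSimplexVert, Pi.single_apply, Fin.ext_iff, eq_comm]

theorem simplexCoords_stdSimplexVert (k : Fin (t + 1)) :
    simplexCoords t (stdSimplexVert t k) = Pi.single k 1 := by
  refine (eq_single_one_iff (sum_simplexCoords _)).2 fun l hl => ?_
  cases l using Fin.cases with
  | zero =>
    obtain ⟨j, rfl⟩ := Fin.exists_succ_eq.2 hl.symm
    rw [simplexCoords_zero, stdSimplexVert_succ, sum_pi_single', if_pos (mem_univ j), sub_self]
  | succ j => exact if_neg fun h => hl (Fin.ext h.symm)

theorem simplexCoords_image_unimodSimplex :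
    simplexCoords t '' unimodSimplex t = stdSimplex ℝ (Fin (t + 1)) := by
  rw [unimodSimplex, AffineMap.image_convexHull, ← Set.range_comp,
    ← convexHull_rangle_single_eq_stdSimplex]
  exact congrArg (fun g => convexHull ℝ (Set.range g)) (funext simplexCoords_stdSimplexVert)

theorem simplexCoords_eq_single_one_iff {y : Fin t → ℝ} {k : Fin (t + 1)} :
    simplexCoords t y = Pi.single k 1 ↔ y = stdSimplexVert t k := by
  rw [← simplexCoords_stdSimplexVert, simplexCoords_injective.eq_iff]

theorem exists_int_simplexCoords {y : Fin t → ℝ} (hy : IsLatticePt y) (k : Fin (t + 1)) :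
    ∃ z : ℤ, simplexCoords t y k = z := by
  cases k using Fin.cases with
  | zero =>
    choose z hz using hy
    refine ⟨1 - ∑ j, z j, ?_⟩
    simp only [simplexCoords_zero, hz]
    push_cast
    rfl
  | succ j => exact hy j

/-- The linear projection given by the integer matrix `A`, followed by barycentric coordinates on
`Δ_t`. -/
def cayleyCoords {n : ℕ} (A : Matrix (Fin t) (Fin n) ℤ) :
    (Fin n → ℝ) →ᵃ[ℝ] (Fin (t + 1) → ℝ) :=
  (simplexCoords t).comp (A.map (Int.cast : ℤ → ℝ)).toLin'.toAffineMap

theorem cayleyCoords_succ {n : ℕ} (A : Matrix (Fin t) (Fin n) ℤ) (x : Fin n → ℝ) (j : Fin t) :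
    cayleyCoords A x j.succ = matMap A x j := rfl

theorem cayleyCoords_eq_single_one_iff {n : ℕ} {A : Matrix (Fin t) (Fin n) ℤ} {x : Fin n → ℝ}
    {k : Fin (t + 1)} : cayleyCoords A x = Pi.single k 1 ↔ matMap A x = stdSimplexVert t k :=
  simplexCoords_eq_single_one_iff

end StandardSimplex

section CayleyOfBarycentric

open Finset

namespace SmoothPresentation

variable {n t : ℕ} {ι ω : Type*} [Fintype ι] [DecidableEq ι] [Fintype ω]
  {M : SmoothPresentation n ι ω (Fin n → ℝ)} {C : Finset ι} {γ : Fin (t + 1) ≃ C}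
  {A : Matrix (Fin t) (Fin n) ℤ}

theorem exists_matMap_eq_slope (hM : M.IsLattice) (κ : Fin t → ι) :
    ∃ A : Matrix (Fin t) (Fin n) ℤ, ∀ x j, matMap A x j = M.slope (κ j) x := by
  choose A hA using fun j i => hM.exists_int_slope (κ j) _ (isLatticePt_single i)
  refine ⟨A, fun x j => ?_⟩
  conv_rhs => rw [← univ_sum_single x, map_sum]
  refine sum_congr rfl fun i _ => ?_
  rw [← hA, mul_comm, ← smul_eq_mul, ← map_smul, ← Pi.single_smul, smul_eq_mul, mul_one]

namespace IsBarycentric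

theorem sum_height_equiv (hC : M.IsBarycentric C) (γ : Fin (t + 1) ≃ C) (x : Fin n → ℝ) :
    ∑ k, M.height (γ k) x = 1 := by
  rw [γ.sum_comp fun c : C => M.height c x, sum_coe_sort C fun c => M.height c x, hC x]

theorem exists_cayleyCoords_eq_height (hM : M.IsLattice) (hC : M.IsBarycentric C)
    {v : ω} (hv : M.vertex v = 0) (hγ : C.erase (γ 0) ⊆ M.facetsAt v) :
    ∃ A : Matrix (Fin t) (Fin n) ℤ, ∀ x k, cayleyCoords A x k = M.height (γ k) x := by
  obtain ⟨A, hA⟩ := exists_matMap_eq_slope hM fun j : Fin t => (γ j.succ : ι)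
  have hsucc (x) (j : Fin t) : matMap A x j = M.height (γ j.succ) x := by
    have hmem : (γ j.succ : ι) ∈ C.erase (γ 0) :=
      mem_erase.2 ⟨fun h => j.succ_ne_zero (γ.injective (Subtype.ext h)), (γ j.succ).2⟩
    rw [hA, ← height_vertex_add (hγ hmem), hv, zero_add]
  refine ⟨A, fun x k => ?_⟩
  cases k using Fin.cases with
  | zero =>
    have hsum := hC.sum_height_equiv γ x
    rw [Fin.sum_univ_succ] at hsum
    change 1 - ∑ j, matMap A x j = _
    simp only [hsucc, ← hsum, add_sub_cancel_right]
  | succ j => rw [cayleyCoords_succ, hsucc]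

theorem matMap_eq_stdSimplexVert_iff (hC : M.IsBarycentric C)
    (hA : ∀ x k, cayleyCoords A x k = M.height (γ k) x) {x : Fin n → ℝ}
    {k : Fin (t + 1)} : matMap A x = stdSimplexVert t k ↔ x ∈ M.flat (C.erase (γ k)) := by
  rw [← cayleyCoords_eq_single_one_iff, funext (hA x), eq_single_one_iff (hC.sum_height_equiv γ x)]
  refine ⟨fun h c hc => ?_, fun h l hl => h _ (mem_erase.2 ⟨?_, (γ l).2⟩)⟩
  · obtain ⟨l, hl⟩ := γ.surjective ⟨c, mem_of_mem_erase hc⟩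
    obtain rfl : (γ l : ι) = c := congrArg Subtype.val hl
    exact h l fun hlk => ne_of_mem_erase hc (by rw [hlk])
  · exact fun hlk => hl (γ.injective (Subtype.ext hlk))

theorem cayleyPiece_polytope (hC : M.IsBarycentric C)
    (hA : ∀ x k, cayleyCoords A x k = M.height (γ k) x) (k : Fin (t + 1)) :
    cayleyPiece A M.polytope k = M.face (C.erase (γ k)) :=
  Set.ext fun _ => and_congr_right fun _ => hC.matMap_eq_stdSimplexVert_iff hA

theorem matMap_image_polytope (hC : M.IsBarycentric C)
    (hA : ∀ x k, cayleyCoords A x k = M.height (γ k) x) :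
    matMap A '' M.polytope = unimodSimplex t := by
  have hvertices : matMap A '' Set.range M.vertex = Set.range (stdSimplexVert t) := by
    refine Set.Subset.antisymm ?_ ?_
    · rintro _ ⟨_, ⟨w, rfl⟩, rfl⟩
      obtain ⟨c, hc, -, -, hcw⟩ := hC.exists_height_vertex_eq_one w
      obtain ⟨k, hk⟩ := γ.surjective ⟨c, hc⟩
      obtain rfl : (γ k : ι) = c := congrArg Subtype.val hk
      exact ⟨k, ((hC.matMap_eq_stdSimplexVert_iff hA).2 (vertex_mem_flat_iff.2 hcw)).symm⟩
    · rintro _ ⟨k, rfl⟩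
      obtain ⟨w, hw⟩ := hC.isCone_erase (γ k).2
      exact ⟨_, ⟨w, rfl⟩, (hC.matMap_eq_stdSimplexVert_iff hA).2 (vertex_mem_flat_iff.2 hw)⟩
  rw [← convexHull_range_vertex]
  exact ((A.map (Int.cast : ℤ → ℝ)).toLin'.image_convexHull _).trans
    (congrArg (convexHull ℝ) hvertices)

theorem exists_mulVec_eq (hM : M.IsLattice) (hC : M.IsBarycentric C)
    (hA : ∀ x k, cayleyCoords A x k = M.height (γ k) x) (y : Fin t → ℤ) :
    ∃ x, A.mulVec x = y := by
  obtain ⟨w, hw⟩ := hC.isCone_erase (γ 0).2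
  have hγ : Function.Injective fun j : Fin t => (γ j.succ : ι) :=
    Subtype.val_injective.comp (γ.injective.comp (Fin.succ_injective t))
  let a : ι → ℤ := Function.extend (fun j : Fin t => (γ j.succ : ι)) y 0
  let p : Fin n → ℝ := M.vertex w + ∑ k ∈ M.facetsAt w, (a k : ℝ) • M.edge w k
  have hp : IsLatticePt p := by
    refine (latticePts n).add_mem (hM.isLatticePt_vertex w) (sum_mem fun k hk => ?_)
    rw [Int.cast_smul_eq_zsmul]
    exact zsmul_mem (hM.isLatticePt_edge w k hk) _
  have hAp (j : Fin t) : matMap A p j = y j := by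
    have hmem : (γ j.succ : ι) ∈ M.facetsAt w := hw <| mem_erase.2
      ⟨fun h => j.succ_ne_zero (γ.injective (Subtype.ext h)), (γ j.succ).2⟩
    rw [← cayleyCoords_succ, hA, height_vertex_add hmem,
      slope_sum_smul_edge hmem fun k => (a k : ℝ)]
    exact congrArg _ (hγ.extend_apply y 0 j)
  choose z hz using hp
  refine ⟨z, funext fun j => ?_⟩
  have hAz := hAp j
  simp only [matMap, hz] at hAz
  exact_mod_cast hAz

theorem isCayleyWith_polytope (hM : M.IsLattice) (hC : M.IsBarycentric C)
    (hA : ∀ x k, cayleyCoords A x k = M.height (γ k) x) :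
    IsCayleyWith M.polytope A := by
  refine ⟨hC.exists_mulVec_eq hM hA, hC.matMap_image_polytope hA, fun k l => ?_⟩
  rw [hC.cayleyPiece_polytope hA, hC.cayleyPiece_polytope hA]
  exact hC.normEquiv_face_erase (γ k).2 (γ l).2

theorem exists_isCayleyWith (hM : M.IsLattice) (hC : M.IsBarycentric C)
    (hcard : n + 2 < 2 * #C) {v : ω} (hv : M.vertex v = 0) :
    ∃ (t : ℕ) (A : Matrix (Fin t) (Fin n) ℤ), IsCayleyWith M.polytope A ∧
      ∀ k, IsSmoothPoly (cayleyPiece A M.polytope k) ∧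
        IsLatticePolytope (cayleyPiece A M.polytope k) ∧
        fdim (cayleyPiece A M.polytope k) < t := by
  obtain ⟨g, hg, -, -, hgv⟩ := hC.exists_height_vertex_eq_one v
  obtain ⟨t, ht⟩ := Nat.exists_eq_add_one.2 (card_pos.2 ⟨g, hg⟩)
  let e : Fin (t + 1) ≃ C := (C.equivFinOfCardEq ht).symm
  let γ : Fin (t + 1) ≃ C := (Equiv.swap 0 (e.symm ⟨g, hg⟩)).trans e
  have hγ : C.erase (γ 0) ⊆ M.facetsAt v := by simpa [γ] using hgv
  obtain ⟨A, hA⟩ := hC.exists_cayleyCoords_eq_height hM hv hγ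
  refine ⟨t, A, hC.isCayleyWith_polytope hM hA, fun k => ?_⟩
  rw [hC.cayleyPiece_polytope hA]
  refine ⟨isSmoothPoly_face hM _, isLatticePolytope_face hM _, ?_⟩
  have hdim := card_add_fdim_face (hC.isCone_erase (γ k).2)
  rw [card_erase_of_mem (γ k).2] at hdim
  lia

end IsBarycentric

end SmoothPresentation

end CayleyOfBarycentric

section BarycentricOfCayley

open Finset

section NormEquiv

variable {n : ℕ} {R S : Set (Fin n → ℝ)}

theorem argmin_eq_argmin_zero_iff (f : (Fin n → ℝ) →ₗ[ℝ] ℝ) :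
    {x ∈ R | ∀ y ∈ R, f x ≤ f y} =
      {x ∈ R | ∀ y ∈ R, (0 : (Fin n → ℝ) →ₗ[ℝ] ℝ) x ≤ (0 : (Fin n → ℝ) →ₗ[ℝ] ℝ) y} ↔
      vectorSpan ℝ R ≤ f.ker := by
  simp only [LinearMap.zero_apply, le_refl, implies_true, and_true, Set.ofPred_mem_eq,
    Set.sep_eq_self_iff_mem_true, vectorSpan_def, Submodule.span_le]
  constructor
  · rintro h _ ⟨x, hx, y, hy, rfl⟩
    exact (map_sub f x y).trans (sub_eq_zero.2 ((h x hx y hy).antisymm (h y hy x hx)))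
  · intro h x hx y hy
    exact (sub_eq_zero.1 ((map_sub f x y).symm.trans (h (Set.vsub_mem_vsub hx hy)))).le

theorem NormEquiv.vectorSpan_le (h : NormEquiv R S) : vectorSpan ℝ S ≤ vectorSpan ℝ R := by
  intro x hxS
  by_contra hxR
  obtain ⟨f, hf, hR⟩ := Submodule.exists_le_ker_of_notMem hxR
  have hS := (argmin_eq_argmin_zero_iff f).1 ((h f 0).1 ((argmin_eq_argmin_zero_iff f).2 hR))
  exact hf (hS hxS)

theorem NormEquiv.vectorSpan_eq (h : NormEquiv R S) : vectorSpan ℝ R = vectorSpan ℝ S :=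
  le_antisymm (NormEquiv.vectorSpan_le fun u v => (h u v).symm) h.vectorSpan_le

end NormEquiv

namespace SmoothPresentation

variable {n : ℕ} {ι ω κ : Type*} [Fintype ι] [DecidableEq ι] [Fintype ω]

section

variable {E : Type*} [AddCommGroup E] [Module ℝ E] {M : SmoothPresentation n ι ω E}
  {F : E →ᵃ[ℝ] (κ → ℝ)} {k : κ} {w : ω}

theorem affineMap_apply_vertex_add (hw : F (M.vertex w) k = 0) (v : E) :
    F (M.vertex w + v) k = F.linear v k := by
  rw [add_comm, ← vadd_eq_add, F.map_vadd, vadd_eq_add, Pi.add_apply, hw, add_zero]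

theorem affineMap_apply_eq_sum_height_mul (hw : F (M.vertex w) k = 0) (x : E) :
    F x k = ∑ i ∈ M.facetsAt w, M.height i x * F.linear (M.edge w i) k := by
  conv_lhs => rw [← M.vertex_add_sum_height_smul_edge w x, affineMap_apply_vertex_add hw]
  simp only [map_sum, map_smul, Finset.sum_apply, Pi.smul_apply, smul_eq_mul]

end

variable [Fintype κ] [DecidableEq κ] {M : SmoothPresentation n ι ω (Fin n → ℝ)}
  {F : (Fin n → ℝ) →ᵃ[ℝ] (κ → ℝ)} {k m : κ} {w : ω} {x : Fin n → ℝ} {i j : ι}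

/-- The part of the polytope that `F` maps to the `k`-th vertex of the standard simplex. -/
def fibre (M : SmoothPresentation n ι ω (Fin n → ℝ)) (F : (Fin n → ℝ) →ᵃ[ℝ] (κ → ℝ)) (k : κ) :
    Set (Fin n → ℝ) :=
  {x ∈ M.polytope | F x = Pi.single k 1}

/-- A Cayley structure written in barycentric coordinates: an affine map `F`, integral on lattice
points, that carries the polytope onto the standard simplex `{a | 0 ≤ a, ∑ k, a k = 1}`. Of normal
equivalence of the fibres over the vertices only the equality of their directions is recorded. -/
structure IsCayleyProjection (M : SmoothPresentation n ι ω (Fin n → ℝ))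
    (F : (Fin n → ℝ) →ᵃ[ℝ] (κ → ℝ)) : Prop where
  sum_eq_one : ∀ x, ∑ k, F x k = 1
  image_polytope : F '' M.polytope = stdSimplex ℝ κ
  exists_int : ∀ x, IsLatticePt x → ∀ k, ∃ z : ℤ, F x k = z
  vectorSpan_fibre : ∀ k l, vectorSpan ℝ (M.fibre F k) = vectorSpan ℝ (M.fibre F l)

namespace IsCayleyProjection

theorem apply_mem_stdSimplex (hF : M.IsCayleyProjection F) (hx : x ∈ M.polytope) :
    F x ∈ stdSimplex ℝ κ :=
  hF.image_polytope ▸ Set.mem_image_of_mem F hx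

theorem fibre_nonempty (hF : M.IsCayleyProjection F) (k : κ) : (M.fibre F k).Nonempty := by
  have hk := single_mem_stdSimplex ℝ k
  rw [← hF.image_polytope] at hk
  exact hk

theorem exists_apply_eq_single (hF : M.IsCayleyProjection F) (hx : x ∈ M.polytope)
    (hlat : IsLatticePt x) : ∃ m, F x = Pi.single m 1 :=
  exists_eq_single_one (hF.apply_mem_stdSimplex hx) (hF.exists_int x hlat)

theorem exists_apply_vertex_eq_single (hM : M.IsLattice) (hF : M.IsCayleyProjection F) (m : κ) :
    ∃ w, F (M.vertex w) = Pi.single m 1 := by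
  by_contra! h
  have hvertex (w : ω) : F (M.vertex w) m = 0 := by
    obtain ⟨k, hk⟩ := hF.exists_apply_eq_single (M.vertex_mem_polytope w) (hM.isLatticePt_vertex w)
    have hkm : m ≠ k := by
      rintro rfl
      exact h w hk
    rw [hk, Pi.single_eq_of_ne hkm]
  obtain ⟨x, hx, hxm⟩ := hF.fibre_nonempty m
  have hker : x ∈ ((LinearMap.proj (φ := fun _ : κ => ℝ) m).toAffineMap.comp F) ⁻¹' {0} :=
    convexHull_min (Set.range_subset_iff.2 hvertex)
      ((convex_singleton (0 : ℝ)).affine_preimage _) (convexHull_range_vertex (M := M) ▸ hx)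
  have hzero : F x m = 0 := hker
  rw [hxm, Pi.single_eq_same] at hzero
  exact one_ne_zero hzero

theorem linear_edge_eq_zero_or_one (hM : M.IsLattice) (hF : M.IsCayleyProjection F)
    (hw : F (M.vertex w) k = 0) (hi : i ∈ M.facetsAt w) :
    F.linear (M.edge w i) k = 0 ∨ F.linear (M.edge w i) k = 1 := by
  obtain ⟨m, hm⟩ := hF.exists_apply_eq_single (vertex_add_edge_mem_polytope hi)
    ((latticePts n).add_mem (hM.isLatticePt_vertex w) (hM.isLatticePt_edge w i hi))
  rw [← affineMap_apply_vertex_add hw, hm, Pi.single_apply]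
  split_ifs
  exacts [.inr rfl, .inl rfl]

theorem exists_linear_edge_eq_one (hM : M.IsLattice) (hF : M.IsCayleyProjection F)
    (hw : F (M.vertex w) k = 0) : ∃ i ∈ M.facetsAt w, F.linear (M.edge w i) k = 1 := by
  by_contra! h
  obtain ⟨x, -, hx⟩ := hF.fibre_nonempty k
  have hzero : F x k = 0 := by
    rw [affineMap_apply_eq_sum_height_mul hw]
    refine sum_eq_zero fun i hi => ?_
    rw [(hF.linear_edge_eq_zero_or_one hM hw hi).resolve_right (h i hi), mul_zero]
  rw [hx, Pi.single_eq_same] at hzero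
  exact one_ne_zero hzero

theorem vertex_add_edge_mem_fibre (hF : M.IsCayleyProjection F) (hw : F (M.vertex w) k = 0)
    (hi : i ∈ M.facetsAt w) (hik : F.linear (M.edge w i) k = 1) :
    M.vertex w + M.edge w i ∈ M.fibre F k := by
  have hmem := vertex_add_edge_mem_polytope hi
  refine ⟨hmem, (eq_single_one_iff_apply_eq_one (hF.apply_mem_stdSimplex hmem)).2 ?_⟩
  rw [affineMap_apply_vertex_add hw, hik]

theorem height_eq_zero_of_mem_fibre (hM : M.IsLattice) (hF : M.IsCayleyProjection F)
    (hkm : k ≠ m) (hw : F (M.vertex w) k = 0) (hi : i ∈ M.facetsAt w)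
    (hik : F.linear (M.edge w i) k = 1) (hx : x ∈ M.fibre F m) : M.height i x = 0 := by
  have hzero : F x k = 0 := by rw [hx.2, Pi.single_eq_of_ne hkm]
  rw [affineMap_apply_eq_sum_height_mul hw, sum_eq_zero_iff_of_nonneg] at hzero
  · simpa only [hik, mul_one] using hzero i hi
  · intro j hj
    obtain h | h := hF.linear_edge_eq_zero_or_one hM hw hj <;> rw [h]
    · rw [mul_zero]
    · exact (mul_one (M.height j x)).symm ▸ hx.1 j

theorem linear_edge_unique (hM : M.IsLattice) (hF : M.IsCayleyProjection F)
    (hkm : k ≠ m) (hw : F (M.vertex w) k = 0) (hi : i ∈ M.facetsAt w)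
    (hik : F.linear (M.edge w i) k = 1) (hj : j ∈ M.facetsAt w)
    (hjk : F.linear (M.edge w j) k = 1) : i = j := by
  by_contra hij
  have hker : vectorSpan ℝ (M.fibre F m) ≤ (M.slope i).ker := by
    refine Submodule.span_le.2 ?_
    rintro _ ⟨x, hx, y, hy, rfl⟩
    refine (M.slope_sub i x y).trans ?_
    rw [hF.height_eq_zero_of_mem_fibre hM hkm hw hi hik hx,
      hF.height_eq_zero_of_mem_fibre hM hkm hw hi hik hy, sub_zero]
  rw [hF.vectorSpan_fibre m k] at hker
  have hslope : M.slope i ((M.vertex w + M.edge w i) - (M.vertex w + M.edge w j)) = 0 :=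
    hker (vsub_mem_vectorSpan ℝ (hF.vertex_add_edge_mem_fibre hw hi hik)
      (hF.vertex_add_edge_mem_fibre hw hj hjk))
  rw [add_sub_add_left_eq_sub, map_sub, slope_edge_self hi, slope_edge_of_ne hj hi hij,
    sub_zero] at hslope
  exact one_ne_zero hslope

theorem exists_apply_eq_height [Nontrivial κ] (hM : M.IsLattice) (hF : M.IsCayleyProjection F)
    (k : κ) : ∃ i, ∀ x, F x k = M.height i x := by
  obtain ⟨m, hmk⟩ := exists_ne k
  obtain ⟨w, hwm⟩ := hF.exists_apply_vertex_eq_single hM m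
  have hw : F (M.vertex w) k = 0 := by rw [hwm, Pi.single_eq_of_ne hmk.symm]
  obtain ⟨i, hi, hik⟩ := hF.exists_linear_edge_eq_one hM hw
  refine ⟨i, fun x => ?_⟩
  rw [affineMap_apply_eq_sum_height_mul hw, sum_eq_single_of_mem i hi, hik, mul_one]
  intro j hj hji
  rw [(hF.linear_edge_eq_zero_or_one hM hw hj).resolve_right, mul_zero]
  exact fun hjk => hji (hF.linear_edge_unique hM hmk.symm hw hj hjk hi hik)

theorem injective_of_apply_eq_height (hF : M.IsCayleyProjection F) {c : κ → ι}
    (hc : ∀ k x, F x k = M.height (c k) x) : Function.Injective c := by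
  intro k l hkl
  obtain ⟨x, -, hx⟩ := hF.fibre_nonempty k
  by_contra hne
  have heq : F x k = F x l := by rw [hc, hkl, hc]
  rw [hx, Pi.single_eq_same, Pi.single_eq_of_ne' hne] at heq
  exact one_ne_zero heq

theorem fibre_eq_face (hF : M.IsCayleyProjection F) {c : κ → ι}
    (hc : ∀ k x, F x k = M.height (c k) x) (k : κ) :
    M.fibre F k = M.face ((univ.image c).erase (c k)) := by
  ext x
  refine and_congr_right fun _ => ?_
  rw [eq_single_one_iff (hF.sum_eq_one x), ← image_erase (hF.injective_of_apply_eq_height hc),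
    SetLike.mem_coe, mem_flat]
  simp only [hc, forall_mem_image, mem_erase, mem_univ, and_true]

theorem exists_isBarycentric (hM : M.IsLattice) (hF : M.IsCayleyProjection F) {k : κ}
    (hdim : fdim (M.fibre F k) + 1 < Fintype.card κ) :
    ∃ C, M.IsBarycentric C ∧ n + 2 < 2 * #C := by
  have : Nontrivial κ := Fintype.one_lt_card_iff_nontrivial.1 (by lia)
  choose c hc using hF.exists_apply_eq_height hM
  have hinj := hF.injective_of_apply_eq_height hc
  have hC : M.IsBarycentric (univ.image c) := fun p => by
    rw [sum_image hinj.injOn, ← hF.sum_eq_one p]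
    exact sum_congr rfl fun k _ => (hc k p).symm
  refine ⟨_, hC, ?_⟩
  have hmem : c k ∈ univ.image c := mem_image_of_mem c (mem_univ k)
  have hcard := card_add_fdim_face (hC.isCone_erase hmem)
  rw [← hF.fibre_eq_face hc, card_erase_of_mem hmem, card_image_of_injective _ hinj,
    card_univ] at hcard
  rw [card_image_of_injective _ hinj, card_univ]
  lia

end IsCayleyProjection

variable {t : ℕ} {A : Matrix (Fin t) (Fin n) ℤ}

theorem fibre_cayleyCoords (A : Matrix (Fin t) (Fin n) ℤ) (k : Fin (t + 1)) :
    M.fibre (cayleyCoords A) k = cayleyPiece A M.polytope k :=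
  Set.ext fun _ => and_congr_right fun _ => cayleyCoords_eq_single_one_iff

theorem isCayleyProjection_cayleyCoords (hA : IsCayleyWith M.polytope A) :
    M.IsCayleyProjection (cayleyCoords A) where
  sum_eq_one x := sum_simplexCoords _
  image_polytope := by
    rw [← simplexCoords_image_unimodSimplex, ← hA.2.1, Set.image_image]
    rfl
  exists_int x hx := exists_int_simplexCoords (hx.matMap A)
  vectorSpan_fibre k l := by
    rw [fibre_cayleyCoords, fibre_cayleyCoords]
    exact (hA.2.2 k l).vectorSpan_eq

theorem IsLattice.exists_isBarycentric_of_isCayleyWith (hM : M.IsLattice)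
    (hA : IsCayleyWith M.polytope A) {k : Fin (t + 1)}
    (hdim : fdim (cayleyPiece A M.polytope k) < t) :
    ∃ C, M.IsBarycentric C ∧ n + 2 < 2 * #C := by
  refine (isCayleyProjection_cayleyCoords hA).exists_isBarycentric hM (k := k) ?_
  rwa [fibre_cayleyCoords, Fintype.card_fin, Nat.add_lt_add_iff_right]

end SmoothPresentation

end BarycentricOfCayley

/-- A smooth full-dimensional lattice polytope `P ⊆ ℝ^n` satisfies
`Σ_F (-1)^{n - dim F} (dim F + 1)! Vol(F) = 0` iff `P` is unimodularly equivalent to a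
Cayley sum `Cayley(R_0, …, R_t)_π` of normally equivalent smooth lattice polytopes `R_i`
with `dim R_i < t`. -/
theorem stmt8 {n : ℕ} (P : Set (Fin n → ℝ)) (hP : IsLatticePolytope P)
    (hfull : affineSpan ℝ P = ⊤) (hsm : IsSmoothPoly P) :
    FaceSumZero P ↔
      ∃ (t : ℕ) (U : Matrix (Fin n) (Fin n) ℤ) (w : Fin n → ℤ)
        (A : Matrix (Fin t) (Fin n) ℤ), IsUnit U.det ∧
        IsCayleyWith (unimodMap U w '' P) A ∧
        ∀ k : Fin (t + 1),
          IsSmoothPoly (cayleyPiece A (unimodMap U w '' P) k) ∧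
          IsLatticePolytope (cayleyPiece A (unimodMap U w '' P) k) ∧
          fdim (cayleyPiece A (unimodMap U w '' P) k) < t := by
  obtain ⟨ι, ω, _, _, _, M, hM, rfl⟩ := hsm.exists_presentation hP hfull
  rw [SmoothPresentation.faceSumZero_polytope_iff hM, M.dualDegree_empty_eq_zero_iff]
  constructor
  · rintro ⟨C, hC, hcard⟩
    obtain ⟨v⟩ := M.nonempty
    obtain ⟨U, hU, w, hv⟩ := (hM.isLatticePt_vertex v).exists_unimodAffineEquiv_eq_zero
    have hMφ := hM.map (isLatticePt_unimodAffineEquiv_iff hU w)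
    have hCφ := (M.isBarycentric_map_iff (unimodAffineEquiv hU w)).2 hC
    obtain ⟨t, A, hA, hpieces⟩ := hCφ.exists_isCayleyWith hMφ hcard hv
    rw [M.polytope_map, coe_unimodAffineEquiv] at hA hpieces
    exact ⟨t, U, w, A, hU, hA, hpieces⟩
  · rintro ⟨t, U, w, A, hU, hA, hpieces⟩
    rw [← coe_unimodAffineEquiv hU, ← M.polytope_map] at hA hpieces
    have hMφ := hM.map (isLatticePt_unimodAffineEquiv_iff hU w)
    obtain ⟨C, hC, hcard⟩ := hMφ.exists_isBarycentric_of_isCayleyWith hA (hpieces 0).2.2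
    exact ⟨C, (M.isBarycentric_map_iff _).1 hC, hcard⟩
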